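/- arXiv:math/0611435 — 4 statements merged into one kernel-verified Lean document; each statement's English description precedes it below -/
import Mathlib

section
/- Let 1 < k < 2 and define for v : ℝⁿ → ℂ the norm ‖v; V^k‖ = max(‖⟨ω⟩^k v‖_{L²}, ‖⟨ω⟩^{k−1} x v‖_{L²}). Then for every v ∈ V^k and t ∈ ℝ one has | ‖v; V^k‖ − ‖U(t)v; V^k‖ | ≤ |t| ‖v; H^k‖, and consequently ‖U(t)v; V^k‖ ≤ (1 + |t|) ‖v; V^k‖. -/
open MeasureTheory Complex
open scoped FourierTransform ENNReal

noncomputable section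

abbrev Vn (n : ℕ) := EuclideanSpace ℝ (Fin n)

/-- `⟨ω⟩^k = (1−Δ)^{k/2}`, as the Fourier multiplier `(1+4π²|ξ|²)^{k/2}`. -/
def japMul (n : ℕ) (k : ℝ) (f : Vn n → ℂ) : Vn n → ℂ :=
  𝓕⁻ (fun ξ => (((1 + (2 * Real.pi * ‖ξ‖) ^ 2) ^ (k / 2) : ℝ) : ℂ) * 𝓕 f ξ)

/-- The free Schrödinger group `U(t) = exp(i(t/2)Δ)` as a Fourier multiplier. -/
def Ufree (n : ℕ) (t : ℝ) (f : Vn n → ℂ) : Vn n → ℂ :=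
  𝓕⁻ (fun ξ => Complex.exp (-2 * (Real.pi : ℂ) ^ 2 * Complex.I * (t : ℂ) * ((‖ξ‖ ^ 2 : ℝ) : ℂ))
      * 𝓕 f ξ)

/-- The `H^k` norm `‖⟨ω⟩^k v‖₂`. -/
def HkNorm (n : ℕ) (k : ℝ) (f : Vn n → ℂ) : ℝ≥0∞ :=
  eLpNorm (japMul n k f) 2 volume

/-- The `V^k` norm `‖⟨ω⟩^k v‖₂ ∨ ‖⟨ω⟩^{k−1} x v‖₂`, the second norm being the `L²` norm of
the vector-valued function `x ↦ ⟨ω⟩^{k−1}(x_j v)`. -/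
def VkNorm (n : ℕ) (k : ℝ) (f : Vn n → ℂ) : ℝ≥0∞ :=
  HkNorm n k f ⊔
    eLpNorm (fun x : Vn n => (WithLp.equiv 2 (Fin n → ℂ)).symm
      (fun j => japMul n (k - 1) (fun y => (y j : ℂ) * f y) x)) 2 volume

/-!
The commutator of `x` with the Fourier multiplier of symbol `g` is the multiplier of symbol
`(i/2π)∇g`; for `U(t)` this gives `x U(t) = U(t) (x - it∇)`. Since `U(t)` commutes with
`⟨ω⟩^{k-1}` and is unitary on `L²`, the norm `‖⟨ω⟩^{k-1} x U(t)v‖₂` equals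
`‖⟨ω⟩^{k-1} (x - it∇)v‖₂`, which exceeds `‖⟨ω⟩^{k-1} x v‖₂` by at most
`|t| ‖⟨ω⟩^{k-1} ∇v‖₂ ≤ |t| ‖⟨ω⟩^k v‖₂`. The opposite inequality is the same bound for the flow
`U(-t)` started at `U(t)v`.
-/

open SchwartzMap LineDeriv

section VectorL2Norm

lemma eLpNorm_two_sq {α G : Type*} [MeasurableSpace α] [NormedAddCommGroup G]
    (μ : Measure α) (f : α → G) : eLpNorm f 2 μ ^ 2 = ∫⁻ x, ‖f x‖ₑ ^ 2 ∂μ := by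
  simpa using eLpNorm_nnreal_pow_eq_lintegral (f := f) (μ := μ) (two_ne_zero (α := NNReal))

lemma enorm_toLp_two_sq {ι G : Type*} [Fintype ι] [NormedAddCommGroup G] (v : ι → G) :
    ‖WithLp.toLp 2 v‖ₑ ^ 2 = ∑ j, ‖v j‖ₑ ^ 2 := by
  simp only [← ofReal_norm, ← ENNReal.ofReal_pow (norm_nonneg _)]
  rw [PiLp.norm_sq_eq_of_L2, ENNReal.ofReal_sum_of_nonneg fun _ _ => by positivity]

variable {ι E F : Type*} [Fintype ι]
  [NormedAddCommGroup E] [InnerProductSpace ℝ E] [FiniteDimensional ℝ E]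
  [MeasurableSpace E] [BorelSpace E]
  [NormedAddCommGroup F] [NormedSpace ℂ F]

/-- The `L²` norm of the vector-valued function with Schwartz components `f j`, for the
Euclidean norm on vectors. -/
def vectorL2Norm (f : ι → 𝓢(E, F)) : ℝ≥0∞ :=
  eLpNorm (fun x => WithLp.toLp 2 fun j => f j x) 2 volume

lemma vectorL2Norm_sq (f : ι → 𝓢(E, F)) :
    vectorL2Norm f ^ 2 = ∑ j, eLpNorm (f j) 2 volume ^ 2 := by
  simp only [vectorL2Norm, eLpNorm_two_sq, enorm_toLp_two_sq]
  exact lintegral_finsetSum _ fun j _ => (f j).continuous.enorm.measurable.pow_const 2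

lemma vectorL2Norm_congr {f g : ι → 𝓢(E, F)}
    (h : ∀ j, eLpNorm (f j) 2 volume = eLpNorm (g j) 2 volume) :
    vectorL2Norm f = vectorL2Norm g := by
  apply (ENNReal.pow_right_strictMono two_ne_zero).injective
  simp only [vectorL2Norm_sq, h]

lemma vectorL2Norm_sub_le (f g : ι → 𝓢(E, F)) :
    vectorL2Norm (f - g) ≤ vectorL2Norm f + vectorL2Norm g := by
  have hcont (h : ι → 𝓢(E, F)) : Continuous fun x => WithLp.toLp 2 fun j => h j x :=
    (PiLp.continuous_toLp 2 _).comp (continuous_pi fun j => (h j).continuous)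
  exact (eLpNorm_sub_le (μ := volume) (hcont f).aestronglyMeasurable
    (hcont g).aestronglyMeasurable one_le_two :)

lemma vectorL2Norm_const_smul (c : ℂ) (f : ι → 𝓢(E, F)) :
    vectorL2Norm (c • f) = ‖c‖ₑ * vectorL2Norm f :=
  eLpNorm_const_smul c (fun x => WithLp.toLp 2 fun j => f j x) 2 volume

end VectorL2Norm

section FourierMultiplier

variable {E F H : Type*}
  [NormedAddCommGroup E] [InnerProductSpace ℝ E] [FiniteDimensional ℝ E]
  [MeasurableSpace E] [BorelSpace E]
  [NormedAddCommGroup F] [NormedSpace ℂ F]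
  [NormedAddCommGroup H] [InnerProductSpace ℂ H] [CompleteSpace H]

lemma fourierMultiplierCLM_coe {g : E → ℂ} (hg : g.HasTemperateGrowth) (f : 𝓢(E, F)) :
    (fourierMultiplierCLM F g f : E → F) = 𝓕⁻ fun ξ => g ξ • 𝓕 (f : E → F) ξ := by
  rw [fourierMultiplierCLM_apply, fourierInv_coe, smulLeftCLM_apply hg, fourier_coe]

lemma eLpNorm_fourier (f : 𝓢(E, H)) :
    eLpNorm (𝓕 f : 𝓢(E, H)) 2 volume = eLpNorm f 2 volume := by
  have h := norm_fourier_toL2_eq f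
  rw [norm_toLp, norm_toLp] at h
  have hfourier_top : eLpNorm (𝓕 f : 𝓢(E, H)) 2 volume ≠ ⊤ := (eLpNorm_lt_top _ 2 volume).ne
  exact (ENNReal.toReal_eq_toReal_iff' hfourier_top (f.eLpNorm_lt_top 2 volume).ne).1 h

lemma eLpNorm_fourierMultiplierCLM_of_norm_eq_one {g : E → ℂ} (hg : g.HasTemperateGrowth)
    (hg_norm : ∀ ξ, ‖g ξ‖ = 1) (f : 𝓢(E, H)) :
    eLpNorm (fourierMultiplierCLM H g f) 2 volume = eLpNorm f 2 volume := by
  rw [← eLpNorm_fourier, ← eLpNorm_fourier f, fourierMultiplierCLM_apply,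
    FourierTransform.fourier_fourierInv_eq]
  refine eLpNorm_congr_norm_ae (.of_forall fun ξ => ?_)
  rw [smulLeftCLM_apply_apply hg, norm_smul, hg_norm, one_mul]

end FourierMultiplier

section Commutator

variable {E F : Type*} [NormedAddCommGroup E] [NormedAddCommGroup F]

lemma hasTemperateGrowth_lineDeriv [NormedSpace ℝ E] [NormedSpace ℝ F] {g : E → F}
    (hg : g.HasTemperateGrowth) (m : E) :
    (fun x => lineDeriv ℝ g x m).HasTemperateGrowth := by
  have hfderiv : (fderiv ℝ g).HasTemperateGrowth :=
    ⟨hg.1.fderiv_right (by simp), fun N => by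
      simpa only [norm_iteratedFDeriv_fderiv] using hg.2 (N + 1)⟩
  have heval := (ContinuousLinearMap.apply ℝ F m).hasTemperateGrowth.comp hfderiv
  have hdiff : Differentiable ℝ g := hg.1.differentiable (by simp)
  convert heval using 2 with x
  exact (hdiff x).lineDeriv_eq_fderiv

variable [NormedSpace ℂ F]

lemma lineDerivOp_smulLeftCLM [NormedSpace ℝ E] {g : E → ℂ} (hg : g.HasTemperateGrowth)
    (m : E) (f : 𝓢(E, F)) :
    ∂_{m} (smulLeftCLM F g f) =
      smulLeftCLM F g (∂_{m} f) + smulLeftCLM F (fun x => lineDeriv ℝ g x m) f := by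
  ext x
  have hg_deriv : HasLineDerivAt ℝ g (lineDeriv ℝ g x m) x m :=
    ((hg.1.differentiable (by simp)) x).lineDifferentiableAt.hasLineDerivAt
  have hf_deriv : HasLineDerivAt ℝ f (lineDeriv ℝ f x m) x m :=
    f.differentiableAt.lineDifferentiableAt.hasLineDerivAt
  have hprod : HasLineDerivAt ℝ (fun y => g y • f y)
      (g x • lineDeriv ℝ f x m + lineDeriv ℝ g x m • f x) x m := by
    simpa [HasLineDerivAt] using HasDerivAt.fun_smul hg_deriv hf_deriv
  simp only [add_apply, lineDerivOp_apply, smulLeftCLM_apply hg, smulLeftCLM_apply_apply hg,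
    smulLeftCLM_apply_apply (hasTemperateGrowth_lineDeriv hg m)]
  exact hprod.lineDeriv

variable [InnerProductSpace ℝ E]

/-- The component `x ↦ ⟪x, m⟫` of the position operator, acting on Schwartz functions by
multiplication. -/
def positionOp (m : E) : 𝓢(E, F) →L[ℝ] 𝓢(E, F) := smulLeftCLM F (inner ℝ · m)

variable [FiniteDimensional ℝ E] [MeasurableSpace E] [BorelSpace E]

lemma positionOp_fourierInv (m : E) (f : 𝓢(E, F)) :
    positionOp m (𝓕⁻ f) = (I / (2 * Real.pi)) • 𝓕⁻ (∂_{m} f) := by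
  have hpi : (Real.pi : ℂ) ≠ 0 := ofReal_ne_zero.2 Real.pi_ne_zero
  have hscalar : I / (2 * Real.pi) * -(2 * Real.pi * I) = 1 := by
    field_simp
    simp
  rw [fourierInv_lineDerivOp_eq, smul_smul, hscalar, one_smul, positionOp]

lemma positionOp_fourierMultiplierCLM [CompleteSpace F] {g : E → ℂ} (hg : g.HasTemperateGrowth)
    (m : E) (f : 𝓢(E, F)) :
    positionOp m (fourierMultiplierCLM F g f) =
      fourierMultiplierCLM F g (positionOp m f) +
        (I / (2 * Real.pi)) • fourierMultiplierCLM F (fun ξ => lineDeriv ℝ g ξ m) f := by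
  have hf : positionOp m f = (I / (2 * Real.pi)) • 𝓕⁻ (∂_{m} (𝓕 f)) := by
    rw [← positionOp_fourierInv, FourierTransform.fourierInv_fourier_eq]
  rw [hf, map_smul]
  simp only [fourierMultiplierCLM_apply, positionOp_fourierInv, lineDerivOp_smulLeftCLM hg,
    FourierTransform.fourier_fourierInv_eq, FourierTransform.fourierInv_add, smul_add]

end Commutator

section SchrodingerFlow

lemma iteratedDeriv_exp_ofReal_mul_I (N : ℕ) :
    iteratedDeriv N (fun s : ℝ => exp (s * I)) = fun s : ℝ => exp (s * I) * I ^ N := by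
  induction N with
  | zero => simp
  | succ N ih =>
    ext s
    have hderiv : HasDerivAt (fun s : ℝ => exp (s * I)) (exp (s * I) * I) s := by
      simpa using ((hasDerivAt_id s).ofReal_comp.mul_const I).cexp
    rw [iteratedDeriv_succ, ih, (hderiv.mul_const _).deriv, pow_succ', mul_assoc]

lemma hasTemperateGrowth_exp_ofReal_mul_I :
    (fun s : ℝ => exp (s * I)).HasTemperateGrowth := by
  refine ⟨(ofRealCLM.contDiff.mul contDiff_const).cexp, fun N => ⟨0, 1, fun s => ?_⟩⟩
  rw [norm_iteratedFDeriv_eq_norm_iteratedDeriv, iteratedDeriv_exp_ofReal_mul_I]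
  simp [norm_exp_ofReal_mul_I]

variable {E F : Type*} [NormedAddCommGroup E]

/-- The symbol `exp(-2π²it|ξ|²)` of the free Schrödinger group `exp(i(t/2)Δ)`. -/
def schrodingerSymbol (t : ℝ) (ξ : E) : ℂ :=
  exp (-2 * (Real.pi : ℂ) ^ 2 * I * (t : ℂ) * ((‖ξ‖ ^ 2 : ℝ) : ℂ))

lemma schrodingerSymbol_eq_exp_ofReal_mul_I (t : ℝ) (ξ : E) :
    schrodingerSymbol t ξ = exp ((-2 * Real.pi ^ 2 * t * ‖ξ‖ ^ 2 : ℝ) * I) := by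
  unfold schrodingerSymbol
  congr 1
  push_cast
  ring

lemma norm_schrodingerSymbol (t : ℝ) (ξ : E) : ‖schrodingerSymbol t ξ‖ = 1 := by
  rw [schrodingerSymbol_eq_exp_ofReal_mul_I, norm_exp_ofReal_mul_I]

lemma schrodingerSymbol_neg_mul (t : ℝ) (ξ : E) :
    schrodingerSymbol (-t) ξ * schrodingerSymbol t ξ = 1 := by
  rw [schrodingerSymbol, schrodingerSymbol, ← exp_add]
  simp

variable [InnerProductSpace ℝ E]

lemma hasTemperateGrowth_schrodingerSymbol (t : ℝ) :
    (schrodingerSymbol t : E → ℂ).HasTemperateGrowth := by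
  have hphase : (fun ξ : E => -2 * Real.pi ^ 2 * t * ‖ξ‖ ^ 2).HasTemperateGrowth := by fun_prop
  convert hasTemperateGrowth_exp_ofReal_mul_I.comp hphase using 1
  ext ξ
  exact schrodingerSymbol_eq_exp_ofReal_mul_I t ξ

lemma lineDeriv_schrodingerSymbol (t : ℝ) (m ξ : E) :
    lineDeriv ℝ (schrodingerSymbol t) ξ m =
      -(4 * Real.pi ^ 2 * I * t) * (schrodingerSymbol t ξ * (inner ℝ ξ m : ℝ)) := by
  have hnorm : HasFDerivAt (fun η : E => ‖η‖ ^ 2) (2 • innerSL ℝ ξ) ξ :=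
    (hasStrictFDerivAt_norm_sq ξ).hasFDerivAt
  have hsymbol := ((ofRealCLM.hasFDerivAt.comp ξ hnorm).const_mul
    (-2 * (Real.pi : ℂ) ^ 2 * I * t)).cexp.hasLineDerivAt m
  refine hsymbol.lineDeriv.trans ?_
  simp only [schrodingerSymbol, Function.comp_apply, ofRealCLM_apply,
    ContinuousLinearMap.comp_smul, _root_.smul_apply, ContinuousLinearMap.comp_apply,
    coe_innerSL_apply, nsmul_eq_mul, Nat.cast_ofNat, smul_eq_mul]
  ring

variable [FiniteDimensional ℝ E] [MeasurableSpace E] [BorelSpace E]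
  [NormedAddCommGroup F] [NormedSpace ℂ F]

/-- The free Schrödinger group `exp(i(t/2)Δ)` on Schwartz functions. -/
def schrodingerFlow (t : ℝ) : 𝓢(E, F) →L[ℂ] 𝓢(E, F) :=
  fourierMultiplierCLM F (schrodingerSymbol t)

lemma schrodingerFlow_neg_schrodingerFlow [CompleteSpace F] (t : ℝ) (f : 𝓢(E, F)) :
    schrodingerFlow (-t) (schrodingerFlow t f) = f := by
  have hsymbol : (schrodingerSymbol (-t) * schrodingerSymbol t : E → ℂ) = fun _ => 1 :=
    funext (schrodingerSymbol_neg_mul t)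
  rw [schrodingerFlow, schrodingerFlow, fourierMultiplierCLM_fourierMultiplierCLM_apply
    (hasTemperateGrowth_schrodingerSymbol _) (hasTemperateGrowth_schrodingerSymbol _), hsymbol,
    fourierMultiplierCLM_const, one_smul, ContinuousLinearMap.id_apply]

lemma schrodingerFlow_lineDerivOp [CompleteSpace F] (t : ℝ) (m : E) (f : 𝓢(E, F)) :
    schrodingerFlow t (∂_{m} f) = (2 * Real.pi * I) • fourierMultiplierCLM F
      (fun ξ => schrodingerSymbol t ξ * (inner ℝ ξ m : ℝ)) f := by
  have hinner : (fun ξ : E => ((inner ℝ ξ m : ℝ) : ℂ)).HasTemperateGrowth := by fun_prop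
  rw [lineDeriv_eq_fourierMultiplierCLM, map_smul, ← fourierMultiplierCLM_ofReal ℂ (by fun_prop),
    schrodingerFlow]
  exact congrArg _ (fourierMultiplierCLM_fourierMultiplierCLM_apply
    (hasTemperateGrowth_schrodingerSymbol t) hinner f)

lemma positionOp_schrodingerFlow [CompleteSpace F] (t : ℝ) (m : E) (f : 𝓢(E, F)) :
    positionOp m (schrodingerFlow t f) =
      schrodingerFlow t (positionOp m f - (I * t) • ∂_{m} f) := by
  have hu := hasTemperateGrowth_schrodingerSymbol (E := E) t
  have hsymbol : (fun ξ : E => lineDeriv ℝ (schrodingerSymbol t) ξ m) =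
      (-(4 * Real.pi ^ 2 * I * t) : ℂ) •
        fun ξ => schrodingerSymbol t ξ * (inner ℝ ξ m : ℝ) :=
    funext (lineDeriv_schrodingerSymbol t m)
  have hpi : (Real.pi : ℂ) ≠ 0 := ofReal_ne_zero.2 Real.pi_ne_zero
  rw [map_sub, map_smul, schrodingerFlow_lineDerivOp, sub_eq_add_neg, ← neg_smul, smul_smul,
    schrodingerFlow, positionOp_fourierMultiplierCLM hu, hsymbol,
    fourierMultiplierCLM_smul (by fun_prop), _root_.smul_apply, smul_smul]
  congr 2
  field_simp
  ring

end SchrodingerFlow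

section BracketPow

variable {E F : Type*} [NormedAddCommGroup E]

/-- The symbol `(1 + 4π²|ξ|²)^{k/2}` of `⟨ω⟩^k`. -/
def bracketSymbol (k : ℝ) (ξ : E) : ℝ := (1 + (2 * Real.pi * ‖ξ‖) ^ 2) ^ (k / 2)

lemma bracketSymbol_nonneg (k : ℝ) (ξ : E) : 0 ≤ bracketSymbol k ξ := by
  unfold bracketSymbol
  positivity

lemma bracketSymbol_sub_one_mul_le (k : ℝ) (ξ : E) :
    bracketSymbol (k - 1) ξ * (2 * Real.pi * ‖ξ‖) ≤ bracketSymbol k ξ := by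
  have hbase : 0 < 1 + (2 * Real.pi * ‖ξ‖) ^ 2 := by positivity
  calc bracketSymbol (k - 1) ξ * (2 * Real.pi * ‖ξ‖)
      ≤ bracketSymbol (k - 1) ξ * √(1 + (2 * Real.pi * ‖ξ‖) ^ 2) := by
        gcongr
        · exact bracketSymbol_nonneg _ _
        · exact Real.le_sqrt_of_sq_le (by linarith)
    _ = bracketSymbol k ξ := by
        rw [bracketSymbol, bracketSymbol, Real.sqrt_eq_rpow, ← Real.rpow_add hbase]
        ring_nf

variable [InnerProductSpace ℝ E]

lemma hasTemperateGrowth_bracketSymbol (k : ℝ) :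
    (fun ξ : E => (bracketSymbol k ξ : ℂ)).HasTemperateGrowth := by
  have hscale : (fun ξ : E => (2 * Real.pi) • ξ).HasTemperateGrowth := by fun_prop
  have hreal := (Function.hasTemperateGrowth_one_add_norm_sq_rpow E (k / 2)).comp hscale
  simpa [Function.comp_def, bracketSymbol, norm_smul, abs_of_pos Real.pi_pos] using
    Function.Complex.hasTemperateGrowth_ofReal.comp hreal

variable [FiniteDimensional ℝ E] [MeasurableSpace E] [BorelSpace E]
  [NormedAddCommGroup F] [NormedSpace ℂ F]

/-- The operator `⟨ω⟩^k = (1 - Δ)^{k/2}` on Schwartz functions. -/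
def bracketPow (k : ℝ) : 𝓢(E, F) →L[ℂ] 𝓢(E, F) :=
  fourierMultiplierCLM F fun ξ => (bracketSymbol k ξ : ℂ)

lemma fourier_bracketPow_apply [CompleteSpace F] (k : ℝ) (f : 𝓢(E, F)) (ξ : E) :
    𝓕 (bracketPow k f) ξ = (bracketSymbol k ξ : ℂ) • 𝓕 f ξ := by
  rw [bracketPow, fourierMultiplierCLM_apply, FourierTransform.fourier_fourierInv_eq,
    smulLeftCLM_apply_apply (hasTemperateGrowth_bracketSymbol k)]

lemma bracketPow_schrodingerFlow [CompleteSpace F] (k t : ℝ) (f : 𝓢(E, F)) :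
    bracketPow k (schrodingerFlow t f) = schrodingerFlow t (bracketPow k f) := by
  have hj := hasTemperateGrowth_bracketSymbol (E := E) k
  have hu := hasTemperateGrowth_schrodingerSymbol (E := E) t
  rw [bracketPow, schrodingerFlow, fourierMultiplierCLM_fourierMultiplierCLM_apply hj hu,
    fourierMultiplierCLM_fourierMultiplierCLM_apply hu hj, mul_comm]

end BracketPow

section WeightedEstimate

variable {ι E H : Type*} [Fintype ι]
  [NormedAddCommGroup E] [InnerProductSpace ℝ E] [FiniteDimensional ℝ E]
  [MeasurableSpace E] [BorelSpace E]
  [NormedAddCommGroup H] [InnerProductSpace ℂ H] [CompleteSpace H]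

lemma eLpNorm_schrodingerFlow (t : ℝ) (f : 𝓢(E, H)) :
    eLpNorm (schrodingerFlow t f) 2 volume = eLpNorm f 2 volume :=
  eLpNorm_fourierMultiplierCLM_of_norm_eq_one (hasTemperateGrowth_schrodingerSymbol t)
    (norm_schrodingerSymbol t) f

lemma norm_toLp_fourier_bracketPow_lineDerivOp (b : OrthonormalBasis ι ℝ E) (k : ℝ)
    (f : 𝓢(E, H)) (ξ : E) :
    ‖WithLp.toLp 2 fun j => 𝓕 (bracketPow k (∂_{b j} f)) ξ‖ =
      bracketSymbol k ξ * (2 * Real.pi * ‖ξ‖) * ‖𝓕 f ξ‖ := by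
  have hcomponent (j : ι) : ‖𝓕 (bracketPow k (∂_{b j} f)) ξ‖ =
      bracketSymbol k ξ * (2 * Real.pi) * ‖𝓕 f ξ‖ * |inner ℝ ξ (b j)| := by
    rw [fourier_bracketPow_apply, fourier_lineDerivOp_eq, _root_.smul_apply,
      smulLeftCLM_apply_apply (by fun_prop)]
    simp only [norm_smul, norm_mul, norm_real, Real.norm_eq_abs, norm_I, norm_ofNat,
      abs_of_pos Real.pi_pos, abs_of_nonneg (bracketSymbol_nonneg k ξ)]
    ring
  have hnonneg := bracketSymbol_nonneg k ξ
  rw [← sq_eq_sq₀ (norm_nonneg _) (by positivity), PiLp.norm_sq_eq_of_L2]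
  simp only [hcomponent, mul_pow, sq_abs, ← Finset.mul_sum, b.sum_sq_inner_left]
  ring

lemma vectorL2Norm_bracketPow_lineDerivOp_le (b : OrthonormalBasis ι ℝ E) (k : ℝ)
    (f : 𝓢(E, H)) :
    vectorL2Norm (fun j => bracketPow (k - 1) (∂_{b j} f)) ≤
      eLpNorm (bracketPow k f) 2 volume := by
  rw [← vectorL2Norm_congr fun j => eLpNorm_fourier (bracketPow (k - 1) (∂_{b j} f)),
    ← eLpNorm_fourier]
  refine eLpNorm_mono fun ξ => ?_
  rw [norm_toLp_fourier_bracketPow_lineDerivOp, fourier_bracketPow_apply, norm_smul, norm_real,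
    Real.norm_of_nonneg (bracketSymbol_nonneg k ξ)]
  gcongr
  exact bracketSymbol_sub_one_mul_le k ξ

lemma vectorL2Norm_bracketPow_positionOp_schrodingerFlow_le (b : OrthonormalBasis ι ℝ E)
    (k t : ℝ) (f : 𝓢(E, H)) :
    vectorL2Norm (fun j => bracketPow (k - 1) (positionOp (b j) (schrodingerFlow t f))) ≤
      vectorL2Norm (fun j => bracketPow (k - 1) (positionOp (b j) f)) +
        ENNReal.ofReal |t| * eLpNorm (bracketPow k f) 2 volume := by
  set weighted : ι → 𝓢(E, H) := fun j => bracketPow (k - 1) (positionOp (b j) f)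
  set gradient : ι → 𝓢(E, H) := fun j => bracketPow (k - 1) (∂_{b j} f)
  have hconj (j : ι) : bracketPow (k - 1) (positionOp (b j) (schrodingerFlow t f)) =
      schrodingerFlow t ((weighted - (I * t) • gradient) j) := by
    rw [positionOp_schrodingerFlow, bracketPow_schrodingerFlow, map_sub, map_smul]
    rfl
  have hnorm : ‖I * (t : ℂ)‖ₑ = ENNReal.ofReal |t| := by
    rw [← ofReal_norm, norm_mul, norm_I, one_mul, norm_real, Real.norm_eq_abs]
  calc vectorL2Norm (fun j => bracketPow (k - 1) (positionOp (b j) (schrodingerFlow t f)))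
      = vectorL2Norm (weighted - (I * t) • gradient) :=
        vectorL2Norm_congr fun j => by rw [hconj, eLpNorm_schrodingerFlow]
    _ ≤ vectorL2Norm weighted + vectorL2Norm ((I * t) • gradient) := vectorL2Norm_sub_le _ _
    _ = vectorL2Norm weighted + ENNReal.ofReal |t| * vectorL2Norm gradient := by
        rw [vectorL2Norm_const_smul, hnorm]
    _ ≤ vectorL2Norm weighted + ENNReal.ofReal |t| * eLpNorm (bracketPow k f) 2 volume := by
        gcongr
        exact vectorL2Norm_bracketPow_lineDerivOp_le b k f

end WeightedEstimate

section EuclideanSpace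

variable {n : ℕ}

lemma Ufree_coe (t : ℝ) (f : 𝓢(Vn n, ℂ)) : Ufree n t f = schrodingerFlow t f :=
  (fourierMultiplierCLM_coe (hasTemperateGrowth_schrodingerSymbol t) f).symm

lemma japMul_coe (k : ℝ) (f : 𝓢(Vn n, ℂ)) : japMul n k f = bracketPow k f :=
  (fourierMultiplierCLM_coe (hasTemperateGrowth_bracketSymbol k) f).symm

lemma HkNorm_coe (k : ℝ) (f : 𝓢(Vn n, ℂ)) :
    HkNorm n k f = eLpNorm (bracketPow k f) 2 volume := by
  rw [HkNorm, japMul_coe]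

lemma positionOp_basisFun_coe (j : Fin n) (f : 𝓢(Vn n, ℂ)) :
    (positionOp (EuclideanSpace.basisFun (Fin n) ℝ j) f : Vn n → ℂ) = fun y => (y j : ℂ) * f y := by
  ext y
  rw [positionOp, smulLeftCLM_apply_apply (by fun_prop)]
  simp [EuclideanSpace.inner_single_right]

lemma VkNorm_coe (k : ℝ) (f : 𝓢(Vn n, ℂ)) :
    VkNorm n k f = HkNorm n k f ⊔ vectorL2Norm fun j =>
      bracketPow (k - 1) (positionOp (EuclideanSpace.basisFun (Fin n) ℝ j) f) := by
  simp only [VkNorm, ← positionOp_basisFun_coe, japMul_coe]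
  rfl

lemma HkNorm_schrodingerFlow (k t : ℝ) (f : 𝓢(Vn n, ℂ)) :
    HkNorm n k (schrodingerFlow t f) = HkNorm n k f := by
  rw [HkNorm_coe, HkNorm_coe, bracketPow_schrodingerFlow, eLpNorm_schrodingerFlow]

lemma HkNorm_le_VkNorm (k : ℝ) (f : Vn n → ℂ) : HkNorm n k f ≤ VkNorm n k f :=
  le_sup_left

lemma VkNorm_schrodingerFlow_le (k t : ℝ) (f : 𝓢(Vn n, ℂ)) :
    VkNorm n k (schrodingerFlow t f) ≤ VkNorm n k f + ENNReal.ofReal |t| * HkNorm n k f := by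
  have hweighted := vectorL2Norm_bracketPow_positionOp_schrodingerFlow_le
    (EuclideanSpace.basisFun (Fin n) ℝ) k t f
  rw [← HkNorm_coe] at hweighted
  rw [VkNorm_coe, VkNorm_coe, HkNorm_schrodingerFlow]
  exact sup_le (le_sup_left.trans le_self_add) (hweighted.trans (by gcongr; exact le_sup_right))

lemma VkNorm_le_VkNorm_schrodingerFlow (k t : ℝ) (f : 𝓢(Vn n, ℂ)) :
    VkNorm n k f ≤ VkNorm n k (schrodingerFlow t f) + ENNReal.ofReal |t| * HkNorm n k f := by
  simpa only [schrodingerFlow_neg_schrodingerFlow, abs_neg, HkNorm_schrodingerFlow] using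
    VkNorm_schrodingerFlow_le k (-t) (schrodingerFlow t f)

end EuclideanSpace

theorem stmt_3_general (n : ℕ) (k : ℝ) (v : SchwartzMap (Vn n) ℂ) (t : ℝ) :
    (VkNorm n k (Ufree n t v) ≤ VkNorm n k v + ENNReal.ofReal |t| * HkNorm n k v
      ∧ VkNorm n k v ≤ VkNorm n k (Ufree n t v) + ENNReal.ofReal |t| * HkNorm n k v)
    ∧ VkNorm n k (Ufree n t v) ≤ ENNReal.ofReal (1 + |t|) * VkNorm n k v := by
  rw [Ufree_coe]
  have hforward := VkNorm_schrodingerFlow_le k t v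
  refine ⟨⟨hforward, VkNorm_le_VkNorm_schrodingerFlow k t v⟩, ?_⟩
  calc VkNorm n k (schrodingerFlow t v)
      ≤ VkNorm n k v + ENNReal.ofReal |t| * HkNorm n k v := hforward
    _ ≤ VkNorm n k v + ENNReal.ofReal |t| * VkNorm n k v := by
        gcongr
        exact HkNorm_le_VkNorm k v
    _ = ENNReal.ofReal (1 + |t|) * VkNorm n k v := by
        rw [ENNReal.ofReal_add zero_le_one (abs_nonneg t), ENNReal.ofReal_one, add_mul, one_mul]

/-- For `1 < k < 2`: `| ‖v;V^k‖ − ‖U(t)v;V^k‖ | ≤ |t| ‖v;H^k‖` (stated as the equivalent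
two-sided inequality in `ℝ≥0∞`), and consequently `‖U(t)v;V^k‖ ≤ (1+|t|) ‖v;V^k‖`. -/
theorem stmt_3 (n : ℕ) (hn : 1 ≤ n) (k : ℝ) (hk1 : 1 < k) (hk2 : k < 2)
    (v : SchwartzMap (Vn n) ℂ) (t : ℝ) :
    (VkNorm n k (Ufree n t (fun y => v y))
        ≤ VkNorm n k (fun y => v y) + ENNReal.ofReal |t| * HkNorm n k (fun y => v y)
      ∧ VkNorm n k (fun y => v y)
        ≤ VkNorm n k (Ufree n t (fun y => v y))
            + ENNReal.ofReal |t| * HkNorm n k (fun y => v y))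
    ∧ VkNorm n k (Ufree n t (fun y => v y))
        ≤ ENNReal.ofReal (1 + |t|) * VkNorm n k (fun y => v y) :=
  stmt_3_general n k v t
end
end

section
/- Let n ≥ 1, 1 < k < 2, and set ℓ = k − 1. There is a constant C such that for all v ∈ 𝒮(ℝⁿ), ‖ω^ℓ (e^{i|x|²/2} v)‖_{L²} ≤ C(‖ω^ℓ v‖_{L²} + ‖|x|^ℓ v‖_{L²}). -/
open MeasureTheory Complex
open scoped FourierTransform ENNReal

noncomputable section

/-- The fractional Laplacian `ω^ℓ = (−Δ)^{ℓ/2}`, as the Fourier multiplier `|ξ|^ℓ`. -/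
def omMul (n : ℕ) (ℓ : ℝ) (f : Vn n → ℂ) : Vn n → ℂ :=
  𝓕⁻ (fun ξ => (((2 * Real.pi * ‖ξ‖) ^ ℓ : ℝ) : ℂ) * 𝓕 f ξ)

/-!
By Plancherel and Tonelli, `‖ω^ℓ f‖₂²` is a constant multiple of the Gagliardo energy
`∫∫ |f(x + y) − f(x)|² |y|^{-n-2ℓ} dx dy`: the symbol `∫ |e^{iy·ξ} − 1|² |y|^{-n-2ℓ} dy` is
homogeneous of degree `2ℓ` and rotation invariant, and it converges at the origin for `ℓ < 1` and at
infinity for `ℓ > 0`.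

For `f = e^{i|x|²/2} v` one uses the symmetric differences `f(x + y) − f(x − y)`, which give the
same energy up to the factor `2^{2ℓ}`. Comparing `v(x ± y)` with `v(x)` leaves differences of `v`
and the term `(e^{i|x+y|²/2} − e^{i|x−y|²/2}) v(x)`, of modulus `|e^{2ix·y} − 1| |v(x)|`, whose
energy is the symbol at `2x` integrated against `|v|²`. A one-sided difference would leave the phase
`e^{ix·y + i|y|²/2} − 1`, which does not vanish at `x = 0`, and hence a term not controlled by
`|x|^ℓ v`.
-/

open scoped SchwartzMap

section Plancherel

variable {E F : Type*} [NormedAddCommGroup E] [InnerProductSpace ℝ E] [FiniteDimensional ℝ E]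
  [MeasurableSpace E] [BorelSpace E] [NormedAddCommGroup F] [InnerProductSpace ℂ F]

lemma eLpNorm_two_sq_eq_lintegral {α : Type*} [MeasurableSpace α] {G : Type*}
    [NormedAddCommGroup G] (μ : Measure α) (g : α → G) :
    eLpNorm g 2 μ ^ 2 = ∫⁻ x, ‖g x‖ₑ ^ 2 ∂μ := by
  simpa using eLpNorm_nnreal_pow_eq_lintegral (μ := μ) (f := g) (p := 2) two_ne_zero

lemma continuous_fourierInv {g : E → F} (hg : Integrable g) : Continuous (𝓕⁻ g) :=
  VectorFourier.fourierIntegral_continuous Real.continuous_fourierChar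
    (by simpa using! continuous_inner.neg) hg

lemma fourier_translate_sub_self (f : 𝓢(E, F)) (y ξ : E) :
    𝓕 (f.compSubConstCLM ℂ (-y) - f) ξ =
      (exp (I * (2 * Real.pi * inner ℝ y ξ : ℝ)) - 1) • 𝓕 f ξ := by
  have h_translate : 𝓕 (f.compSubConstCLM ℂ (-y)) ξ = Real.fourierChar (inner ℝ y ξ) • 𝓕 f ξ := by
    have h := congrFun (VectorFourier.fourierIntegral_comp_add_right Real.fourierChar volume
      (innerₗ E) f y) ξ
    have h_comp : ⇑(f.compSubConstCLM ℂ (-y)) = f ∘ fun x => x + y := by ext x; simp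
    rwa [SchwartzMap.fourier_coe, SchwartzMap.fourier_coe, h_comp]
  have h_sub : 𝓕 (f.compSubConstCLM ℂ (-y) - f) = 𝓕 (f.compSubConstCLM ℂ (-y)) - 𝓕 f :=
    map_sub (FourierTransform.fourierCLM ℂ 𝓢(E, F)) _ _
  rw [h_sub, sub_apply, h_translate, Circle.smul_def, Real.fourierChar_apply, sub_smul,
    one_smul, mul_comm I]

variable [CompleteSpace F]

lemma integral_fourierInv_smul_eq_of_integrable (ψ : 𝓢(E, ℂ)) {g : E → F} (hg : Integrable g) :
    ∫ ξ, 𝓕⁻ ψ ξ • g ξ = ∫ x, ψ x • 𝓕⁻ g x := by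
  have h_flip : (-innerₗ E).flip = -innerₗ E := by
    ext x y
    simp [real_inner_comm]
  have h := VectorFourier.integral_fourierIntegral_smul_eq_flip (μ := volume) (ν := volume)
    (L := -innerₗ E) Real.continuous_fourierChar (by simpa using! continuous_inner.neg)
    ψ.integrable hg
  rw [h_flip] at h
  rw [SchwartzMap.fourierInv_coe]
  exact h

lemma fourierInv_toLp_ae_eq {g : E → F} (hg₁ : Integrable g) (hg₂ : MemLp g 2 volume) :
    (𝓕⁻ (hg₂.toLp g) : Lp (α := E) F 2 volume) =ᵐ[volume] 𝓕⁻ g := by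
  refine ae_eq_of_integral_contDiff_smul_eq ((Lp.memLp _).locallyIntegrable one_le_two)
    (continuous_fourierInv hg₁).locallyIntegrable fun φ hφ hφ_supp => ?_
  have hφ_supp' : HasCompactSupport (Complex.ofRealCLM ∘ φ) := hφ_supp.comp_left rfl
  let ψ : 𝓢(E, ℂ) := hφ_supp'.toSchwartzMap (by fun_prop)
  calc ∫ x, φ x • (𝓕⁻ (hg₂.toLp g) : Lp (α := E) F 2 volume) x
      = Lp.toTemperedDistribution (𝓕⁻ (hg₂.toLp g) : Lp (α := E) F 2 volume) ψ := by
        simp [Lp.toTemperedDistribution_apply, ψ]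
    _ = ∫ ξ, 𝓕⁻ ψ ξ • hg₂.toLp g ξ := by
        rw [← Lp.fourierInv_toTemperedDistribution_eq, TemperedDistribution.fourierInv_apply,
          Lp.toTemperedDistribution_apply]
    _ = ∫ ξ, 𝓕⁻ ψ ξ • g ξ :=
        integral_congr_ae <| hg₂.coeFn_toLp.mono fun ξ hξ => congrArg (𝓕⁻ ψ ξ • ·) hξ
    _ = ∫ x, ψ x • 𝓕⁻ g x := integral_fourierInv_smul_eq_of_integrable ψ hg₁
    _ = ∫ x, φ x • 𝓕⁻ g x := by simp [ψ]

lemma eLpNorm_fourierInv_eq {g : E → F} (hg₁ : Integrable g) (hg₂ : MemLp g 2 volume) :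
    eLpNorm (𝓕⁻ g) 2 volume = eLpNorm g 2 volume := by
  rw [← eLpNorm_congr_ae (fourierInv_toLp_ae_eq hg₁ hg₂), ← eLpNorm_congr_ae hg₂.coeFn_toLp,
    ← Lp.enorm_def, ← Lp.enorm_def, enorm_eq_iff_norm_eq]
  exact (Lp.fourierTransformₗᵢ E F).symm.norm_map _

lemma lintegral_enorm_fourier_sq (u : 𝓢(E, F)) :
    ∫⁻ ξ, ‖𝓕 u ξ‖ₑ ^ 2 = ∫⁻ x, ‖u x‖ₑ ^ 2 := by
  rw [← eLpNorm_two_sq_eq_lintegral, ← eLpNorm_two_sq_eq_lintegral,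
    ← eLpNorm_fourierInv_eq (𝓕 u).integrable ((𝓕 u).memLp 2),
    ← SchwartzMap.fourierInv_coe, FourierTransform.fourierInv_fourier_eq]

lemma lintegral_enorm_translate_sub_sq (f : 𝓢(E, F)) (y : E) :
    ∫⁻ x, ‖f (x + y) - f x‖ₑ ^ 2 =
      ∫⁻ ξ, ‖exp (I * (inner ℝ y ((2 * Real.pi) • ξ) : ℝ)) - 1‖ₑ ^ 2 * ‖𝓕 f ξ‖ₑ ^ 2 := by
  calc ∫⁻ x, ‖f (x + y) - f x‖ₑ ^ 2
      = ∫⁻ x, ‖(f.compSubConstCLM ℂ (-y) - f) x‖ₑ ^ 2 := by simp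
    _ = ∫⁻ ξ, ‖𝓕 (f.compSubConstCLM ℂ (-y) - f) ξ‖ₑ ^ 2 := (lintegral_enorm_fourier_sq _).symm
    _ = _ := by simp only [fourier_translate_sub_self, enorm_smul, mul_pow, inner_smul_right]

end Plancherel

section Symbol

variable {E : Type*} [NormedAddCommGroup E] [InnerProductSpace ℝ E]

/-- The singular kernel `|y|^{-(n + 2ℓ)}`, `n = dim E`, of the Gagliardo seminorm of order `ℓ`. As
an extended real it takes the value `∞` at the origin. -/
def gagliardoKernel (ℓ : ℝ) (y : E) : ℝ≥0∞ :=
  ‖y‖ₑ ^ (-(Module.finrank ℝ E + 2 * ℓ))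

lemma gagliardoKernel_smul (ℓ a : ℝ) (y : E) :
    gagliardoKernel ℓ (a • y) =
      ‖a‖ₑ ^ (-(Module.finrank ℝ E + 2 * ℓ)) * gagliardoKernel ℓ y := by
  rw [gagliardoKernel, enorm_smul, ENNReal.mul_rpow_of_ne_top enorm_ne_top enorm_ne_top,
    gagliardoKernel]

variable [FiniteDimensional ℝ E] [MeasurableSpace E] [BorelSpace E]

@[fun_prop]
lemma measurable_gagliardoKernel (ℓ : ℝ) : Measurable (gagliardoKernel (E := E) ℓ) := by
  unfold gagliardoKernel
  fun_prop

lemma lintegral_comp_smul {a : ℝ} (ha : a ≠ 0) (φ : E → ℝ≥0∞) :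
    ∫⁻ y, φ (a • y) = ‖a‖ₑ ^ (-(Module.finrank ℝ E : ℝ)) * ∫⁻ y, φ y := by
  have h_map : ∫⁻ y, φ y ∂(volume.map (a • ·)) = ∫⁻ y, φ (a • y) :=
    (Homeomorph.smulOfNeZero a ha).measurableEmbedding.lintegral_map φ
  have h_abs : ENNReal.ofReal |(a ^ Module.finrank ℝ E)⁻¹| =
      ‖a‖ₑ ^ (-(Module.finrank ℝ E : ℝ)) := by
    rw [abs_inv, abs_pow, ENNReal.ofReal_inv_of_pos (by positivity),
      ENNReal.ofReal_pow (abs_nonneg a), ← Real.norm_eq_abs, ofReal_norm, ENNReal.rpow_neg,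
      ENNReal.rpow_natCast]
  rw [← h_map, Measure.map_addHaar_smul volume ha, lintegral_smul_measure, smul_eq_mul, h_abs]

lemma lintegral_comp_smul_mul_gagliardoKernel (ℓ : ℝ) {a : ℝ} (ha : a ≠ 0) (φ : E → ℝ≥0∞) :
    ∫⁻ y, φ (a • y) * gagliardoKernel ℓ y =
      ‖a‖ₑ ^ (2 * ℓ) * ∫⁻ y, φ y * gagliardoKernel ℓ y := by
  have ha' : ‖a‖ₑ ≠ 0 := enorm_ne_zero.2 ha
  set s : ℝ := Module.finrank ℝ E + 2 * ℓ with hs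
  have h_kernel (y : E) : gagliardoKernel ℓ y = ‖a‖ₑ ^ s * gagliardoKernel ℓ (a • y) := by
    rw [gagliardoKernel_smul, ← mul_assoc, ← ENNReal.rpow_add _ _ ha' enorm_ne_top, ← hs,
      add_neg_cancel, ENNReal.rpow_zero, one_mul]
  calc ∫⁻ y, φ (a • y) * gagliardoKernel ℓ y
      = ∫⁻ y, ‖a‖ₑ ^ s * (φ (a • y) * gagliardoKernel ℓ (a • y)) :=
        lintegral_congr fun y => by rw [h_kernel y, mul_left_comm]
    _ = ‖a‖ₑ ^ s * (‖a‖ₑ ^ (-(Module.finrank ℝ E : ℝ)) * ∫⁻ y, φ y * gagliardoKernel ℓ y) := by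
        rw [lintegral_const_mul' _ _ (ENNReal.rpow_ne_top_of_ne_zero ha' enorm_ne_top),
          lintegral_comp_smul ha fun y => φ y * gagliardoKernel ℓ y]
    _ = ‖a‖ₑ ^ (2 * ℓ) * ∫⁻ y, φ y * gagliardoKernel ℓ y := by
        rw [← mul_assoc, ← ENNReal.rpow_add _ _ ha' enorm_ne_top, hs, add_neg_cancel_comm]

/-- The Fourier symbol of the Gagliardo seminorm of order `ℓ`; it is a constant multiple of
`|ξ|^{2ℓ}`. -/
def gagliardoSymbol (ℓ : ℝ) (ξ : E) : ℝ≥0∞ :=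
  ∫⁻ y, ‖exp (I * (inner ℝ y ξ : ℝ)) - 1‖ₑ ^ 2 * gagliardoKernel ℓ y

lemma gagliardoSymbol_smul (ℓ : ℝ) {a : ℝ} (ha : a ≠ 0) (ξ : E) :
    gagliardoSymbol ℓ (a • ξ) = ‖a‖ₑ ^ (2 * ℓ) * gagliardoSymbol ℓ ξ := by
  unfold gagliardoSymbol
  rw [← lintegral_comp_smul_mul_gagliardoKernel ℓ ha]
  simp only [real_inner_smul_left, real_inner_smul_right]

lemma gagliardoSymbol_eq_of_norm_eq (ℓ : ℝ) {ξ η : E} (h : ‖ξ‖ = ‖η‖) :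
    gagliardoSymbol ℓ ξ = gagliardoSymbol ℓ η := by
  let A : E ≃ₗᵢ[ℝ] E := (ℝ ∙ (ξ - η))ᗮ.reflection
  have hA : A ξ = η := Submodule.reflection_sub h
  have h_inner (y : E) : inner ℝ (A y) η = inner ℝ y ξ := by rw [← hA, A.inner_map_map]
  have h_kernel (y : E) : gagliardoKernel ℓ (A y) = gagliardoKernel ℓ y := by
    simp only [gagliardoKernel, A.enorm_map]
  calc gagliardoSymbol ℓ ξ
      = ∫⁻ y, ‖exp (I * (inner ℝ (A y) η : ℝ)) - 1‖ₑ ^ 2 * gagliardoKernel ℓ (A y) := by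
        simp only [h_inner, h_kernel, gagliardoSymbol]
    _ = gagliardoSymbol ℓ η :=
        A.measurePreserving.lintegral_comp (f := fun y =>
          ‖exp (I * (inner ℝ y η : ℝ)) - 1‖ₑ ^ 2 * gagliardoKernel ℓ y) (by fun_prop)

lemma gagliardoSymbol_eq_enorm_rpow_mul {ℓ : ℝ} (hℓ : 0 < ℓ) {e : E} (he : ‖e‖ = 1) (ξ : E) :
    gagliardoSymbol ℓ ξ = ‖ξ‖ₑ ^ (2 * ℓ) * gagliardoSymbol ℓ e := by
  rcases eq_or_ne ξ 0 with rfl | hξ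
  · simp [gagliardoSymbol, hℓ]
  · have h_norm : ‖ξ‖ = ‖‖ξ‖ • e‖ := by simp [norm_smul, he]
    rw [gagliardoSymbol_eq_of_norm_eq ℓ h_norm, gagliardoSymbol_smul ℓ (norm_ne_zero_iff.2 hξ),
      enorm_norm]

lemma gagliardoSymbol_ne_zero (ℓ : ℝ) {ξ : E} (hξ : ξ ≠ 0) : gagliardoSymbol ℓ ξ ≠ 0 := by
  let U : Set E := {y | exp (I * (inner ℝ y ξ : ℝ)) ≠ 1}
  have hU_open : IsOpen U := isOpen_ne_fun (by fun_prop) continuous_const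
  have hU_nonempty : U.Nonempty := by
    refine ⟨(Real.pi / ‖ξ‖ ^ 2) • ξ, ?_⟩
    have h_inner : inner ℝ ((Real.pi / ‖ξ‖ ^ 2) • ξ) ξ = Real.pi := by
      have := norm_ne_zero_iff.2 hξ
      rw [real_inner_smul_left, real_inner_self_eq_norm_sq]
      field_simp
    simp only [U, Set.mem_ofPred_eq, h_inner, mul_comm I, exp_pi_mul_I]
    norm_num
  have h_integrand {y : E} (hy : y ∈ U) :
      ‖exp (I * (inner ℝ y ξ : ℝ)) - 1‖ₑ ^ 2 * gagliardoKernel ℓ y ≠ 0 := by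
    have hy_ne : y ≠ 0 := by rintro rfl; simp [U] at hy
    refine mul_ne_zero (pow_ne_zero 2 (enorm_ne_zero.2 (sub_ne_zero.2 hy))) ?_
    exact (ENNReal.rpow_pos (enorm_pos.2 hy_ne) enorm_ne_top).ne'
  intro h
  rw [gagliardoSymbol, lintegral_eq_zero_iff (by fun_prop)] at h
  exact hU_open.measure_ne_zero volume hU_nonempty
    (measure_mono_null (fun y hy => h_integrand hy) (ae_iff.1 h))

lemma integrableOn_Ioi_min_one_sq_mul_rpow {ℓ : ℝ} (hℓ₀ : 0 < ℓ) (hℓ₁ : ℓ < 1) :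
    IntegrableOn (fun r : ℝ => min 1 (r ^ 2) * r ^ (-1 - 2 * ℓ)) (Set.Ioi 0) := by
  rw [← Set.Ioc_union_Ioi_eq_Ioi zero_le_one]
  refine IntegrableOn.union ?_ ?_
  · have h : IntegrableOn (fun r : ℝ => r ^ (1 - 2 * ℓ)) (Set.Ioc 0 1) := by
      rw [← intervalIntegrable_iff_integrableOn_Ioc_of_le zero_le_one]
      exact intervalIntegral.intervalIntegrable_rpow' (by linarith)
    refine h.congr_fun (fun r hr => ?_) measurableSet_Ioc
    beta_reduce
    rw [min_eq_right (pow_le_one₀ hr.1.le hr.2), ← Real.rpow_two, ← Real.rpow_add hr.1]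
    ring_nf
  · have h : IntegrableOn (fun r : ℝ => r ^ (-1 - 2 * ℓ)) (Set.Ioi 1) :=
      integrableOn_Ioi_rpow_of_lt (by linarith) zero_lt_one
    refine h.congr_fun (fun r hr => ?_) measurableSet_Ioi
    simp [min_eq_left (one_le_pow₀ (Set.mem_Ioi.1 hr).le)]

lemma lintegral_min_one_sq_mul_gagliardoKernel_ne_top [Nontrivial E] {ℓ : ℝ} (hℓ₀ : 0 < ℓ)
    (hℓ₁ : ℓ < 1) : ∫⁻ y : E, min 1 (‖y‖ₑ ^ 2) * gagliardoKernel ℓ y ≠ ∞ := by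
  let h : ℝ → ℝ := fun r => min 1 (r ^ 2) * r ^ (-(Module.finrank ℝ E + 2 * ℓ))
  have h_radial (r : ℝ) (hr : r ∈ Set.Ioi 0) :
      min 1 (r ^ 2) * r ^ (-1 - 2 * ℓ) = r ^ (Module.finrank ℝ E - 1) • h r := by
    have h_dim : ((Module.finrank ℝ E - 1 : ℕ) : ℝ) = Module.finrank ℝ E - 1 := by
      rw [Nat.cast_sub Module.finrank_pos, Nat.cast_one]
    rw [smul_eq_mul, mul_left_comm, ← Real.rpow_natCast r (Module.finrank ℝ E - 1),
      ← Real.rpow_add hr, h_dim]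
    ring_nf
  have h_integrable : Integrable fun y : E => h ‖y‖ := by
    rw [integrable_fun_norm_addHaar volume]
    exact (integrableOn_Ioi_min_one_sq_mul_rpow hℓ₀ hℓ₁).congr_fun h_radial measurableSet_Ioi
  have h_ofReal (y : E) : min 1 (‖y‖ₑ ^ 2) * gagliardoKernel ℓ y = ENNReal.ofReal (h ‖y‖) := by
    rcases eq_or_ne y 0 with rfl | hy
    · simp [h]
    · rw [ENNReal.ofReal_mul (by positivity), ENNReal.ofReal_min, ENNReal.ofReal_one,
        ENNReal.ofReal_pow (norm_nonneg y), ofReal_norm, gagliardoKernel,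
        ← ENNReal.ofReal_rpow_of_pos (norm_pos_iff.2 hy), ofReal_norm]
  simpa only [h_ofReal] using h_integrable.lintegral_lt_top.ne

lemma gagliardoSymbol_ne_top [Nontrivial E] {ℓ : ℝ} (hℓ₀ : 0 < ℓ) (hℓ₁ : ℓ < 1) (ξ : E) :
    gagliardoSymbol ℓ ξ ≠ ∞ := by
  have h_le_two (t : ℝ) : ‖exp (I * t) - 1‖ₑ ≤ 2 := by
    calc ‖exp (I * t) - 1‖ₑ ≤ ‖exp (I * t)‖ₑ + ‖(1 : ℂ)‖ₑ := enorm_sub_le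
      _ = 2 := by rw [enorm_exp_I_mul_ofReal, enorm_one, one_add_one_eq_two]
  have h_le_norm (y : E) : ‖exp (I * (inner ℝ y ξ : ℝ)) - 1‖ₑ ≤ ‖ξ‖ₑ * ‖y‖ₑ := by
    calc ‖exp (I * (inner ℝ y ξ : ℝ)) - 1‖ₑ ≤ ‖inner ℝ y ξ‖ₑ :=
          Real.enorm_exp_I_mul_ofReal_sub_one_le
      _ ≤ ‖ξ‖ₑ * ‖y‖ₑ := by
          rw [mul_comm, enorm_eq_nnnorm, enorm_eq_nnnorm, enorm_eq_nnnorm]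
          exact_mod_cast nnnorm_inner_le_nnnorm (𝕜 := ℝ) y ξ
  have h_bound (y : E) : ‖exp (I * (inner ℝ y ξ : ℝ)) - 1‖ₑ ^ 2 ≤
      (2 ^ 2 + ‖ξ‖ₑ ^ 2) * min 1 (‖y‖ₑ ^ 2) := by
    rcases min_cases 1 (‖y‖ₑ ^ 2) with ⟨h, -⟩ | ⟨h, -⟩ <;> rw [h]
    · grw [h_le_two, mul_one, ← le_self_add]
    · grw [h_le_norm, mul_pow, ← le_add_self]
  refine ne_top_of_le_ne_top ?_ (lintegral_mono fun y => mul_le_mul_left (h_bound y) _)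
  simp only [mul_assoc]
  rw [lintegral_const_mul' _ _ (by finiteness)]
  exact ENNReal.mul_ne_top (by finiteness) (lintegral_min_one_sq_mul_gagliardoKernel_ne_top hℓ₀ hℓ₁)

end Symbol

section Energy

variable {E F : Type*} [NormedAddCommGroup E] [InnerProductSpace ℝ E] [FiniteDimensional ℝ E]
  [MeasurableSpace E] [BorelSpace E] [NormedAddCommGroup F]

lemma lintegral_lintegral_mul_gagliardoKernel (ℓ c : ℝ) {w : E → ℝ≥0∞} (hw : Measurable w) :
    ∫⁻ y, (∫⁻ x, ‖exp (I * (inner ℝ y (c • x) : ℝ)) - 1‖ₑ ^ 2 * w x) * gagliardoKernel ℓ y =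
      ∫⁻ x, gagliardoSymbol ℓ (c • x) * w x := by
  calc ∫⁻ y, (∫⁻ x, ‖exp (I * (inner ℝ y (c • x) : ℝ)) - 1‖ₑ ^ 2 * w x) * gagliardoKernel ℓ y
      = ∫⁻ y, ∫⁻ x, ‖exp (I * (inner ℝ y (c • x) : ℝ)) - 1‖ₑ ^ 2 * w x * gagliardoKernel ℓ y :=
        lintegral_congr fun y => (lintegral_mul_const _ (by fun_prop)).symm
    _ = ∫⁻ x, ∫⁻ y, ‖exp (I * (inner ℝ y (c • x) : ℝ)) - 1‖ₑ ^ 2 * w x * gagliardoKernel ℓ y :=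
        lintegral_lintegral_swap (by fun_prop)
    _ = ∫⁻ x, gagliardoSymbol ℓ (c • x) * w x := by
        simp only [mul_right_comm _ (w _)]
        exact lintegral_congr fun x => lintegral_mul_const _ (by fun_prop)

/-- The square of the Gagliardo seminorm of order `ℓ`. -/
def gagliardoEnergy (ℓ : ℝ) (f : E → F) : ℝ≥0∞ :=
  ∫⁻ y, (∫⁻ x, ‖f (x + y) - f x‖ₑ ^ 2) * gagliardoKernel ℓ y

lemma lintegral_sub_translate_neg_mul_gagliardoKernel (ℓ : ℝ) (f : E → F) :
    ∫⁻ y, (∫⁻ x, ‖f (x - y) - f x‖ₑ ^ 2) * gagliardoKernel ℓ y = gagliardoEnergy ℓ f := by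
  simpa [gagliardoEnergy, sub_eq_add_neg] using lintegral_comp_smul_mul_gagliardoKernel ℓ
    (neg_ne_zero.2 one_ne_zero) fun y => ∫⁻ x, ‖f (x + y) - f x‖ₑ ^ 2

lemma lintegral_symmetric_sub_mul_gagliardoKernel (ℓ : ℝ) (f : E → F) :
    ∫⁻ y, (∫⁻ x, ‖f (x + y) - f (x - y)‖ₑ ^ 2) * gagliardoKernel ℓ y =
      2 ^ (2 * ℓ) * gagliardoEnergy ℓ f := by
  have h_center (y : E) : ∫⁻ x, ‖f (x + y) - f (x - y)‖ₑ ^ 2 =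
      ∫⁻ x, ‖f (x + (2 : ℝ) • y) - f x‖ₑ ^ 2 := by
    rw [← lintegral_sub_right_eq_self (fun x => ‖f (x + (2 : ℝ) • y) - f x‖ₑ ^ 2) y]
    refine lintegral_congr fun x => ?_
    rw [two_smul, sub_add_add_cancel]
  simp only [h_center]
  rw [lintegral_comp_smul_mul_gagliardoKernel ℓ two_ne_zero fun y =>
    ∫⁻ x, ‖f (x + y) - f x‖ₑ ^ 2, gagliardoEnergy,
    Real.enorm_of_nonneg zero_le_two, ENNReal.ofReal_ofNat]

end Energy

section FractionalLaplacian

variable {E F : Type*} [NormedAddCommGroup E] [NormedAddCommGroup F] [InnerProductSpace ℂ F]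

lemma enorm_ofReal_norm_rpow_smul_sq {ℓ : ℝ} (hℓ : 0 ≤ ℓ) (x : E) (z : F) :
    ‖((‖x‖ ^ ℓ : ℝ) : ℂ) • z‖ₑ ^ 2 = ‖x‖ₑ ^ (2 * ℓ) * ‖z‖ₑ ^ 2 := by
  have h_enorm : ‖((‖x‖ ^ ℓ : ℝ) : ℂ)‖ₑ = ‖x‖ₑ ^ ℓ := by
    rw [← ofReal_norm, norm_real, Real.norm_of_nonneg (by positivity),
      ← ENNReal.ofReal_rpow_of_nonneg (norm_nonneg x) hℓ, ofReal_norm]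
  rw [enorm_smul, mul_pow, h_enorm, mul_comm 2, ENNReal.rpow_mul, ENNReal.rpow_two]

variable [InnerProductSpace ℝ E] [FiniteDimensional ℝ E] [MeasurableSpace E] [BorelSpace E]

/-- The fractional Laplacian `(−Δ)^{ℓ/2}` of a vector-valued function; for scalar functions on `ℝⁿ`
it is `omMul`. -/
def fracLaplacian (ℓ : ℝ) (f : E → F) : E → F :=
  𝓕⁻ fun ξ => (((2 * Real.pi * ‖ξ‖) ^ ℓ : ℝ) : ℂ) • 𝓕 f ξ

lemma memLp_norm_rpow_smul {ℓ : ℝ} (hℓ : 0 ≤ ℓ) (f : 𝓢(E, F)) (p : ℝ≥0∞) :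
    MemLp (fun x => ((‖x‖ ^ ℓ : ℝ) : ℂ) • f x) p volume := by
  let weight : E → ℝ := fun x => (1 + ‖x‖ ^ 2) ^ (ℓ / 2)
  have h_le (x : E) : ‖x‖ ^ ℓ ≤ weight x := by
    calc ‖x‖ ^ ℓ = (‖x‖ ^ 2) ^ (ℓ / 2) := by
          rw [← Real.rpow_natCast_mul (norm_nonneg x)]
          congr 1
          push_cast
          ring
      _ ≤ weight x := Real.rpow_le_rpow (by positivity) (by linarith) (by positivity)
  have h_meas : AEStronglyMeasurable (fun x => ((‖x‖ ^ ℓ : ℝ) : ℂ) • f x) volume :=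
    AEStronglyMeasurable.smul (by fun_prop) f.continuous.aestronglyMeasurable
  refine ((SchwartzMap.smulLeftCLM F weight f).memLp p).mono h_meas (ae_of_all _ fun x => ?_)
  rw [SchwartzMap.smulLeftCLM_apply_apply (Function.hasTemperateGrowth_one_add_norm_sq_rpow E _),
    norm_smul, norm_smul, norm_real, Real.norm_of_nonneg (by positivity),
    Real.norm_of_nonneg (by positivity)]
  exact mul_le_mul_of_nonneg_right (h_le x) (norm_nonneg _)

variable [CompleteSpace F]

lemma eLpNorm_fracLaplacian_sq {ℓ : ℝ} (hℓ : 0 ≤ ℓ) (f : 𝓢(E, F)) :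
    eLpNorm (fracLaplacian ℓ f) 2 volume ^ 2 =
      ∫⁻ ξ, ‖(2 * Real.pi) • ξ‖ₑ ^ (2 * ℓ) * ‖𝓕 f ξ‖ₑ ^ 2 := by
  have h_norm (ξ : E) : 2 * Real.pi * ‖ξ‖ = ‖(2 * Real.pi) • ξ‖ := by
    rw [norm_smul, Real.norm_of_nonneg (by positivity)]
  have h_rpow (ξ : E) : ((‖(2 * Real.pi) • ξ‖ ^ ℓ : ℝ) : ℂ) • 𝓕 f ξ =
      (((2 * Real.pi) ^ ℓ : ℝ) : ℂ) • ((‖ξ‖ ^ ℓ : ℝ) : ℂ) • 𝓕 f ξ := by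
    rw [← h_norm, Real.mul_rpow (by positivity) (norm_nonneg ξ), ofReal_mul, mul_smul]
  have h_memLp (p : ℝ≥0∞) :
      MemLp (fun ξ => ((‖(2 * Real.pi) • ξ‖ ^ ℓ : ℝ) : ℂ) • 𝓕 f ξ) p volume := by
    simp only [h_rpow]
    exact (memLp_norm_rpow_smul hℓ (𝓕 f) p).const_smul _
  unfold fracLaplacian
  simp only [h_norm, ← SchwartzMap.fourier_coe]
  rw [eLpNorm_fourierInv_eq (memLp_one_iff_integrable.1 (h_memLp 1)) (h_memLp 2),
    eLpNorm_two_sq_eq_lintegral]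
  simp only [enorm_ofReal_norm_rpow_smul_sq hℓ]

lemma gagliardoEnergy_eq_gagliardoSymbol_mul {ℓ : ℝ} (hℓ : 0 < ℓ) {e : E} (he : ‖e‖ = 1)
    (f : 𝓢(E, F)) :
    gagliardoEnergy ℓ f = gagliardoSymbol ℓ e * eLpNorm (fracLaplacian ℓ f) 2 volume ^ 2 := by
  have h_meas : Measurable fun ξ => ‖𝓕 f ξ‖ₑ ^ 2 := (𝓕 f).continuous.enorm.measurable.pow_const 2
  calc gagliardoEnergy ℓ f
      = ∫⁻ ξ, gagliardoSymbol ℓ ((2 * Real.pi) • ξ) * ‖𝓕 f ξ‖ₑ ^ 2 := by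
        simp only [gagliardoEnergy, lintegral_enorm_translate_sub_sq]
        exact lintegral_lintegral_mul_gagliardoKernel ℓ _ h_meas
    _ = gagliardoSymbol ℓ e * ∫⁻ ξ, ‖(2 * Real.pi) • ξ‖ₑ ^ (2 * ℓ) * ‖𝓕 f ξ‖ₑ ^ 2 := by
        rw [← lintegral_const_mul _ (by fun_prop)]
        exact lintegral_congr fun ξ => by
          rw [gagliardoSymbol_eq_enorm_rpow_mul hℓ he, mul_comm (_ ^ _), mul_assoc]
    _ = gagliardoSymbol ℓ e * eLpNorm (fracLaplacian ℓ f) 2 volume ^ 2 := by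
        rw [eLpNorm_fracLaplacian_sq hℓ.le]

end FractionalLaplacian

section QuadraticPhase

variable {E F : Type*} [NormedAddCommGroup E]

/-- The quadratic phase `e^{i|x|²/2}`. -/
def quadraticPhase (x : E) : ℂ :=
  exp (I * (‖x‖ ^ 2 : ℝ) / 2)

lemma iteratedDeriv_exp_I_mul (m : ℕ) :
    iteratedDeriv m (fun t : ℝ => exp (I * t)) = fun t : ℝ => I ^ m * exp (I * t) := by
  induction m with
  | zero => simp
  | succ m ih =>
    have h_deriv (t : ℝ) : HasDerivAt (fun t : ℝ => exp (I * t)) (exp (I * t) * I) t := by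
      simpa using (ofRealCLM.hasDerivAt.const_mul I).cexp
    ext t
    rw [iteratedDeriv_succ, ih, ((h_deriv t).const_mul (I ^ m)).deriv, pow_succ]
    ring

lemma hasTemperateGrowth_exp_I_mul : (fun t : ℝ => exp (I * t)).HasTemperateGrowth := by
  refine ⟨(contDiff_const.mul ofRealCLM.contDiff).cexp, fun m => ⟨0, 1, fun t => ?_⟩⟩
  rw [norm_iteratedFDeriv_eq_norm_iteratedDeriv, iteratedDeriv_exp_I_mul]
  simp [norm_exp_I_mul_ofReal]

lemma quadraticPhase_eq_exp (x : E) : quadraticPhase x = exp (I * (2⁻¹ * ‖x‖ ^ 2 : ℝ)) := by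
  rw [quadraticPhase]
  push_cast
  ring_nf

lemma enorm_quadraticPhase (x : E) : ‖quadraticPhase x‖ₑ = 1 := by
  rw [quadraticPhase_eq_exp, enorm_exp_I_mul_ofReal]

variable [InnerProductSpace ℝ E]

lemma hasTemperateGrowth_quadraticPhase : (quadraticPhase (E := E)).HasTemperateGrowth := by
  have h_half : (fun x : E => 2⁻¹ * ‖x‖ ^ 2).HasTemperateGrowth :=
    (Function.HasTemperateGrowth.const (2⁻¹ : ℝ)).mul (Function.hasTemperateGrowth_norm_sq E)
  simpa only [Function.comp_def, ← quadraticPhase_eq_exp] using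
    hasTemperateGrowth_exp_I_mul.comp h_half

lemma enorm_quadraticPhase_add_sub_quadraticPhase_sub (x y : E) :
    ‖quadraticPhase (x + y) - quadraticPhase (x - y)‖ₑ =
      ‖exp (I * (inner ℝ y ((2 : ℝ) • x) : ℝ)) - 1‖ₑ := by
  have h_exp : quadraticPhase (x + y) =
      quadraticPhase (x - y) * exp (I * (inner ℝ y ((2 : ℝ) • x) : ℝ)) := by
    rw [quadraticPhase_eq_exp, quadraticPhase_eq_exp, ← exp_add, ← mul_add, ← ofReal_add,
      norm_add_sq_real, norm_sub_sq_real, real_inner_smul_right, real_inner_comm]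
    ring_nf
  rw [h_exp, ← mul_sub_one, enorm_mul, enorm_quadraticPhase, one_mul]

variable [NormedAddCommGroup F]

lemma enorm_add_add_sq_le (a b c : F) :
    ‖a + b + c‖ₑ ^ 2 ≤ 3 * (‖a‖ₑ ^ 2 + ‖b‖ₑ ^ 2 + ‖c‖ₑ ^ 2) := by
  have h_sum : (‖a‖₊ + ‖b‖₊ + ‖c‖₊) ^ 2 ≤ 3 * (‖a‖₊ ^ 2 + ‖b‖₊ ^ 2 + ‖c‖₊ ^ 2) := by
    simpa [Fin.sum_univ_three] using
      sq_sum_le_card_mul_sum_sq (s := Finset.univ) (f := ![‖a‖₊, ‖b‖₊, ‖c‖₊])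
  grw [enorm_add₃_le]
  simp only [enorm_eq_nnnorm]
  exact_mod_cast h_sum

variable [InnerProductSpace ℂ F]

lemma enorm_symmetric_sub_quadraticPhase_smul_sq_le (v : E → F) (x y : E) :
    ‖quadraticPhase (x + y) • v (x + y) - quadraticPhase (x - y) • v (x - y)‖ₑ ^ 2 ≤
      3 * (‖v (x + y) - v x‖ₑ ^ 2 + ‖v (x - y) - v x‖ₑ ^ 2 +
        ‖exp (I * (inner ℝ y ((2 : ℝ) • x) : ℝ)) - 1‖ₑ ^ 2 * ‖v x‖ₑ ^ 2) := by
  have h_split : quadraticPhase (x + y) • v (x + y) - quadraticPhase (x - y) • v (x - y) =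
      quadraticPhase (x + y) • (v (x + y) - v x) + -(quadraticPhase (x - y) • (v (x - y) - v x)) +
        (quadraticPhase (x + y) - quadraticPhase (x - y)) • v x := by
    module
  rw [h_split]
  grw [enorm_add_add_sq_le]
  simp only [enorm_neg, enorm_smul, enorm_quadraticPhase, one_mul, mul_pow,
    enorm_quadraticPhase_add_sub_quadraticPhase_sub, le_refl]

variable [FiniteDimensional ℝ E] [MeasurableSpace E] [BorelSpace E]

lemma gagliardoEnergy_quadraticPhase_smul_le (ℓ : ℝ) {v : E → F} (hv : Continuous v) :
    2 ^ (2 * ℓ) * gagliardoEnergy ℓ (fun x => quadraticPhase x • v x) ≤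
      3 * (2 * gagliardoEnergy ℓ v +
        ∫⁻ x, gagliardoSymbol ℓ ((2 : ℝ) • x) * ‖v x‖ₑ ^ 2) := by
  have hv_meas : StronglyMeasurable v := hv.stronglyMeasurable
  let D (y : E) : ℝ≥0∞ := ∫⁻ x, ‖v (x + y) - v x‖ₑ ^ 2
  let D' (y : E) : ℝ≥0∞ := ∫⁻ x, ‖v (x - y) - v x‖ₑ ^ 2
  let P (y : E) : ℝ≥0∞ :=
    ∫⁻ x, ‖exp (I * (inner ℝ y ((2 : ℝ) • x) : ℝ)) - 1‖ₑ ^ 2 * ‖v x‖ₑ ^ 2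
  have hD : Measurable D :=
    Measurable.lintegral_prod_right' (f := fun q : E × E => ‖v (q.2 + q.1) - v q.2‖ₑ ^ 2)
      (by fun_prop)
  have hD' : Measurable D' := by
    simpa only [D, D', Function.comp_def, ← sub_eq_add_neg] using! hD.comp measurable_neg
  have h_inner (y : E) :
      ∫⁻ x, ‖quadraticPhase (x + y) • v (x + y) - quadraticPhase (x - y) • v (x - y)‖ₑ ^ 2 ≤
        3 * (D y + D' y + P y) := by
    rw [← lintegral_add_left (by fun_prop), ← lintegral_add_left (by fun_prop),
      ← lintegral_const_mul' _ _ (by finiteness)]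
    exact lintegral_mono fun x => enorm_symmetric_sub_quadraticPhase_smul_sq_le v x y
  calc 2 ^ (2 * ℓ) * gagliardoEnergy ℓ (fun x => quadraticPhase x • v x)
      ≤ ∫⁻ y, 3 * (D y + D' y + P y) * gagliardoKernel ℓ y := by
        rw [← lintegral_symmetric_sub_mul_gagliardoKernel]
        exact lintegral_mono fun y => mul_le_mul_left (h_inner y) _
    _ = 3 * ((∫⁻ y, D y * gagliardoKernel ℓ y) + (∫⁻ y, D' y * gagliardoKernel ℓ y) +
          ∫⁻ y, P y * gagliardoKernel ℓ y) := by
        simp only [mul_assoc, add_mul]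
        rw [lintegral_const_mul' _ _ (by finiteness), lintegral_add_left (by fun_prop),
          lintegral_add_left (by fun_prop)]
    _ = 3 * (2 * gagliardoEnergy ℓ v +
          ∫⁻ x, gagliardoSymbol ℓ ((2 : ℝ) • x) * ‖v x‖ₑ ^ 2) := by
        rw [lintegral_sub_translate_neg_mul_gagliardoKernel,
          lintegral_lintegral_mul_gagliardoKernel ℓ 2 (by fun_prop), two_mul, gagliardoEnergy]

end QuadraticPhase

section Main

variable {E F : Type*} [NormedAddCommGroup E] [InnerProductSpace ℝ E] [FiniteDimensional ℝ E]
  [MeasurableSpace E] [BorelSpace E] [NormedAddCommGroup F] [InnerProductSpace ℂ F]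

lemma lintegral_gagliardoSymbol_two_smul_mul {ℓ : ℝ} (hℓ : 0 < ℓ) {e : E} (he : ‖e‖ = 1)
    {v : E → F} (hv : Continuous v) :
    ∫⁻ x, gagliardoSymbol ℓ ((2 : ℝ) • x) * ‖v x‖ₑ ^ 2 =
      2 ^ (2 * ℓ) * gagliardoSymbol ℓ e *
        eLpNorm (fun x => ((‖x‖ ^ ℓ : ℝ) : ℂ) • v x) 2 volume ^ 2 := by
  have h_meas : Measurable fun x => ‖v x‖ₑ ^ 2 := hv.enorm.measurable.pow_const 2
  simp only [eLpNorm_two_sq_eq_lintegral, enorm_ofReal_norm_rpow_smul_sq hℓ.le]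
  rw [← lintegral_const_mul _ (by fun_prop)]
  refine lintegral_congr fun x => ?_
  rw [gagliardoSymbol_smul ℓ two_ne_zero, gagliardoSymbol_eq_enorm_rpow_mul hℓ he,
    Real.enorm_of_nonneg zero_le_two, ENNReal.ofReal_ofNat]
  ring

variable [CompleteSpace F] [Nontrivial E] {ℓ : ℝ}

lemma eLpNorm_fracLaplacian_quadraticPhase_smul_sq_le (hℓ₀ : 0 < ℓ) (hℓ₁ : ℓ < 1) (v : 𝓢(E, F)) :
    eLpNorm (fracLaplacian ℓ fun x => quadraticPhase x • v x) 2 volume ^ 2 ≤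
      3 * (2 * eLpNorm (fracLaplacian ℓ v) 2 volume ^ 2 +
        eLpNorm (fun x => ((‖x‖ ^ ℓ : ℝ) : ℂ) • v x) 2 volume ^ 2) := by
  obtain ⟨e, he⟩ : ∃ e : E, ‖e‖ = 1 := exists_norm_eq E zero_le_one
  have h_energy (f : 𝓢(E, F)) := gagliardoEnergy_eq_gagliardoSymbol_mul hℓ₀ he f
  let u : 𝓢(E, F) := SchwartzMap.smulLeftCLM F quadraticPhase v
  have hu : ⇑u = fun x => quadraticPhase x • v x :=
    funext (SchwartzMap.smulLeftCLM_apply_apply hasTemperateGrowth_quadraticPhase v)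
  set S := gagliardoSymbol ℓ e
  have hS₀ : S ≠ 0 := gagliardoSymbol_ne_zero ℓ (ne_zero_of_norm_ne_zero (by simp [he]))
  have hS₁ : S ≠ ∞ := gagliardoSymbol_ne_top hℓ₀ hℓ₁ e
  let c : ℝ≥0∞ := 2 ^ (2 * ℓ)
  have hc : 1 ≤ c := ENNReal.one_le_rpow one_le_two (by positivity)
  have hc₀ : c ≠ 0 := (one_pos.trans_le hc).ne'
  have hc₁ : c ≠ ∞ := by finiteness
  refine (ENNReal.mul_le_mul_iff_right (mul_ne_zero hc₀ hS₀) (ENNReal.mul_ne_top hc₁ hS₁)).1 ?_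
  set A := eLpNorm (fracLaplacian ℓ fun x => quadraticPhase x • v x) 2 volume with hA
  set B := eLpNorm (fracLaplacian ℓ v) 2 volume
  set X := eLpNorm (fun x => ((‖x‖ ^ ℓ : ℝ) : ℂ) • v x) 2 volume
  calc c * S * A ^ 2 = c * gagliardoEnergy ℓ fun x => quadraticPhase x • v x := by
        rw [hA, ← hu, h_energy, mul_assoc]
    _ ≤ 3 * (2 * gagliardoEnergy ℓ v +
          ∫⁻ x, gagliardoSymbol ℓ ((2 : ℝ) • x) * ‖v x‖ₑ ^ 2) :=
        gagliardoEnergy_quadraticPhase_smul_le ℓ v.continuous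
    _ = 3 * (2 * (1 * S * B ^ 2) + c * S * X ^ 2) := by
        rw [h_energy, lintegral_gagliardoSymbol_two_smul_mul hℓ₀ he v.continuous, one_mul]
    _ ≤ 3 * (2 * (c * S * B ^ 2) + c * S * X ^ 2) := by gcongr
    _ = c * S * (3 * (2 * B ^ 2 + X ^ 2)) := by ring

theorem stmt_6_general (hℓ₀ : 0 < ℓ) (hℓ₁ : ℓ < 1) (v : 𝓢(E, F)) :
    eLpNorm (fracLaplacian ℓ fun x => quadraticPhase x • v x) 2 volume ≤
      3 * (eLpNorm (fracLaplacian ℓ v) 2 volume +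
        eLpNorm (fun x => ((‖x‖ ^ ℓ : ℝ) : ℂ) • v x) 2 volume) := by
  set B := eLpNorm (fracLaplacian ℓ v) 2 volume
  set X := eLpNorm (fun x => ((‖x‖ ^ ℓ : ℝ) : ℂ) • v x) 2 volume
  refine (ENNReal.pow_le_pow_left_iff two_ne_zero).1 ?_
  calc _ ≤ 3 * (2 * B ^ 2 + X ^ 2) := eLpNorm_fracLaplacian_quadraticPhase_smul_sq_le hℓ₀ hℓ₁ v
    _ ≤ 3 * (2 * B ^ 2 + X ^ 2) + (3 * B ^ 2 + 18 * B * X + 6 * X ^ 2) := le_self_add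
    _ = (3 * (B + X)) ^ 2 := by ring

end Main

/-- For `n ≥ 1`, `1 < k < 2` and `ℓ = k − 1`, there is `C` such that for all Schwartz `v`,
`‖ω^ℓ (e^{i|x|²/2} v)‖₂ ≤ C (‖ω^ℓ v‖₂ + ‖|x|^ℓ v‖₂)`. -/
theorem stmt_6 (n : ℕ) (hn : 1 ≤ n) (k : ℝ) (hk1 : 1 < k) (hk2 : k < 2) :
    ∃ C : ℝ, 0 < C ∧ ∀ v : SchwartzMap (Vn n) ℂ,
      eLpNorm (omMul n (k - 1) (fun x => Complex.exp (Complex.I * (‖x‖ ^ 2 : ℝ) / 2) * v x)) 2 volume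
        ≤ ENNReal.ofReal C *
          (eLpNorm (omMul n (k - 1) (fun x => v x)) 2 volume
            + eLpNorm (fun x : Vn n => ((‖x‖ ^ (k - 1) : ℝ) : ℂ) * v x) 2 volume) := by
  have : NeZero n := ⟨by lia⟩
  refine ⟨3, three_pos, fun v => ?_⟩
  rw [ENNReal.ofReal_ofNat]
  exact stmt_6_general (by linarith) (by linarith) v
end
end

section
/- Let n ≥ 1 and 1 < k < 2. There is a constant C such that for all t ∈ ℝ and v ∈ 𝒮(ℝⁿ), ‖U(t)v; Σ^k‖ ≤ C(‖v; Σ^k‖ + |t|^k ‖ω^k v‖_{L²}) ≤ C(1+|t|)^k ‖v; Σ^k‖, where U(t) = exp(i(t/2)Δ) and ‖v;Σ^k‖ = ‖⟨ω⟩^k v‖₂ ∨ ‖⟨x⟩^k v‖₂. -/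
open MeasureTheory Complex
open scoped FourierTransform ENNReal

noncomputable section

/-- The `Σ^k` norm `‖⟨ω⟩^k v‖₂ ∨ ‖⟨x⟩^k v‖₂`. -/
def SigkNorm (n : ℕ) (k : ℝ) (f : Vn n → ℂ) : ℝ≥0∞ :=
  eLpNorm (japMul n k f) 2 volume ⊔
    eLpNorm (fun x : Vn n => (((1 + ‖x‖ ^ 2) ^ (k / 2) : ℝ) : ℂ) * f x) 2 volume

/-!
`U(t)` is conjugate, under the Fourier transform, to multiplication by the quadratic phase
`e^{is|ξ|²}` with `s = -2π²t`, so everything reduces to bounding the `k`-th moment of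
`𝓕⁻(e^{is|ξ|²} g)` by those of `g` and `𝓕⁻ g`.

Conjugating the translation `T` by `a` with the quadratic phase gives `S T S`, where `S` is
multiplication by `e^{is⟨a, ξ⟩}`, and `S T = ζ T S` for a unimodular scalar `ζ`. For any two
unitaries with such a Weyl relation, the second difference of `S T S` is controlled by those of `S`
and `T`: commuting them costs a multiple of `|ζ - 1| ‖v‖`, which the uncertainty principle bounds by
the same second differences. The second difference of `S` is the multiplier
`2 cos(s⟨a, ξ⟩) - 2`, and by Plancherel that of `T` becomes `2 cos(2π⟨a, x⟩) - 2` on the other side.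

Taking `a = r e` and integrating the square of this estimate against `r^{-1-2k} dr`, which converges
precisely for `0 < k < 2`, replaces each cosine multiplier by the homogeneous weight `|⟨e, ·⟩|^k`
up to a common constant. Summing over an orthonormal basis yields the weights `|ξ|^k` and `|x|^k`.
-/

section SecondDifference

variable {H : Type*} [NormedAddCommGroup H] [InnerProductSpace ℂ H]

/-- The second difference `U + U⁻¹ - 2` of a unitary `U`, a bounded substitute for the square of
its generator. -/
def secondDiff (U : H ≃ₗᵢ[ℂ] H) (v : H) : H := U v + U.symm v - (2 : ℂ) • v

lemma inner_symm_right (U : H ≃ₗᵢ[ℂ] H) (v w : H) :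
    inner ℂ v (U.symm w) = inner ℂ (U v) w := by
  rw [← U.inner_map_map, U.apply_symm_apply]

lemma inner_secondDiff_right (U : H ≃ₗᵢ[ℂ] H) (v w : H) :
    inner ℂ v (secondDiff U w) = -inner ℂ (U v - v) (U w - w) := by
  simp only [secondDiff, inner_sub_left, inner_sub_right, inner_add_right, inner_smul_right,
    inner_symm_right, U.inner_map_map]
  ring

lemma norm_map_sub_self_sq_le (U : H ≃ₗᵢ[ℂ] H) (v : H) :
    ‖U v - v‖ ^ 2 ≤ ‖v‖ * ‖secondDiff U v‖ := by
  calc ‖U v - v‖ ^ 2 = ‖inner ℂ v (secondDiff U v)‖ := by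
        rw [inner_secondDiff_right, norm_neg, inner_self_eq_norm_sq_to_K, norm_pow,
          RCLike.norm_ofReal, abs_norm]
    _ ≤ ‖v‖ * ‖secondDiff U v‖ := norm_inner_le_norm _ _

lemma norm_symm_map_sub_self (U : H ≃ₗᵢ[ℂ] H) (v : H) : ‖U.symm v - v‖ = ‖U v - v‖ := by
  rw [← U.norm_map, map_sub, U.apply_symm_apply, norm_sub_rev]

lemma norm_secondDiff_le (U : H ≃ₗᵢ[ℂ] H) (v : H) : ‖secondDiff U v‖ ≤ 4 * ‖v‖ := by
  calc ‖secondDiff U v‖ ≤ ‖U v‖ + ‖U.symm v‖ + ‖(2 : ℂ) • v‖ :=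
        norm_sub_le_of_le (norm_add_le _ _) le_rfl
    _ = 4 * ‖v‖ := by
      rw [U.norm_map, U.symm.norm_map, norm_smul, Complex.norm_ofNat]
      ring

lemma norm_secondDiff_mul_self_le (U : H ≃ₗᵢ[ℂ] H) (v : H) :
    ‖secondDiff (U * U) v‖ ≤ 4 * ‖secondDiff U v‖ := by
  set d := secondDiff U v with hd
  have factor : secondDiff (U * U) v = U d + U.symm d + (2 : ℂ) • d := by
    have hsymm : (U * U).symm v = U.symm (U.symm v) := rfl
    simp only [hd, secondDiff, hsymm, LinearIsometryEquiv.coe_mul, Function.comp_apply, map_add,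
      map_sub, map_smul, U.apply_symm_apply, U.symm_apply_apply]
    module
  calc ‖secondDiff (U * U) v‖ ≤ ‖U d‖ + ‖U.symm d‖ + ‖(2 : ℂ) • d‖ := by
        rw [factor]; exact norm_add₃_le
    _ = 4 * ‖d‖ := by
      rw [U.norm_map, U.symm.norm_map, norm_smul, Complex.norm_ofNat]
      ring

variable {S T : H ≃ₗᵢ[ℂ] H} {ζ : ℂ}

lemma map_symm_of_weyl (hζ : ‖ζ‖ = 1) (hST : ∀ v, S (T v) = ζ • T (S v)) (v : H) :
    S (T.symm v) = (starRingEnd ℂ) ζ • T.symm (S v) := by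
  apply T.injective
  have hw := hST (T.symm v)
  rw [T.apply_symm_apply] at hw
  rw [map_smul, T.apply_symm_apply, hw, smul_smul, conj_mul', hζ]
  simp

lemma norm_sub_one_mul_norm_sq_le (hST : ∀ v, S (T v) = ζ • T (S v)) (v : H) :
    ‖ζ - 1‖ * ‖v‖ ^ 2 ≤ 2 * ‖S v - v‖ * ‖T v - v‖
      + ‖ζ - 1‖ * ‖v‖ * (‖S v - v‖ + ‖T v - v‖) := by
  have commutator : (ζ - 1) * inner ℂ v (T (S v)) =
      inner ℂ (S.symm v - v) (T v - v) - inner ℂ (T.symm v - v) (S v - v) := by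
    have hS : inner ℂ (S.symm v) (T v) = ζ * inner ℂ v (T (S v)) := by
      rw [← S.inner_map_map, S.apply_symm_apply, hST, inner_smul_right]
    have hT : inner ℂ (T.symm v) (S v) = inner ℂ v (T (S v)) := by
      rw [← T.inner_map_map, T.apply_symm_apply]
    have hS' : inner ℂ (S.symm v) v = inner ℂ v (S v) := by
      rw [← S.inner_map_map, S.apply_symm_apply]
    have hT' : inner ℂ (T.symm v) v = inner ℂ v (T v) := by
      rw [← T.inner_map_map, T.apply_symm_apply]
    simp only [inner_sub_left, inner_sub_right, hS, hT, hS', hT']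
    ring
  have commutator_le : ‖ζ - 1‖ * ‖inner ℂ v (T (S v))‖ ≤ 2 * ‖S v - v‖ * ‖T v - v‖ := by
    rw [← norm_mul, commutator]
    refine (norm_sub_le_of_le (norm_inner_le_norm _ _) (norm_inner_le_norm _ _)).trans_eq ?_
    rw [norm_symm_map_sub_self, norm_symm_map_sub_self]
    ring
  have norm_sq_le : ‖v‖ ^ 2 ≤ ‖inner ℂ v (T (S v))‖ + ‖v‖ * (‖S v - v‖ + ‖T v - v‖) := by
    have hdiff : ‖T (S v) - v‖ ≤ ‖S v - v‖ + ‖T v - v‖ := by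
      have := norm_sub_le_norm_sub_add_norm_sub (T (S v)) (T v) v
      rwa [← map_sub, T.norm_map] at this
    calc ‖v‖ ^ 2 = ‖inner ℂ v v‖ := by
          rw [inner_self_eq_norm_sq_to_K, norm_pow, RCLike.norm_ofReal, abs_norm]
      _ = ‖inner ℂ v (T (S v)) - inner ℂ v (T (S v) - v)‖ := by
          rw [inner_sub_right, sub_sub_cancel]
      _ ≤ ‖inner ℂ v (T (S v))‖ + ‖v‖ * ‖T (S v) - v‖ :=
          norm_sub_le_of_le le_rfl (norm_inner_le_norm _ _)
      _ ≤ _ := by gcongr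
  nlinarith [mul_le_mul_of_nonneg_left norm_sq_le (norm_nonneg (ζ - 1))]

lemma norm_sub_one_mul_norm_le (hζ : ‖ζ‖ = 1) (hST : ∀ v, S (T v) = ζ • T (S v)) (v : H) :
    ‖ζ - 1‖ * ‖v‖ ≤ 6 * (‖secondDiff S v‖ + ‖secondDiff T v‖) := by
  rcases eq_or_ne v 0 with rfl | hv
  · simp only [norm_zero, mul_zero]; positivity
  have hv' : 0 < ‖v‖ := norm_pos_iff.2 hv
  have hz : ‖ζ - 1‖ ≤ 2 := (norm_sub_le _ _).trans_eq (by rw [hζ, norm_one]; norm_num)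
  have main := norm_sub_one_mul_norm_sq_le hST v
  have hα := norm_map_sub_self_sq_le S v
  have hβ := norm_map_sub_self_sq_le T v
  set a := ‖secondDiff S v‖
  set b := ‖secondDiff T v‖
  set α := ‖S v - v‖
  set β := ‖T v - v‖
  have absorb {γ c : ℝ} (hγ : γ ^ 2 ≤ ‖v‖ * c) :
      ‖ζ - 1‖ * γ ≤ ‖ζ - 1‖ * ‖v‖ / 4 + 2 * c := by
    have : 0 ≤ ‖v‖ * (‖ζ - 1‖ * ‖v‖ / 4 + 2 * c - ‖ζ - 1‖ * γ) := by
      nlinarith [sq_nonneg (‖v‖ / 2 - γ), norm_nonneg (ζ - 1), sq_nonneg γ]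
    linarith [nonneg_of_mul_nonneg_right this hv']
  refine le_of_mul_le_mul_left ?_ hv'
  nlinarith [sq_nonneg (α - β), mul_le_mul_of_nonneg_left (absorb hα) hv'.le,
    mul_le_mul_of_nonneg_left (absorb hβ) hv'.le]

lemma norm_smul_sub_sq_add_le (hζ : ‖ζ‖ = 1) (p v : H) :
    ‖ζ • p - v‖ ^ 2 + ‖(starRingEnd ℂ) ζ • p - v‖ ^ 2 ≤
      2 * ‖p - v‖ ^ 2 + 2 * ‖ζ - 1‖ ^ 2 * (‖p‖ * ‖v‖) := by
  have hre : ζ.re ^ 2 + ζ.im ^ 2 = 1 := by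
    rw [← one_pow 2, ← hζ, Complex.sq_norm, normSq_apply]; ring
  have hdist : ‖ζ - 1‖ ^ 2 = 2 - 2 * ζ.re := by
    rw [Complex.sq_norm, normSq_apply, sub_re, sub_im, one_re, one_im]
    linarith
  have hinner : (inner ℂ p v).re ≤ ‖p‖ * ‖v‖ := re_inner_le_norm (𝕜 := ℂ) p v
  rw [norm_sub_sq (𝕜 := ℂ), norm_sub_sq (𝕜 := ℂ), norm_sub_sq (𝕜 := ℂ) p, norm_smul, norm_smul,
    RCLike.norm_conj, hζ, inner_smul_left, inner_smul_left, hdist]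
  simp only [RCLike.re_to_complex, mul_re, conj_conj, conj_re, conj_im, one_mul]
  have : 0 ≤ 2 - 2 * ζ.re := hdist ▸ sq_nonneg _
  nlinarith [mul_le_mul_of_nonneg_left hinner this]

lemma norm_sub_sq_add_norm_sub_sq (d d₁ d₂ : H) :
    ‖d₁ - d‖ ^ 2 + ‖d₂ - d‖ ^ 2 = ‖d₁‖ ^ 2 + ‖d₂‖ ^ 2 - 2 * ‖d‖ ^ 2
      - 2 * (inner ℂ (d₁ + d₂ - (2 : ℂ) • d) d).re := by
  have hdd : (inner ℂ d d).re = ‖d‖ ^ 2 := inner_self_eq_norm_sq (𝕜 := ℂ) d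
  rw [norm_sub_sq (𝕜 := ℂ), norm_sub_sq (𝕜 := ℂ) d₂, two_smul]
  simp only [inner_sub_left, inner_add_left, RCLike.re_to_complex, sub_re, add_re, hdd]
  ring

lemma norm_map_sub_self_sq_add_le (hζ : ‖ζ‖ = 1) (hST : ∀ v, S (T v) = ζ • T (S v)) (v : H) :
    ‖S (T v - v) - (T v - v)‖ ^ 2 + ‖S (T.symm v - v) - (T.symm v - v)‖ ^ 2 ≤
      2 * (‖ζ - 1‖ * ‖v‖) ^ 2 + 2 * (‖secondDiff S v‖ * ‖secondDiff T v‖) := by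
  have hT : ‖S (T v) - T v‖ = ‖ζ • S v - v‖ := by
    rw [hST, ← map_smul, ← map_sub, T.norm_map]
  have hT_symm : ‖S (T.symm v) - T.symm v‖ = ‖(starRingEnd ℂ) ζ • S v - v‖ := by
    rw [map_symm_of_weyl hζ hST, ← map_smul, ← map_sub, T.symm.norm_map]
  have hsum : S (secondDiff T v) - secondDiff T v =
      (S (T v) - T v) + (S (T.symm v) - T.symm v) - (2 : ℂ) • (S v - v) := by
    simp only [secondDiff, map_add, map_sub, map_smul]
    module
  have hinner : (inner ℂ (secondDiff T v) (secondDiff S v)).re ≤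
      ‖secondDiff T v‖ * ‖secondDiff S v‖ := re_inner_le_norm (𝕜 := ℂ) _ _
  have hrot := norm_smul_sub_sq_add_le hζ (S v) v
  rw [inner_secondDiff_right, hsum, neg_re] at hinner
  rw [S.norm_map] at hrot
  rw [map_sub, map_sub, sub_sub_sub_comm, sub_sub_sub_comm (S (T.symm v)),
    norm_sub_sq_add_norm_sub_sq, hT, hT_symm]
  linarith

lemma norm_map_sub_symm_le (U : H ≃ₗᵢ[ℂ] H) (v : H) : ‖U v - U.symm v‖ ≤ 2 * ‖U v - v‖ := by
  have := norm_sub_le_norm_sub_add_norm_sub (U v) v (U.symm v)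
  rw [norm_sub_rev v, norm_symm_map_sub_self] at this
  linarith

lemma norm_map_map_add_symm_symm_sub_le (M T : H ≃ₗᵢ[ℂ] H) (v : H) :
    ‖M (T v) + M.symm (T.symm v) - (2 : ℂ) • v‖ ≤ ‖secondDiff M v‖ + 3 * ‖secondDiff T v‖
      + ‖M (T v - v) - (T v - v)‖ + ‖M (T.symm v - v) - (T.symm v - v)‖ := by
  set d := secondDiff T v with hd
  set p := T v - v with hp
  set q := T.symm v - v with hq
  have expand : M (T v) + M.symm (T.symm v) - (2 : ℂ) • v = secondDiff M v + d
      + (1 / 2 : ℂ) • secondDiff M d + (1 / 2 : ℂ) • ((M p - M.symm p) - (M q - M.symm q)) := by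
    simp only [hd, hp, hq, secondDiff, map_add, map_sub, map_smul]
    module
  have hhalf : ‖(1 / 2 : ℂ)‖ = 1 / 2 := by norm_num
  calc _ ≤ ‖secondDiff M v‖ + ‖d‖ + ‖(1 / 2 : ℂ) • secondDiff M d‖
        + ‖(1 / 2 : ℂ) • ((M p - M.symm p) - (M q - M.symm q))‖ := by
        rw [expand]; exact norm_add₄_le
    _ ≤ ‖secondDiff M v‖ + ‖d‖ + 1 / 2 * (4 * ‖d‖)
        + 1 / 2 * (2 * ‖M p - p‖ + 2 * ‖M q - q‖) := by
        rw [norm_smul, norm_smul, hhalf]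
        gcongr
        · exact norm_secondDiff_le M d
        · exact norm_sub_le_of_le (norm_map_sub_symm_le M p) (norm_map_sub_symm_le M q)
    _ = _ := by ring

lemma norm_secondDiff_conj_eq (hζ : ‖ζ‖ = 1) (hST : ∀ v, S (T v) = ζ • T (S v)) (v : H) :
    ‖secondDiff (S * T * S) v‖ =
      ‖(S * S) (T v) + (S * S).symm (T.symm v) - (2 * ζ) • v‖ := by
  have hinv (w : H) : S.symm (T.symm w) = ζ • T.symm (S.symm w) := by
    apply S.injective
    rw [S.apply_symm_apply, map_smul, map_symm_of_weyl hζ hST, S.apply_symm_apply, smul_smul,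
      mul_conj', hζ]
    simp
  have hfwd : (S * S) (T v) = ζ • (S * T * S) v := by
    simp only [LinearIsometryEquiv.coe_mul, Function.comp_apply]
    rw [hST, map_smul]
  have hbwd : (S * S).symm (T.symm v) = ζ • (S * T * S).symm v := by
    change S.symm (S.symm (T.symm v)) = ζ • S.symm (T.symm (S.symm v))
    rw [hinv, map_smul]
  rw [hfwd, hbwd, mul_comm, mul_smul, ← smul_add, ← smul_sub, norm_smul, hζ, one_mul, secondDiff]

theorem norm_secondDiff_conj_le (hζ : ‖ζ‖ = 1) (hST : ∀ v, S (T v) = ζ • T (S v)) (v : H) :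
    ‖secondDiff (S * T * S) v‖ ≤ 42 * (‖secondDiff S v‖ + ‖secondDiff T v‖) := by
  have hsq : ‖ζ ^ 2‖ = 1 := by rw [norm_pow, hζ, one_pow]
  have hSST (v : H) : (S * S) (T v) = ζ ^ 2 • T ((S * S) v) := by
    simp only [LinearIsometryEquiv.coe_mul, Function.comp_apply, hST, map_smul, smul_smul, sq]
  have hsq_sub : ‖ζ ^ 2 - 1‖ ≤ 2 * ‖ζ - 1‖ := by
    have hplus : ‖ζ + 1‖ ≤ 2 := (norm_add_le _ _).trans_eq (by rw [hζ, norm_one]; norm_num)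
    calc ‖ζ ^ 2 - 1‖ = ‖ζ + 1‖ * ‖ζ - 1‖ := by rw [← norm_mul]; ring_nf
      _ ≤ 2 * ‖ζ - 1‖ := by gcongr
  have uncertainty := norm_sub_one_mul_norm_le hζ hST v
  have cross := norm_map_sub_self_sq_add_le hsq hSST v
  have product := norm_map_map_add_symm_symm_sub_le (S * S) T v
  have double := norm_secondDiff_mul_self_le S v
  set a := ‖secondDiff S v‖
  set b := ‖secondDiff T v‖
  set z := ‖ζ - 1‖ * ‖v‖ with hz
  set c₁ := ‖(S * S) (T v - v) - (T v - v)‖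
  set c₂ := ‖(S * S) (T.symm v - v) - (T.symm v - v)‖
  have ha0 : 0 ≤ a := norm_nonneg _
  have hb0 : 0 ≤ b := norm_nonneg _
  have hz0 : 0 ≤ z := by positivity
  have cross_le : c₁ + c₂ ≤ 4 * z + 2 * (a + b) := by
    have hz_sq : (‖ζ ^ 2 - 1‖ * ‖v‖) ^ 2 ≤ (2 * z) ^ 2 := by
      rw [hz, ← mul_assoc]; gcongr
    have hab : ‖secondDiff (S * S) v‖ * b ≤ 4 * a * b := by gcongr
    refine abs_le_of_sq_le_sq' ?_ (by positivity) |>.2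
    nlinarith [sq_nonneg (c₁ - c₂), sq_nonneg (a - b), mul_nonneg hz0 (add_nonneg ha0 hb0)]
  calc ‖secondDiff (S * T * S) v‖
      = ‖((S * S) (T v) + (S * S).symm (T.symm v) - (2 : ℂ) • v) - (2 : ℂ) • (ζ - 1) • v‖ := by
        rw [norm_secondDiff_conj_eq hζ hST]
        congr 1
        module
    _ ≤ (4 * a + 3 * b + c₁ + c₂) + 2 * z := by
        refine norm_sub_le_of_le (by linarith) ?_
        rw [norm_smul, norm_smul, Complex.norm_ofNat]
    _ ≤ 42 * (a + b) := by linarith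

end SecondDifference

section PhaseSpaceShifts

/-- Multiplication by the unimodular function `e^{iθ}`. -/
def modulate {α : Type*} (θ : α → ℝ) (f : α → ℂ) (x : α) : ℂ := cexp (θ x * I) * f x

/-- The second difference `f(· + a) + f(· - a) - 2f` of `f` in direction `a`. -/
def centralDiff {V : Type*} [AddGroup V] (a : V) (f : V → ℂ) (x : V) : ℂ :=
  f (x + a) + f (x - a) - 2 * f x

lemma norm_modulate {α : Type*} (θ : α → ℝ) (f : α → ℂ) (x : α) : ‖modulate θ f x‖ = ‖f x‖ := by
  rw [modulate, norm_mul, norm_exp_ofReal_mul_I, one_mul]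

lemma modulate_modulate {α : Type*} (θ θ' : α → ℝ) (f : α → ℂ) :
    modulate θ (modulate θ' f) = modulate (θ + θ') f := by
  ext x
  simp only [modulate, Pi.add_apply, ofReal_add, add_mul, Complex.exp_add, mul_assoc]

lemma modulate_zero {α : Type*} (f : α → ℂ) : modulate 0 f = f := by
  ext x
  simp [modulate]

section Modulation

variable {α : Type*} [MeasurableSpace α] {μ : Measure α} {θ : α → ℝ} {f : α → ℂ}

lemma eLpNorm_modulate (θ : α → ℝ) (f : α → ℂ) (p : ℝ≥0∞) (μ : Measure α) :
    eLpNorm (modulate θ f) p μ = eLpNorm f p μ :=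
  eLpNorm_congr_norm_ae (.of_forall (norm_modulate θ f))

lemma aestronglyMeasurable_modulate (hθ : Measurable θ) (hf : AEStronglyMeasurable f μ) :
    AEStronglyMeasurable (modulate θ f) μ := by
  have : Measurable fun x => cexp (θ x * I) := by fun_prop
  exact this.aestronglyMeasurable.mul hf

lemma memLp_modulate {p : ℝ≥0∞} (hθ : Measurable θ) (hf : MemLp f p μ) :
    MemLp (modulate θ f) p μ :=
  ⟨aestronglyMeasurable_modulate hθ hf.1, (eLpNorm_modulate θ f p μ).trans_lt hf.2⟩

lemma integrable_modulate (hθ : Measurable θ) (hf : Integrable f μ) :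
    Integrable (modulate θ f) μ :=
  memLp_one_iff_integrable.1 (memLp_modulate hθ (memLp_one_iff_integrable.2 hf))

/-- Multiplication by `e^{iθ}` as a linear isometry of `L²`. -/
def modulateₗᵢ (μ : Measure α) (hθ : Measurable θ) : Lp ℂ 2 μ →ₗᵢ[ℂ] Lp ℂ 2 μ where
  toFun f := (memLp_modulate hθ (Lp.memLp f)).toLp _
  map_add' f g := by
    rw [← MemLp.toLp_add]
    refine MemLp.toLp_congr _ _ ?_
    filter_upwards [Lp.coeFn_add f g] with x hx
    simp only [modulate, hx, Pi.add_apply, mul_add]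
  map_smul' c f := by
    rw [RingHom.id_apply, ← MemLp.toLp_const_smul]
    refine MemLp.toLp_congr _ _ ?_
    filter_upwards [Lp.coeFn_smul c f] with x hx
    simp only [modulate, hx, Pi.smul_apply, mul_smul_comm]
  norm_map' f := by
    change ‖(memLp_modulate hθ (Lp.memLp f)).toLp _‖ = ‖f‖
    rw [Lp.norm_toLp, eLpNorm_modulate, Lp.norm_def]

lemma modulateₗᵢ_toLp (hθ : Measurable θ) (hf : MemLp f 2 μ) :
    modulateₗᵢ μ hθ (hf.toLp f) = (memLp_modulate hθ hf).toLp (modulate θ f) := by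
  refine MemLp.toLp_congr (memLp_modulate hθ (Lp.memLp _)) _ ?_
  filter_upwards [hf.coeFn_toLp] with x hx
  simp only [modulate, hx]

lemma modulateₗᵢ_modulateₗᵢ_of_add_eq_zero {θ' : α → ℝ} (hθ : Measurable θ)
    (hθ' : Measurable θ') (h : θ + θ' = 0) (u : Lp ℂ 2 μ) :
    modulateₗᵢ μ hθ (modulateₗᵢ μ hθ' u) = u := by
  obtain ⟨f, hf, rfl⟩ : ∃ f, ∃ hf : MemLp f 2 μ, hf.toLp f = u :=
    ⟨u, Lp.memLp u, Lp.toLp_coeFn u _⟩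
  simp only [modulateₗᵢ_toLp, modulate_modulate, h, modulate_zero]

/-- Multiplication by `e^{iθ}` as a unitary of `L²`. -/
def modulateEquiv (μ : Measure α) (hθ : Measurable θ) : Lp ℂ 2 μ ≃ₗᵢ[ℂ] Lp ℂ 2 μ where
  toLinearEquiv := .ofLinearMap (modulateₗᵢ μ hθ).toLinearMap (modulateₗᵢ μ hθ.neg).toLinearMap
    (LinearMap.ext (modulateₗᵢ_modulateₗᵢ_of_add_eq_zero hθ hθ.neg (add_neg_cancel θ)))
    (LinearMap.ext (modulateₗᵢ_modulateₗᵢ_of_add_eq_zero hθ.neg hθ (neg_add_cancel θ)))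
  norm_map' := (modulateₗᵢ μ hθ).norm_map

lemma modulateEquiv_toLp (hθ : Measurable θ) (hf : MemLp f 2 μ) :
    modulateEquiv μ hθ (hf.toLp f) = (memLp_modulate hθ hf).toLp (modulate θ f) :=
  modulateₗᵢ_toLp hθ hf

lemma modulateEquiv_symm_toLp (hθ : Measurable θ) (hf : MemLp f 2 μ) :
    (modulateEquiv μ hθ).symm (hf.toLp f) = (memLp_modulate hθ.neg hf).toLp (modulate (-θ) f) :=
  modulateₗᵢ_toLp hθ.neg hf

lemma enorm_secondDiff_toLp {U : Lp ℂ 2 μ ≃ₗᵢ[ℂ] Lp ℂ 2 μ} {g h : α → ℂ}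
    {hf : MemLp f 2 μ} {hg : MemLp g 2 μ} {hh : MemLp h 2 μ} (hUg : U (hf.toLp f) = hg.toLp g)
    (hUh : U.symm (hf.toLp f) = hh.toLp h) :
    ‖secondDiff U (hf.toLp f)‖ₑ = eLpNorm (fun x => g x + h x - 2 * f x) 2 μ := by
  rw [secondDiff, hUg, hUh, ← MemLp.toLp_const_smul, ← MemLp.toLp_add, ← MemLp.toLp_sub,
    Lp.enorm_toLp]
  rfl

lemma enorm_secondDiff_modulateEquiv (hθ : Measurable θ) (hf : MemLp f 2 μ) :
    ‖secondDiff (modulateEquiv μ hθ) (hf.toLp f)‖ₑ =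
      eLpNorm (fun x => (2 * Real.cos (θ x) - 2 : ℝ) * f x) 2 μ := by
  rw [enorm_secondDiff_toLp (modulateEquiv_toLp hθ hf) (modulateEquiv_symm_toLp hθ hf)]
  congr 1
  ext x
  simp only [modulate, Pi.neg_apply, ofReal_neg, ofReal_sub, ofReal_mul, ofReal_ofNat, ofReal_cos,
    two_cos]
  ring

end Modulation

section Translation

variable {V : Type*} [MeasurableSpace V] [AddCommGroup V] [MeasurableAdd V] {μ : Measure V}
  [μ.IsAddRightInvariant] {f : V → ℂ}

lemma memLp_comp_add_right {p : ℝ≥0∞} (hf : MemLp f p μ) (a : V) :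
    MemLp (fun x => f (x + a)) p μ :=
  hf.comp_measurePreserving (measurePreserving_add_right μ a)

variable (μ) in
/-- Translation `f ↦ f(· + a)` as a linear isometry of `L²`. -/
def translateₗᵢ (a : V) : Lp ℂ 2 μ →ₗᵢ[ℂ] Lp ℂ 2 μ :=
  Lp.compMeasurePreservingₗᵢ ℂ (· + a) (measurePreserving_add_right μ a)

lemma translateₗᵢ_toLp (hf : MemLp f 2 μ) (a : V) :
    translateₗᵢ μ a (hf.toLp f) = (memLp_comp_add_right hf a).toLp (fun x => f (x + a)) :=
  rfl

lemma translateₗᵢ_translateₗᵢ_of_add_eq_zero {a b : V} (h : a + b = 0) (u : Lp ℂ 2 μ) :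
    translateₗᵢ μ a (translateₗᵢ μ b u) = u := by
  obtain ⟨f, hf, rfl⟩ : ∃ f, ∃ hf : MemLp f 2 μ, hf.toLp f = u :=
    ⟨u, Lp.memLp u, Lp.toLp_coeFn u _⟩
  simp only [translateₗᵢ_toLp, add_assoc, h, add_zero]

variable (μ) in
/-- Translation `f ↦ f(· + a)` as a unitary of `L²`. -/
def translateEquiv (a : V) : Lp ℂ 2 μ ≃ₗᵢ[ℂ] Lp ℂ 2 μ where
  toLinearEquiv := .ofLinearMap (translateₗᵢ μ a).toLinearMap (translateₗᵢ μ (-a)).toLinearMap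
    (LinearMap.ext (translateₗᵢ_translateₗᵢ_of_add_eq_zero (add_neg_cancel a)))
    (LinearMap.ext (translateₗᵢ_translateₗᵢ_of_add_eq_zero (neg_add_cancel a)))
  norm_map' := (translateₗᵢ μ a).norm_map

lemma translateEquiv_toLp (hf : MemLp f 2 μ) (a : V) :
    translateEquiv μ a (hf.toLp f) = (memLp_comp_add_right hf a).toLp (fun x => f (x + a)) :=
  rfl

lemma translateEquiv_symm_toLp (hf : MemLp f 2 μ) (a : V) :
    (translateEquiv μ a).symm (hf.toLp f) =
      (memLp_comp_add_right hf (-a)).toLp (fun x => f (x + -a)) :=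
  rfl

lemma enorm_secondDiff_translateEquiv (hf : MemLp f 2 μ) (a : V) :
    ‖secondDiff (translateEquiv μ a) (hf.toLp f)‖ₑ = eLpNorm (centralDiff a f) 2 μ := by
  rw [enorm_secondDiff_toLp (translateEquiv_toLp hf a) (translateEquiv_symm_toLp hf a)]
  simp only [← sub_eq_add_neg]
  rfl

-- `hφ` makes the triple product the conjugate of the translation by multiplication with `e^{iφ}`.
lemma enorm_secondDiff_modulateEquiv_conj {θ φ : V → ℝ} {a : V} (hθ : Measurable θ)
    (hφ : ∀ x, φ (x + a) = φ x + θ x + θ (x + a)) (hf : MemLp f 2 μ) :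
    ‖secondDiff (modulateEquiv μ hθ * translateEquiv μ a * modulateEquiv μ hθ) (hf.toLp f)‖ₑ =
      eLpNorm (centralDiff a (modulate φ f)) 2 μ := by
  have hfwd : (modulateEquiv μ hθ * translateEquiv μ a * modulateEquiv μ hθ) (hf.toLp f) =
      modulateEquiv μ hθ (translateEquiv μ a (modulateEquiv μ hθ (hf.toLp f))) := rfl
  have hbwd : (modulateEquiv μ hθ * translateEquiv μ a * modulateEquiv μ hθ).symm (hf.toLp f) =
      (modulateEquiv μ hθ).symm ((translateEquiv μ a).symm ((modulateEquiv μ hθ).symm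
        (hf.toLp f))) := rfl
  rw [modulateEquiv_toLp, translateEquiv_toLp, modulateEquiv_toLp] at hfwd
  rw [modulateEquiv_symm_toLp, translateEquiv_symm_toLp, modulateEquiv_symm_toLp] at hbwd
  rw [enorm_secondDiff_toLp hfwd hbwd, ← eLpNorm_modulate φ]
  congr 1
  ext x
  have hφ_sub : φ (x - a) = φ x - θ x - θ (x - a) := by
    have := hφ (x - a)
    rw [sub_add_cancel] at this
    linarith
  simp only [modulate, centralDiff, hφ, hφ_sub, Pi.neg_apply, ← sub_eq_add_neg, ofReal_add,
    ofReal_sub, ofReal_neg, add_mul, sub_mul, neg_mul, Complex.exp_add, Complex.exp_sub,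
    Complex.exp_neg]
  field_simp

end Translation

section QuadraticPhase

variable {V : Type*} [NormedAddCommGroup V] [InnerProductSpace ℝ V] [MeasurableSpace V]
  [BorelSpace V] {μ : Measure V} [μ.IsAddRightInvariant] {f : V → ℂ}

lemma measurable_mul_inner_right (s : ℝ) (a : V) : Measurable fun x : V => s * inner ℝ a x :=
  (continuous_const.mul (continuous_const.inner continuous_id)).measurable

lemma modulateEquiv_translateEquiv (s : ℝ) (a : V) (u : Lp ℂ 2 μ) :
    modulateEquiv μ (measurable_mul_inner_right s a) (translateEquiv μ a u) =
      cexp ((-(s * ‖a‖ ^ 2) : ℝ) * I) •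
        translateEquiv μ a (modulateEquiv μ (measurable_mul_inner_right s a) u) := by
  obtain ⟨f, hf, rfl⟩ : ∃ f, ∃ hf : MemLp f 2 μ, hf.toLp f = u :=
    ⟨u, Lp.memLp u, Lp.toLp_coeFn u _⟩
  rw [translateEquiv_toLp, modulateEquiv_toLp, modulateEquiv_toLp, translateEquiv_toLp,
    ← MemLp.toLp_const_smul]
  congr 1
  ext x
  rw [Pi.smul_apply, smul_eq_mul, modulate, modulate, ← mul_assoc, ← Complex.exp_add, ← add_mul,
    ← ofReal_add, inner_add_right, real_inner_self_eq_norm_sq]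
  ring_nf

theorem eLpNorm_centralDiff_modulate_norm_sq_le (s : ℝ) (a : V) (hf : MemLp f 2 μ) :
    eLpNorm (centralDiff a (modulate (fun x => s * ‖x‖ ^ 2) f)) 2 μ ≤
      42 * (eLpNorm (fun x => (2 * Real.cos (s * inner ℝ a x) - 2 : ℝ) * f x) 2 μ
        + eLpNorm (centralDiff a f) 2 μ) := by
  have hφ (x : V) : s * ‖x + a‖ ^ 2 =
      s * ‖x‖ ^ 2 + s * inner ℝ a x + s * inner ℝ a (x + a) := by
    rw [norm_add_sq_real, inner_add_right, real_inner_self_eq_norm_sq, real_inner_comm]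
    ring
  have hθ := measurable_mul_inner_right s a
  have weyl := norm_secondDiff_conj_le (norm_exp_ofReal_mul_I _)
    (modulateEquiv_translateEquiv (μ := μ) s a) (hf.toLp f)
  rw [← enorm_secondDiff_modulateEquiv_conj hθ hφ hf, ← enorm_secondDiff_modulateEquiv hθ hf,
    ← enorm_secondDiff_translateEquiv hf a, ← ofReal_norm, ← ofReal_norm, ← ofReal_norm,
    ← ENNReal.ofReal_add (norm_nonneg _) (norm_nonneg _), ← ENNReal.ofReal_ofNat 42,
    ← ENNReal.ofReal_mul (by norm_num)]
  exact ENNReal.ofReal_le_ofReal weyl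

end QuadraticPhase

end PhaseSpaceShifts

section Fourier

lemma continuous_neg_innerₗ {V : Type*} [NormedAddCommGroup V] [InnerProductSpace ℝ V] :
    Continuous fun p : V × V => (-innerₗ V) p.1 p.2 := by
  simp only [LinearMap.neg_apply, innerₗ_apply_apply]
  fun_prop

variable {V : Type*} [NormedAddCommGroup V] [InnerProductSpace ℝ V] [FiniteDimensional ℝ V]
  [MeasurableSpace V] [BorelSpace V] {f g : V → ℂ}

lemma continuous_fourierInv_of_integrable (hf : Integrable f) : Continuous (𝓕⁻ f) := by
  rw [← Real.Lp.fourierTransformInv_toLp (memLp_one_iff_integrable.2 hf)]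
  exact BoundedContinuousFunction.continuous _

lemma integral_fourierInv_mul_eq (hf : Integrable f) (hg : Integrable g) :
    ∫ x, 𝓕⁻ f x * g x = ∫ x, f x * 𝓕⁻ g x := by
  have hflip : (-innerₗ V).flip = -innerₗ V := by
    ext x y
    simp [real_inner_comm]
  have hpair := VectorFourier.integral_fourierIntegral_smul_eq_flip (L := -innerₗ V)
    Real.continuous_fourierChar continuous_neg_innerₗ hf hg
  rw [hflip] at hpair
  exact hpair

lemma fourierInv_toLp_ae_eq_s8 (hf : Integrable f) (hf2 : MemLp f 2) :
    (𝓕⁻ (hf2.toLp f) : Lp ℂ 2 (volume : Measure V)) =ᵐ[volume] 𝓕⁻ f := by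
  refine ae_eq_of_integral_contDiff_smul_eq ((Lp.memLp _).locallyIntegrable (by norm_num))
    (continuous_fourierInv_of_integrable hf).locallyIntegrable fun g hg hg_supp => ?_
  have hsupp : HasCompactSupport fun x => (g x : ℂ) :=
    hg_supp.comp_left (g := fun r : ℝ => (r : ℂ)) ofReal_zero
  set φ : SchwartzMap V ℂ := hsupp.toSchwartzMap (ofRealCLM.contDiff.comp hg)
  have hpair := DFunLike.congr_fun (Lp.fourierInv_toTemperedDistribution_eq (hf2.toLp f)) φ
  simp only [TemperedDistribution.fourierInv_apply, Lp.toTemperedDistribution_apply,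
    smul_eq_mul] at hpair
  have hrepr : ∫ x, 𝓕⁻ φ x * hf2.toLp f x = ∫ x, 𝓕⁻ (φ : V → ℂ) x * f x := by
    refine integral_congr_ae ?_
    filter_upwards [hf2.coeFn_toLp] with x hx
    rw [hx, SchwartzMap.fourierInv_coe]
  rw [hrepr, integral_fourierInv_mul_eq φ.integrable hf] at hpair
  simp only [Complex.real_smul]
  exact hpair.symm

theorem eLpNorm_fourierInv_eq_s8 (hf : Integrable f) (hf2 : MemLp f 2) :
    eLpNorm (𝓕⁻ f) 2 = eLpNorm f 2 := by
  have hnorm : ‖(𝓕⁻ (hf2.toLp f) : Lp ℂ 2 (volume : Measure V))‖ = ‖hf2.toLp f‖ := by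
    rw [← Lp.norm_fourier_eq, FourierTransform.fourier_fourierInv_eq]
  rw [← eLpNorm_congr_ae (fourierInv_toLp_ae_eq_s8 hf hf2), ← Lp.enorm_def, ← ofReal_norm, hnorm,
    ofReal_norm, Lp.enorm_toLp]

lemma fourierInv_comp_add_right (f : V → ℂ) (a x : V) :
    𝓕⁻ (fun y => f (y + a)) x = cexp (-(2 * Real.pi * inner ℝ a x : ℝ) * I) * 𝓕⁻ f x := by
  have := congrFun (VectorFourier.fourierIntegral_comp_add_right Real.fourierChar volume
    (-innerₗ V) f a) x
  refine this.trans ?_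
  rw [Circle.smul_def, Real.fourierChar_apply, smul_eq_mul]
  simp only [LinearMap.neg_apply, innerₗ_apply_apply, mul_neg, ofReal_neg]
  rfl

lemma integrable_centralDiff (hf : Integrable f) (a : V) : Integrable (centralDiff a f) :=
  ((hf.comp_add_right a).add (hf.comp_sub_right a)).sub (hf.const_mul 2)

lemma memLp_centralDiff {p : ℝ≥0∞} (hf : MemLp f p) (a : V) : MemLp (centralDiff a f) p :=
  ((hf.comp_measurePreserving (measurePreserving_add_right volume a)).add
    (hf.comp_measurePreserving (measurePreserving_sub_right volume a))).sub (hf.const_mul 2)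

lemma fourierInv_centralDiff (hf : Integrable f) (a x : V) :
    𝓕⁻ (centralDiff a f) x = (2 * Real.cos (2 * Real.pi * inner ℝ a x) - 2 : ℝ) * 𝓕⁻ f x := by
  have hsplit : centralDiff a f =
      (fun y => f (y + a)) + (fun y => f (y + -a)) + (-2 : ℂ) • f := by
    ext y
    simp only [centralDiff, sub_eq_add_neg, Pi.add_apply, Pi.smul_apply, smul_eq_mul, neg_mul]
  have hadd {g h : V → ℂ} (hg : Integrable g) (hh : Integrable h) : 𝓕⁻ (g + h) = 𝓕⁻ g + 𝓕⁻ h :=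
    VectorFourier.fourierIntegral_add Real.continuous_fourierChar continuous_neg_innerₗ hg hh
  have hsmul : 𝓕⁻ ((-2 : ℂ) • f) = (-2 : ℂ) • 𝓕⁻ f :=
    VectorFourier.fourierIntegral_const_smul _ _ _ _ _
  rw [hsplit, hadd ((hf.comp_add_right a).add (hf.comp_add_right (-a))) (hf.smul _),
    hadd (hf.comp_add_right a) (hf.comp_add_right (-a)), hsmul]
  simp only [Pi.add_apply, Pi.smul_apply, smul_eq_mul, fourierInv_comp_add_right, inner_neg_left,
    mul_neg, ofReal_neg, ofReal_sub, ofReal_mul, ofReal_ofNat, ofReal_cos, two_cos]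
  ring_nf

lemma eLpNorm_centralDiff (hf : Integrable f) (hf2 : MemLp f 2) (a : V) :
    eLpNorm (centralDiff a f) 2 =
      eLpNorm (fun x => (2 * Real.cos (2 * Real.pi * inner ℝ a x) - 2 : ℝ) * 𝓕⁻ f x) 2 := by
  rw [← eLpNorm_fourierInv_eq_s8 (integrable_centralDiff hf a) (memLp_centralDiff hf2 a)]
  simp only [← fourierInv_centralDiff hf]

end Fourier

section FractionalMoments

/-- The constant `∫₀^∞ (2 cos r - 2)² r^{-1-2k} dr` comparing second differences with moments of
order `k`. -/
def cosConst (k : ℝ) : ℝ≥0∞ :=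
  ∫⁻ r in Set.Ioi (0 : ℝ), ENNReal.ofReal ((2 * Real.cos r - 2) ^ 2 * r ^ (-1 - 2 * k))

lemma measurable_cos_weight (k : ℝ) :
    Measurable fun r : ℝ => ENNReal.ofReal ((2 * Real.cos r - 2) ^ 2 * r ^ (-1 - 2 * k)) := by
  fun_prop

lemma cosConst_ne_zero (k : ℝ) : cosConst k ≠ 0 := by
  refine ((setLIntegral_pos_iff (measurable_cos_weight k)).2 ?_).ne'
  have hpos : Set.Ioo (0 : ℝ) 1 ⊆ Function.support
      (fun r : ℝ => ENNReal.ofReal ((2 * Real.cos r - 2) ^ 2 * r ^ (-1 - 2 * k))) ∩ Set.Ioi 0 := by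
    rintro r ⟨hr0, hr1⟩
    have hcos : Real.cos r < 1 := by
      simpa using Real.cos_lt_cos_of_nonneg_of_le_pi le_rfl (by linarith [Real.pi_gt_three]) hr0
    have hsq : 0 < (2 * Real.cos r - 2) ^ 2 := by nlinarith
    exact ⟨(ENNReal.ofReal_pos.2 (by positivity)).ne', hr0⟩
  exact (by simp : (0 : ℝ≥0∞) < volume (Set.Ioo (0 : ℝ) 1)).trans_le (measure_mono hpos)

lemma cosConst_ne_top {k : ℝ} (hk0 : 0 < k) (hk2 : k < 2) : cosConst k ≠ ⊤ := by
  have hmeas (s : Set ℝ) : AEStronglyMeasurable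
      (fun r : ℝ => (2 * Real.cos r - 2) ^ 2 * r ^ (-1 - 2 * k)) (volume.restrict s) := by
    fun_prop
  have near : IntegrableOn (fun r : ℝ => (2 * Real.cos r - 2) ^ 2 * r ^ (-1 - 2 * k))
      (Set.Ioc 0 1) := by
    have hint : IntegrableOn (fun r : ℝ => r ^ (3 - 2 * k)) (Set.Ioc 0 1) :=
      (intervalIntegral.intervalIntegrable_rpow' (by linarith)).1
    refine hint.mono' (hmeas _) ((ae_restrict_iff' measurableSet_Ioc).2 (.of_forall ?_))
    rintro r ⟨hr, -⟩
    have hcos : (2 * Real.cos r - 2) ^ 2 ≤ r ^ 4 := by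
      have := Real.one_sub_sq_div_two_le_cos (x := r)
      nlinarith [Real.cos_le_one r]
    rw [Real.norm_of_nonneg (by positivity)]
    calc _ ≤ r ^ 4 * r ^ (-1 - 2 * k) := by gcongr
      _ = r ^ (3 - 2 * k) := by
        rw [← Real.rpow_natCast, ← Real.rpow_add hr]
        congr 1
        push_cast
        ring
  have far : IntegrableOn (fun r : ℝ => (2 * Real.cos r - 2) ^ 2 * r ^ (-1 - 2 * k))
      (Set.Ioi 1) := by
    have hint := (integrableOn_Ioi_rpow_of_lt (by linarith : -1 - 2 * k < -1) one_pos).const_mul 16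
    refine hint.mono' (hmeas _) ((ae_restrict_iff' measurableSet_Ioi).2 (.of_forall ?_))
    intro r (hr : 1 < r)
    rw [Real.norm_of_nonneg (by positivity)]
    gcongr
    nlinarith [Real.cos_le_one r, Real.neg_one_le_cos r]
  have := near.union far
  rw [Set.Ioc_union_Ioi_eq_Ioi zero_le_one] at this
  exact this.lintegral_lt_top.ne

lemma lintegral_Ioi_comp_mul_left {F : ℝ → ℝ≥0∞} (hF : Measurable F) {s : ℝ} (hs : 0 < s) :
    ∫⁻ r in Set.Ioi 0, F (s * r) = ENNReal.ofReal s⁻¹ * ∫⁻ r in Set.Ioi 0, F r := by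
  have hpre : (s * ·) ⁻¹' Set.Ioi 0 = Set.Ioi (0 : ℝ) := by
    ext r; simp [hs]
  calc ∫⁻ r in Set.Ioi 0, F (s * r)
      = ∫⁻ r in Set.Ioi 0, F r ∂(Measure.map (s * ·) volume) := by
        rw [setLIntegral_map measurableSet_Ioi hF (measurable_const_mul s), hpre]
    _ = _ := by
        rw [Real.map_volume_mul_left hs.ne', Measure.restrict_smul, lintegral_smul_measure,
          abs_of_pos (inv_pos.2 hs), smul_eq_mul]

lemma lintegral_cos_weight {k : ℝ} (hk : 0 < k) (s : ℝ) :
    ∫⁻ r in Set.Ioi 0, ENNReal.ofReal ((2 * Real.cos (r * s) - 2) ^ 2 * r ^ (-1 - 2 * k)) =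
      ENNReal.ofReal (|s| ^ (2 * k)) * cosConst k := by
  rcases eq_or_ne s 0 with rfl | hs
  · simp [Real.zero_rpow (by positivity : 2 * k ≠ 0)]
  have habs : 0 < |s| := abs_pos.2 hs
  have hscale (r : ℝ) (hr : r ∈ Set.Ioi (0 : ℝ)) :
      ENNReal.ofReal ((2 * Real.cos (r * s) - 2) ^ 2 * r ^ (-1 - 2 * k)) =
        ENNReal.ofReal (|s| ^ (1 + 2 * k)) * ENNReal.ofReal
          ((2 * Real.cos (|s| * r) - 2) ^ 2 * (|s| * r) ^ (-1 - 2 * k)) := by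
    have hr0 : 0 < r := hr
    have hcos : Real.cos (|s| * r) = Real.cos (r * s) := by
      rw [← Real.cos_abs (r * s), abs_mul, abs_of_pos hr0, mul_comm]
    have hpow : |s| ^ (1 + 2 * k) * |s| ^ (-1 - 2 * k) = 1 := by
      rw [← Real.rpow_add habs]; ring_nf; exact Real.rpow_zero _
    rw [← ENNReal.ofReal_mul (by positivity), hcos, Real.mul_rpow habs.le hr0.le]
    congr 1
    linear_combination -(2 * Real.cos (r * s) - 2) ^ 2 * r ^ (-1 - 2 * k) * hpow
  have hdilate := lintegral_Ioi_comp_mul_left (measurable_cos_weight k) habs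
  rw [setLIntegral_congr_fun measurableSet_Ioi hscale,
    lintegral_const_mul _ (by fun_prop), hdilate, ← mul_assoc, ← ENNReal.ofReal_mul (by positivity),
    cosConst, Real.rpow_add habs, Real.rpow_one]
  field_simp

variable {α : Type*} [MeasurableSpace α] {μ : Measure α}

lemma eLpNorm_ofReal_mul_le {m₁ m₂ : α → ℝ} (hm₁ : 0 ≤ m₁) (h : m₁ ≤ m₂) (f : α → ℂ)
    (p : ℝ≥0∞) : eLpNorm (fun x => m₁ x * f x) p μ ≤ eLpNorm (fun x => m₂ x * f x) p μ := by
  refine eLpNorm_mono fun x => ?_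
  rw [norm_mul, norm_mul, norm_real, norm_real, Real.norm_of_nonneg (hm₁ x),
    Real.norm_of_nonneg ((hm₁ x).trans (h x))]
  gcongr
  exact h x

lemma eLpNorm_ofReal_mul_sq (c : α → ℝ) (f : α → ℂ) :
    eLpNorm (fun x => c x * f x) 2 μ ^ 2 = ∫⁻ x, ENNReal.ofReal (c x ^ 2) * ‖f x‖ₑ ^ 2 ∂μ := by
  have hpow := eLpNorm_nnreal_pow_eq_lintegral (μ := μ) (f := fun x => c x * f x)
    (two_ne_zero (α := NNReal))
  simp only [ENNReal.coe_ofNat, NNReal.coe_ofNat, ENNReal.rpow_ofNat] at hpow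
  rw [hpow]
  refine lintegral_congr fun x => ?_
  rw [enorm_mul, mul_pow, ← sq_abs, ENNReal.ofReal_pow (abs_nonneg _), ← Real.norm_eq_abs,
    ← Complex.norm_real, ofReal_norm]

lemma aemeasurable_rpow_mul_eLpNorm_cos_sq [SFinite μ] {ν : Measure ℝ} [SFinite ν] (p : ℝ)
    {ℓ : α → ℝ} (hℓ : Measurable ℓ) {f : α → ℂ} (hf : AEMeasurable f μ) :
    AEMeasurable (fun r : ℝ => ENNReal.ofReal (r ^ p) *
      eLpNorm (fun x => (2 * Real.cos (r * ℓ x) - 2 : ℝ) * f x) 2 μ ^ 2) ν := by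
  simp only [eLpNorm_ofReal_mul_sq]
  have : AEMeasurable (fun q : ℝ × α => f q.2) (ν.prod μ) := hf.comp_snd
  have hnorm : AEMeasurable (fun q : ℝ × α =>
      ENNReal.ofReal ((2 * Real.cos (q.1 * ℓ q.2) - 2) ^ 2) * ‖f q.2‖ₑ ^ 2) (ν.prod μ) := by
    fun_prop
  exact (by fun_prop : AEMeasurable (fun r : ℝ => ENNReal.ofReal (r ^ p)) ν).mul
    hnorm.lintegral_prod_right'

theorem lintegral_eLpNorm_cos_sq [SFinite μ] {k : ℝ} (hk : 0 < k) {ℓ : α → ℝ} (hℓ : Measurable ℓ)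
    {f : α → ℂ} (hf : AEMeasurable f μ) :
    ∫⁻ r in Set.Ioi 0, ENNReal.ofReal (r ^ (-1 - 2 * k)) *
        eLpNorm (fun x => (2 * Real.cos (r * ℓ x) - 2 : ℝ) * f x) 2 μ ^ 2 =
      cosConst k * eLpNorm (fun x => (|ℓ x| ^ k : ℝ) * f x) 2 μ ^ 2 := by
  simp only [eLpNorm_ofReal_mul_sq]
  calc _ = ∫⁻ r in Set.Ioi 0, ∫⁻ x, ENNReal.ofReal
          ((2 * Real.cos (r * ℓ x) - 2) ^ 2 * r ^ (-1 - 2 * k)) * ‖f x‖ₑ ^ 2 ∂μ := by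
        refine setLIntegral_congr_fun measurableSet_Ioi fun r hr => ?_
        have hr0 : 0 < r := hr
        rw [← lintegral_const_mul'' _ (by fun_prop)]
        refine lintegral_congr fun x => ?_
        rw [← mul_assoc, ← ENNReal.ofReal_mul (by positivity), mul_comm (r ^ _)]
    _ = ∫⁻ x, (∫⁻ r in Set.Ioi 0, ENNReal.ofReal
          ((2 * Real.cos (r * ℓ x) - 2) ^ 2 * r ^ (-1 - 2 * k))) * ‖f x‖ₑ ^ 2 ∂μ := by
        have : AEMeasurable (fun p : ℝ × α => f p.2)
          ((volume.restrict (Set.Ioi 0)).prod μ) := hf.comp_snd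
        rw [lintegral_lintegral_swap (by fun_prop)]
        refine lintegral_congr fun x => lintegral_mul_const _ (by fun_prop)
    _ = _ := by
        rw [← lintegral_const_mul'' _ (by fun_prop)]
        refine lintegral_congr fun x => ?_
        rw [lintegral_cos_weight hk, mul_comm (ENNReal.ofReal _), mul_assoc, mul_comm 2 k,
          Real.rpow_mul (abs_nonneg _), Real.rpow_two]

end FractionalMoments

section WeightedEstimate

lemma ennreal_add_sq_le (a b : ℝ≥0∞) : (a + b) ^ 2 ≤ 2 * (a ^ 2 + b ^ 2) := by
  simpa [show (2 : ℝ) - 1 = 1 by norm_num] using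
    ENNReal.rpow_add_le_mul_rpow_add_rpow a b one_le_two

lemma rpow_sum_le_card_rpow_mul_sum_rpow {ι : Type*} [Fintype ι] {y : ι → ℝ} (hy : ∀ i, 0 ≤ y i)
    {k : ℝ} (hk : 0 < k) :
    (∑ i, y i) ^ k ≤ (Fintype.card ι : ℝ) ^ k * ∑ i, y i ^ k := by
  have hsum : 0 ≤ ∑ i, y i ^ k := Finset.sum_nonneg fun i _ => Real.rpow_nonneg (hy i) k
  have hle (i : ι) : y i ≤ (∑ j, y j ^ k) ^ k⁻¹ := by
    rw [Real.le_rpow_inv_iff_of_pos (hy i) hsum hk]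
    exact Finset.single_le_sum (f := fun j => y j ^ k)
      (fun j _ => Real.rpow_nonneg (hy j) k) (Finset.mem_univ i)
  calc (∑ i, y i) ^ k ≤ (Fintype.card ι * (∑ j, y j ^ k) ^ k⁻¹) ^ k := by
        gcongr
        · exact Finset.sum_nonneg fun i _ => hy i
        · simpa using Finset.sum_le_card_nsmul Finset.univ y _ fun i _ => hle i
    _ = _ := by
        rw [Real.mul_rpow (by positivity) (by positivity), Real.rpow_inv_rpow hsum hk.ne']

variable {V : Type*} [NormedAddCommGroup V] [InnerProductSpace ℝ V]

lemma rpow_mul_norm_sq_le {ι : Type*} [Fintype ι] (b : OrthonormalBasis ι ℝ V) {k : ℝ}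
    (hk : 0 < k) (c : ℝ) (x : V) :
    ((|c| * ‖x‖) ^ k) ^ 2 ≤ (Fintype.card ι : ℝ) ^ k * ∑ i, (|c * inner ℝ (b i) x| ^ k) ^ 2 := by
  have hexpand : (|c| * ‖x‖) ^ 2 = ∑ i, |c * inner ℝ (b i) x| ^ 2 := by
    simp only [abs_mul, mul_pow, ← Finset.mul_sum, sq_abs, b.sum_sq_inner_right]
  rw [Real.rpow_pow_comm (by positivity), hexpand]
  simp only [Real.rpow_pow_comm (abs_nonneg _)]
  exact rpow_sum_le_card_rpow_mul_sum_rpow (fun i => sq_nonneg _) hk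

variable [MeasurableSpace V]

lemma eLpNorm_inner_rpow_mul_le {μ : Measure V} {k : ℝ} (hk : 0 ≤ k) (c : ℝ) {e : V}
    (he : ‖e‖ ≤ 1) (f : V → ℂ) :
    eLpNorm (fun x => (|c * inner ℝ e x| ^ k : ℝ) * f x) 2 μ ≤
      eLpNorm (fun x => ((|c| * ‖x‖) ^ k : ℝ) * f x) 2 μ := by
  refine eLpNorm_ofReal_mul_le (fun x => by positivity) (fun x => ?_) f 2
  have hinner : |inner ℝ e x| ≤ ‖x‖ :=
    (abs_real_inner_le_norm e x).trans (mul_le_of_le_one_left (norm_nonneg x) he)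
  simp only [abs_mul]
  gcongr

variable [BorelSpace V]

lemma eLpNorm_norm_rpow_mul_sq_le [SecondCountableTopology V] {μ : Measure V} {ι : Type*}
    [Fintype ι] (b : OrthonormalBasis ι ℝ V) {k : ℝ} (hk : 0 < k) (c : ℝ) {f : V → ℂ}
    (hf : AEMeasurable f μ) :
    eLpNorm (fun x => ((|c| * ‖x‖) ^ k : ℝ) * f x) 2 μ ^ 2 ≤
      (Fintype.card ι : ℝ≥0∞) ^ k *
        ∑ i, eLpNorm (fun x => (|c * inner ℝ (b i) x| ^ k : ℝ) * f x) 2 μ ^ 2 := by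
  simp only [eLpNorm_ofReal_mul_sq]
  rw [← lintegral_finsetSum' _ fun i _ => by fun_prop, ← lintegral_const_mul'' _ (by fun_prop)]
  refine lintegral_mono fun x => ?_
  rw [← Finset.sum_mul, ← mul_assoc, ← ENNReal.ofReal_sum_of_nonneg fun i _ => sq_nonneg _,
    ← ENNReal.ofReal_natCast, ENNReal.ofReal_rpow_of_nonneg (by positivity) hk.le,
    ← ENNReal.ofReal_mul (by positivity)]
  gcongr
  exact rpow_mul_norm_sq_le b hk c x

variable [FiniteDimensional ℝ V] {g : V → ℂ}

lemma eLpNorm_cos_mul_fourierInv_modulate_le (hg : Integrable g) (hg2 : MemLp g 2) (s : ℝ)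
    (e : V) (r : ℝ) :
    eLpNorm (fun x => (2 * Real.cos (r * (2 * Real.pi * inner ℝ e x)) - 2 : ℝ) *
        𝓕⁻ (modulate (fun ξ => s * ‖ξ‖ ^ 2) g) x) 2 ≤
      42 * (eLpNorm (fun ξ => (2 * Real.cos (r * (s * inner ℝ e ξ)) - 2 : ℝ) * g ξ) 2 +
        eLpNorm (fun x => (2 * Real.cos (r * (2 * Real.pi * inner ℝ e x)) - 2 : ℝ) *
          𝓕⁻ g x) 2) := by
  have hphase : Measurable fun ξ : V => s * ‖ξ‖ ^ 2 := by fun_prop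
  have hmod := integrable_modulate hphase hg
  have hdiff := eLpNorm_centralDiff_modulate_norm_sq_le s (r • e) hg2
  rw [eLpNorm_centralDiff hmod (memLp_modulate hphase hg2), eLpNorm_centralDiff hg hg2] at hdiff
  simpa only [real_inner_smul_left, mul_left_comm _ r] using hdiff

lemma eLpNorm_inner_rpow_mul_fourierInv_modulate_sq_le {k : ℝ} (hk0 : 0 < k) (hk2 : k < 2)
    (hg : Integrable g) (hg2 : MemLp g 2) (s : ℝ) (e : V) :
    eLpNorm (fun x => (|2 * Real.pi * inner ℝ e x| ^ k : ℝ) *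
        𝓕⁻ (modulate (fun ξ => s * ‖ξ‖ ^ 2) g) x) 2 ^ 2 ≤
      3528 * (eLpNorm (fun ξ => (|s * inner ℝ e ξ| ^ k : ℝ) * g ξ) 2 ^ 2 +
        eLpNorm (fun x => (|2 * Real.pi * inner ℝ e x| ^ k : ℝ) * 𝓕⁻ g x) 2 ^ 2) := by
  have hphase : Measurable fun ξ : V => s * ‖ξ‖ ^ 2 := by fun_prop
  have hmod := integrable_modulate hphase hg
  have hmeas {f : V → ℂ} (hf : Integrable f) : AEMeasurable (𝓕⁻ f) :=
    (continuous_fourierInv_of_integrable hf).aemeasurable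
  have hinner (c : ℝ) : Measurable fun x : V => c * inner ℝ e x := by fun_prop
  rw [← ENNReal.mul_le_mul_iff_right (cosConst_ne_zero k) (cosConst_ne_top hk0 hk2),
    mul_left_comm, mul_add, ← lintegral_eLpNorm_cos_sq hk0 (hinner _) (hmeas hmod),
    ← lintegral_eLpNorm_cos_sq hk0 (hinner _) hg.1.aemeasurable,
    ← lintegral_eLpNorm_cos_sq hk0 (hinner _) (hmeas hg)]
  rw [← lintegral_add_left' (aemeasurable_rpow_mul_eLpNorm_cos_sq _ (hinner s)
      hg.1.aemeasurable), ← lintegral_const_mul' _ _ (by norm_num)]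
  refine lintegral_mono fun r => ?_
  rw [← mul_add, mul_left_comm]
  gcongr
  refine (pow_le_pow_left₀ bot_le
    (eLpNorm_cos_mul_fourierInv_modulate_le hg hg2 s e r) 2).trans ?_
  rw [mul_pow, show (3528 : ℝ≥0∞) = 42 ^ 2 * 2 by norm_num, mul_assoc]
  gcongr
  exact ennreal_add_sq_le _ _

theorem eLpNorm_norm_rpow_mul_fourierInv_modulate_sq_le {k : ℝ} (hk0 : 0 < k) (hk2 : k < 2)
    (hg : Integrable g) (hg2 : MemLp g 2) (s : ℝ) :
    eLpNorm (fun x => ((2 * Real.pi * ‖x‖) ^ k : ℝ) *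
        𝓕⁻ (modulate (fun ξ => s * ‖ξ‖ ^ 2) g) x) 2 ^ 2 ≤
      3528 * (Module.finrank ℝ V : ℝ≥0∞) ^ k * Module.finrank ℝ V *
        (eLpNorm (fun ξ => ((|s| * ‖ξ‖) ^ k : ℝ) * g ξ) 2 ^ 2 +
          eLpNorm (fun x => ((2 * Real.pi * ‖x‖) ^ k : ℝ) * 𝓕⁻ g x) 2 ^ 2) := by
  have hphase : Measurable fun ξ : V => s * ‖ξ‖ ^ 2 := by fun_prop
  have hmod := integrable_modulate hphase hg
  have hpi : |2 * Real.pi| = 2 * Real.pi := abs_of_pos Real.two_pi_pos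
  set b := stdOrthonormalBasis ℝ V
  set A := eLpNorm (fun ξ => ((|s| * ‖ξ‖) ^ k : ℝ) * g ξ) 2
  set B := eLpNorm (fun x => ((2 * Real.pi * ‖x‖) ^ k : ℝ) * 𝓕⁻ g x) 2
  have hcoord := eLpNorm_norm_rpow_mul_sq_le b hk0 (2 * Real.pi)
    (continuous_fourierInv_of_integrable hmod).aemeasurable (μ := volume)
  have hdir (i) : eLpNorm (fun x => (|2 * Real.pi * inner ℝ (b i) x| ^ k : ℝ) *
      𝓕⁻ (modulate (fun ξ => s * ‖ξ‖ ^ 2) g) x) 2 ^ 2 ≤ 3528 * (A ^ 2 + B ^ 2) := by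
    have hA := eLpNorm_inner_rpow_mul_le (μ := volume) hk0.le s (b.norm_eq_one i).le g
    have hB := eLpNorm_inner_rpow_mul_le (μ := volume) hk0.le (2 * Real.pi)
      (b.norm_eq_one i).le (𝓕⁻ g)
    rw [hpi] at hB
    exact (eLpNorm_inner_rpow_mul_fourierInv_modulate_sq_le hk0 hk2 hg hg2 s (b i)).trans
      (by gcongr)
  rw [hpi, Fintype.card_fin] at hcoord
  refine hcoord.trans ?_
  calc _ ≤ (Module.finrank ℝ V : ℝ≥0∞) ^ k *
        ∑ _i : Fin (Module.finrank ℝ V), 3528 * (A ^ 2 + B ^ 2) := by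
        gcongr with i
        exact hdir i
    _ = _ := by
        rw [Finset.sum_const, Finset.card_univ, Fintype.card_fin, nsmul_eq_mul]
        ring

variable (V) in
theorem exists_eLpNorm_norm_rpow_mul_fourierInv_modulate_le {k : ℝ} (hk0 : 0 < k)
    (hk2 : k < 2) :
    ∃ C : NNReal, ∀ (s : ℝ) (g : V → ℂ), Integrable g → MemLp g 2 →
      eLpNorm (fun x => ((2 * Real.pi * ‖x‖) ^ k : ℝ) *
          𝓕⁻ (modulate (fun ξ => s * ‖ξ‖ ^ 2) g) x) 2 ≤
        C * (eLpNorm (fun ξ => ((|s| * ‖ξ‖) ^ k : ℝ) * g ξ) 2 +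
          eLpNorm (fun x => ((2 * Real.pi * ‖x‖) ^ k : ℝ) * 𝓕⁻ g x) 2) := by
  refine ⟨NNReal.sqrt (3528 * (Module.finrank ℝ V : NNReal) ^ k * Module.finrank ℝ V),
    fun s g hg hg2 => ?_⟩
  rw [← ENNReal.pow_le_pow_left_iff two_ne_zero, mul_pow, ← ENNReal.coe_pow, NNReal.sq_sqrt]
  refine (eLpNorm_norm_rpow_mul_fourierInv_modulate_sq_le hk0 hk2 hg hg2 s).trans ?_
  push_cast [ENNReal.coe_rpow_of_nonneg _ hk0.le]
  gcongr
  exact pow_add_pow_le bot_le bot_le two_ne_zero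

end WeightedEstimate

section Schwartz

lemma hasTemperateGrowth_exp_ofReal_mul_I_s8 :
    Function.HasTemperateGrowth fun r : ℝ => cexp (r * I) := by
  have hderiv (m : ℕ) : iteratedDeriv m (fun r : ℝ => cexp (r * I)) =
      fun r : ℝ => I ^ m * cexp (r * I) := by
    induction m with
    | zero => simp
    | succ m ih =>
      rw [iteratedDeriv_succ, ih]
      ext r
      have hexp := ((ofRealCLM.hasDerivAt (x := r)).mul_const I).cexp.const_mul (I ^ m)
      refine hexp.deriv.trans ?_
      simp only [ofRealCLM_apply, ofReal_one]
      ring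
  refine ⟨(ofRealCLM.contDiff.mul contDiff_const).cexp, fun m => ⟨0, 1, fun r => ?_⟩⟩
  rw [norm_iteratedFDeriv_eq_norm_iteratedDeriv, hderiv, norm_mul, norm_pow, norm_I, one_pow,
    norm_exp_ofReal_mul_I, pow_zero]

variable {V : Type*} [NormedAddCommGroup V] [InnerProductSpace ℝ V]

lemma exists_schwartzMap_eq_modulate_norm_sq (s : ℝ) (g : SchwartzMap V ℂ) :
    ∃ h : SchwartzMap V ℂ, ⇑h = modulate (fun ξ => s * ‖ξ‖ ^ 2) g := by
  have htemp : Function.HasTemperateGrowth fun ξ : V => cexp ((s * ‖ξ‖ ^ 2 : ℝ) * I) :=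
    hasTemperateGrowth_exp_ofReal_mul_I_s8.comp (g := fun r : ℝ => cexp (r * I))
      (f := fun ξ : V => s * ‖ξ‖ ^ 2)
      ((Function.HasTemperateGrowth.const s).mul (Function.hasTemperateGrowth_norm_sq V))
  exact ⟨SchwartzMap.smulLeftCLM ℂ _ g, SchwartzMap.smulLeftCLM_apply htemp g⟩

variable [FiniteDimensional ℝ V] [MeasurableSpace V] [BorelSpace V]

lemma fourierInv_fourier_schwartzMap (v : SchwartzMap V ℂ) : 𝓕⁻ (𝓕 (v : V → ℂ)) = v := by
  rw [← SchwartzMap.fourier_coe, ← SchwartzMap.fourierInv_coe,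
    FourierTransform.fourierInv_fourier_eq]

lemma memLp_mul_schwartzMap {m : V → ℝ} (hm : Continuous m) {C q : ℝ}
    (hbound : ∀ x, |m x| ≤ C * (1 + ‖x‖ ^ 2) ^ q) (g : SchwartzMap V ℂ) (p : ℝ≥0∞) :
    MemLp (fun x => m x * g x) p := by
  have htemp := Function.hasTemperateGrowth_one_add_norm_sq_rpow V q
  have hdom := (SchwartzMap.smulLeftCLM ℂ (fun x : V => (1 + ‖x‖ ^ 2) ^ q) g).memLp p
  have hcont : Continuous fun x => m x * g x := by fun_prop
  refine (hdom.const_mul (C : ℂ)).mono hcont.aestronglyMeasurable (.of_forall fun x => ?_)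
  rw [SchwartzMap.smulLeftCLM_apply_apply htemp, norm_mul, norm_mul, norm_smul, ← mul_assoc,
    norm_real, norm_real, ← norm_mul]
  gcongr
  exact (hbound x).trans (le_abs_self _)

lemma eLpNorm_fourierInv_mul_schwartzMap {m : V → ℝ} (hm : Continuous m) {C q : ℝ}
    (hbound : ∀ x, |m x| ≤ C * (1 + ‖x‖ ^ 2) ^ q) (g : SchwartzMap V ℂ) :
    eLpNorm (𝓕⁻ fun ξ => m ξ * g ξ) 2 = eLpNorm (fun ξ => m ξ * g ξ) 2 :=
  eLpNorm_fourierInv_eq_s8 (memLp_one_iff_integrable.1 (memLp_mul_schwartzMap hm hbound g 1))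
    (memLp_mul_schwartzMap hm hbound g 2)

end Schwartz

section Weights

variable {k : ℝ}

lemma sq_rpow_half (k : ℝ) {y : ℝ} (hy : 0 ≤ y) : (y ^ 2) ^ (k / 2) = y ^ k := by
  rw [← Real.rpow_two, ← Real.rpow_mul hy, mul_div_cancel₀ k two_ne_zero]

lemma one_add_sq_rpow_le_one_add_rpow (hk0 : 0 ≤ k) (hk2 : k ≤ 2) {y : ℝ} (hy : 0 ≤ y) :
    (1 + y ^ 2) ^ (k / 2) ≤ 1 + y ^ k := by
  simpa only [Real.one_rpow, sq_rpow_half k hy] using Real.rpow_add_le_add_rpow zero_le_one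
    (sq_nonneg y) (by positivity : 0 ≤ k / 2) (by linarith)

lemma rpow_le_one_add_sq_rpow (hk : 0 ≤ k) {y : ℝ} (hy : 0 ≤ y) :
    y ^ k ≤ (1 + y ^ 2) ^ (k / 2) := by
  rw [← sq_rpow_half k hy]
  gcongr
  linarith

lemma one_add_two_pi_mul_sq_rpow_le (hk : 0 ≤ k) (y : ℝ) :
    (1 + (2 * Real.pi * y) ^ 2) ^ (k / 2) ≤
      ((2 * Real.pi) ^ 2) ^ (k / 2) * (1 + y ^ 2) ^ (k / 2) := by
  rw [← Real.mul_rpow (by positivity) (by positivity)]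
  gcongr
  nlinarith [Real.pi_gt_three]

section

variable {α : Type*} [MeasurableSpace α] {μ : Measure α}

lemma eLpNorm_const_mul_ofReal_mul {c : ℝ} (hc : 0 ≤ c) (m : α → ℝ) (f : α → ℂ) :
    eLpNorm (fun x => (c * m x : ℝ) * f x) 2 μ =
      ENNReal.ofReal c * eLpNorm (fun x => m x * f x) 2 μ := by
  have hsmul : (fun x => ((c * m x : ℝ) : ℂ) * f x) = (c : ℂ) • fun x => m x * f x := by
    ext x
    simp only [ofReal_mul, Pi.smul_apply, smul_eq_mul, mul_assoc]
  rw [hsmul, eLpNorm_const_smul, ← ofReal_norm, norm_real, Real.norm_of_nonneg hc]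

lemma eLpNorm_ofReal_mul_modulate (m θ : α → ℝ) (f : α → ℂ) :
    eLpNorm (fun x => m x * modulate θ f x) 2 μ = eLpNorm (fun x => m x * f x) 2 μ :=
  eLpNorm_congr_norm_ae (.of_forall fun x => by simp only [norm_mul, norm_modulate])

end

lemma eLpNorm_one_add_norm_sq_rpow_mul_le {V : Type*} [NormedAddCommGroup V] [MeasurableSpace V]
    [BorelSpace V] {μ : Measure V} (hk0 : 0 ≤ k) (hk2 : k ≤ 2) {f : V → ℂ}
    (hf : AEStronglyMeasurable f μ) :
    eLpNorm (fun x => ((1 + ‖x‖ ^ 2) ^ (k / 2) : ℝ) * f x) 2 μ ≤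
      eLpNorm f 2 μ + eLpNorm (fun x => ((2 * Real.pi * ‖x‖) ^ k : ℝ) * f x) 2 μ := by
  have hweight (x : V) : (1 + ‖x‖ ^ 2) ^ (k / 2) ≤ 1 + (2 * Real.pi * ‖x‖) ^ k := by
    refine (one_add_sq_rpow_le_one_add_rpow hk0 hk2 (norm_nonneg x)).trans ?_
    gcongr
    nlinarith [Real.pi_gt_three, norm_nonneg x]
  refine (eLpNorm_ofReal_mul_le (fun x => by positivity) hweight f 2).trans ?_
  have hmeas : Measurable fun x : V => (((2 * Real.pi * ‖x‖) ^ k : ℝ) : ℂ) := by fun_prop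
  simp only [ofReal_add, ofReal_one, add_mul, one_mul]
  exact eLpNorm_add_le hf (hmeas.aestronglyMeasurable.mul hf) one_le_two

end Weights

section FreeEvolution

variable {n : ℕ} {k : ℝ}

lemma Ufree_eq_fourierInv_modulate (t : ℝ) (f : Vn n → ℂ) :
    Ufree n t f = 𝓕⁻ (modulate (fun ξ => -2 * Real.pi ^ 2 * t * ‖ξ‖ ^ 2) (𝓕 f)) := by
  rw [Ufree]
  congr 1
  ext ξ
  rw [modulate]
  congr 2
  push_cast
  ring

lemma exists_schwartzMap_eq_Ufree (t : ℝ) (v : SchwartzMap (Vn n) ℂ) :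
    ∃ u : SchwartzMap (Vn n) ℂ, Ufree n t v = u ∧
      𝓕 (u : Vn n → ℂ) =
        modulate (fun ξ => -2 * Real.pi ^ 2 * t * ‖ξ‖ ^ 2) (𝓕 (v : Vn n → ℂ)) := by
  obtain ⟨h, hh⟩ := exists_schwartzMap_eq_modulate_norm_sq (-2 * Real.pi ^ 2 * t) (𝓕 v)
  rw [SchwartzMap.fourier_coe] at hh
  refine ⟨𝓕⁻ h, ?_, ?_⟩
  · rw [Ufree_eq_fourierInv_modulate, SchwartzMap.fourierInv_coe, hh]
  · rw [← SchwartzMap.fourier_coe, FourierTransform.fourier_fourierInv_eq, hh]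

lemma eLpNorm_japMul (hk : 0 ≤ k) (v : SchwartzMap (Vn n) ℂ) :
    eLpNorm (japMul n k v) 2 =
      eLpNorm (fun ξ => ((1 + (2 * Real.pi * ‖ξ‖) ^ 2) ^ (k / 2) : ℝ) * 𝓕 (v : Vn n → ℂ) ξ) 2 := by
  rw [japMul, ← SchwartzMap.fourier_coe]
  refine eLpNorm_fourierInv_mul_schwartzMap (C := ((2 * Real.pi) ^ 2) ^ (k / 2)) (q := k / 2)
    (Continuous.rpow_const (by fun_prop) fun _ => .inr (by positivity)) (fun ξ => ?_) (𝓕 v)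
  rw [abs_of_nonneg (by positivity)]
  exact one_add_two_pi_mul_sq_rpow_le hk ‖ξ‖

lemma eLpNorm_omMul (hk : 0 ≤ k) (v : SchwartzMap (Vn n) ℂ) :
    eLpNorm (omMul n k v) 2 =
      eLpNorm (fun ξ => ((2 * Real.pi * ‖ξ‖) ^ k : ℝ) * 𝓕 (v : Vn n → ℂ) ξ) 2 := by
  rw [omMul, ← SchwartzMap.fourier_coe]
  refine eLpNorm_fourierInv_mul_schwartzMap (C := ((2 * Real.pi) ^ 2) ^ (k / 2)) (q := k / 2)
    (Continuous.rpow_const (by fun_prop) fun _ => .inr hk) (fun ξ => ?_) (𝓕 v)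
  rw [abs_of_nonneg (by positivity)]
  exact (rpow_le_one_add_sq_rpow hk (by positivity)).trans (one_add_two_pi_mul_sq_rpow_le hk ‖ξ‖)

lemma eLpNorm_omMul_le_SigkNorm (hk : 0 ≤ k) (v : SchwartzMap (Vn n) ℂ) :
    eLpNorm (omMul n k v) 2 ≤ SigkNorm n k v := by
  refine le_sup_of_le_left ?_
  rw [eLpNorm_omMul hk, eLpNorm_japMul hk]
  exact eLpNorm_ofReal_mul_le (fun ξ => by positivity)
    (fun ξ => rpow_le_one_add_sq_rpow hk (by positivity)) _ 2

lemma eLpNorm_japMul_Ufree (hk : 0 ≤ k) (t : ℝ) (v : SchwartzMap (Vn n) ℂ) :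
    eLpNorm (japMul n k (Ufree n t v)) 2 = eLpNorm (japMul n k v) 2 := by
  obtain ⟨u, hu, hfu⟩ := exists_schwartzMap_eq_Ufree t v
  rw [hu, eLpNorm_japMul hk, eLpNorm_japMul hk, hfu, eLpNorm_ofReal_mul_modulate]

lemma eLpNorm_Ufree (t : ℝ) (v : SchwartzMap (Vn n) ℂ) :
    eLpNorm (Ufree n t v) 2 = eLpNorm v 2 := by
  have hg := (𝓕 v).integrable (μ := volume)
  have hg2 := (𝓕 v).memLp 2
  have hphase : Measurable fun ξ : Vn n => -2 * Real.pi ^ 2 * t * ‖ξ‖ ^ 2 := by fun_prop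
  rw [Ufree_eq_fourierInv_modulate, ← SchwartzMap.fourier_coe,
    eLpNorm_fourierInv_eq_s8 (integrable_modulate hphase hg) (memLp_modulate hphase hg2),
    eLpNorm_modulate, ← eLpNorm_fourierInv_eq_s8 hg hg2, SchwartzMap.fourier_coe,
    fourierInv_fourier_schwartzMap]

lemma eLpNorm_schrodinger_phase_rpow_mul_fourier (hk : 0 ≤ k) (t : ℝ) (v : SchwartzMap (Vn n) ℂ) :
    eLpNorm (fun ξ => ((|-2 * Real.pi ^ 2 * t| * ‖ξ‖) ^ k : ℝ) * 𝓕 (v : Vn n → ℂ) ξ) 2 =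
      ENNReal.ofReal (Real.pi ^ k) * (ENNReal.ofReal (|t| ^ k) * eLpNorm (omMul n k v) 2) := by
  have hscale (ξ : Vn n) : (|-2 * Real.pi ^ 2 * t| * ‖ξ‖) ^ k =
      Real.pi ^ k * |t| ^ k * (2 * Real.pi * ‖ξ‖) ^ k := by
    rw [← Real.mul_rpow (by positivity) (by positivity),
      ← Real.mul_rpow (by positivity) (by positivity), abs_mul, abs_mul, abs_pow, abs_neg,
      abs_two, abs_of_pos Real.pi_pos]
    congr 1
    ring
  simp only [hscale]
  rw [eLpNorm_const_mul_ofReal_mul (by positivity), ENNReal.ofReal_mul (by positivity), mul_assoc,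
    eLpNorm_omMul hk]

lemma eLpNorm_two_pi_norm_rpow_mul_le (hk : 0 ≤ k) (f : Vn n → ℂ) :
    eLpNorm (fun x => ((2 * Real.pi * ‖x‖) ^ k : ℝ) * f x) 2 ≤
      ENNReal.ofReal ((2 * Real.pi) ^ k) *
        eLpNorm (fun x => ((1 + ‖x‖ ^ 2) ^ (k / 2) : ℝ) * f x) 2 := by
  rw [← eLpNorm_const_mul_ofReal_mul (by positivity)]
  refine eLpNorm_ofReal_mul_le (fun x => by positivity) (fun x => ?_) f 2
  simp only [Real.mul_rpow Real.two_pi_pos.le (norm_nonneg x)]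
  gcongr
  exact rpow_le_one_add_sq_rpow hk (norm_nonneg x)

lemma eLpNorm_le_eLpNorm_one_add_norm_sq_rpow_mul (hk : 0 ≤ k) (f : Vn n → ℂ) :
    eLpNorm f 2 ≤ eLpNorm (fun x => ((1 + ‖x‖ ^ 2) ^ (k / 2) : ℝ) * f x) 2 := by
  simpa only [ofReal_one, one_mul] using eLpNorm_ofReal_mul_le (m₁ := fun _ : Vn n => 1)
    (fun _ => zero_le_one) (fun x => Real.one_le_rpow (by simp) (by positivity)) f 2

lemma eLpNorm_one_add_norm_sq_rpow_mul_Ufree_le (hk0 : 0 ≤ k) (hk2 : k ≤ 2) (t : ℝ)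
    (v : SchwartzMap (Vn n) ℂ) :
    eLpNorm (fun x => ((1 + ‖x‖ ^ 2) ^ (k / 2) : ℝ) * Ufree n t v x) 2 ≤
      eLpNorm (fun x => ((1 + ‖x‖ ^ 2) ^ (k / 2) : ℝ) * v x) 2 +
        eLpNorm (fun x => ((2 * Real.pi * ‖x‖) ^ k : ℝ) * Ufree n t v x) 2 := by
  obtain ⟨u, hu, -⟩ := exists_schwartzMap_eq_Ufree t v
  have hmeas : AEStronglyMeasurable (Ufree n t v) := hu ▸ u.continuous.aestronglyMeasurable
  refine (eLpNorm_one_add_norm_sq_rpow_mul_le hk0 hk2 hmeas).trans ?_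
  rw [eLpNorm_Ufree]
  gcongr
  exact eLpNorm_le_eLpNorm_one_add_norm_sq_rpow_mul hk0 v

theorem exists_eLpNorm_one_add_norm_sq_rpow_mul_Ufree_le (n : ℕ) (hk0 : 0 < k) (hk2 : k < 2) :
    ∃ C : NNReal, ∀ (t : ℝ) (v : SchwartzMap (Vn n) ℂ),
      eLpNorm (fun x => ((1 + ‖x‖ ^ 2) ^ (k / 2) : ℝ) * Ufree n t v x) 2 ≤
        (1 + C) * (eLpNorm (fun x => ((1 + ‖x‖ ^ 2) ^ (k / 2) : ℝ) * v x) 2 +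
          ENNReal.ofReal (|t| ^ k) * eLpNorm (omMul n k v) 2) := by
  obtain ⟨C, hC⟩ := exists_eLpNorm_norm_rpow_mul_fourierInv_modulate_le (Vn n) hk0 hk2
  refine ⟨C * Real.toNNReal ((2 * Real.pi) ^ k), fun t v => ?_⟩
  have hweyl := hC (-2 * Real.pi ^ 2 * t) _ (𝓕 v).integrable ((𝓕 v).memLp 2)
  rw [SchwartzMap.fourier_coe, ← Ufree_eq_fourierInv_modulate,
    eLpNorm_schrodinger_phase_rpow_mul_fourier hk0.le, fourierInv_fourier_schwartzMap] at hweyl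
  have hpi : ENNReal.ofReal (Real.pi ^ k) ≤ ENNReal.ofReal ((2 * Real.pi) ^ k) := by
    gcongr
    linarith [Real.pi_pos]
  have hmoment := eLpNorm_two_pi_norm_rpow_mul_le hk0.le v
  refine (eLpNorm_one_add_norm_sq_rpow_mul_Ufree_le hk0.le hk2.le t v).trans ?_
  rw [ENNReal.coe_mul, ENNReal.ofNNReal_toNNReal]
  generalize eLpNorm (fun x => ((1 + ‖x‖ ^ 2) ^ (k / 2) : ℝ) * v x) 2 = S at *
  generalize ENNReal.ofReal (|t| ^ k) * eLpNorm (omMul n k v) 2 = T at *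
  generalize ENNReal.ofReal ((2 * Real.pi) ^ k) = P at *
  calc _ ≤ S + C * (P * T + P * S) := by
        gcongr
        exact hweyl.trans (by gcongr)
    _ ≤ S + C * (P * T + P * S) + T := le_self_add
    _ = (1 + C * P) * (S + T) := by ring

theorem exists_SigkNorm_Ufree_le (n : ℕ) (hk0 : 0 < k) (hk2 : k < 2) :
    ∃ C : NNReal, ∀ (t : ℝ) (v : SchwartzMap (Vn n) ℂ),
      SigkNorm n k (Ufree n t v) ≤
        (1 + C) * (SigkNorm n k v + ENNReal.ofReal (|t| ^ k) * eLpNorm (omMul n k v) 2) := by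
  obtain ⟨C, hC⟩ := exists_eLpNorm_one_add_norm_sq_rpow_mul_Ufree_le n hk0 hk2
  refine ⟨C, fun t v => sup_le ?_ ((hC t v).trans ?_)⟩
  · rw [eLpNorm_japMul_Ufree hk0.le]
    calc _ ≤ SigkNorm n k v := le_sup_left
      _ ≤ 1 * (SigkNorm n k v + ENNReal.ofReal (|t| ^ k) * eLpNorm (omMul n k v) 2) := by
          rw [one_mul]
          exact le_self_add
      _ ≤ _ := by
          gcongr
          exact le_self_add
  · gcongr
    exact le_sup_right

lemma SigkNorm_add_le (hk : 0 ≤ k) (t : ℝ) (v : SchwartzMap (Vn n) ℂ) :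
    SigkNorm n k v + ENNReal.ofReal (|t| ^ k) * eLpNorm (omMul n k v) 2 ≤
      2 * ENNReal.ofReal ((1 + |t|) ^ k) * SigkNorm n k v := by
  have hone : (1 : ℝ≥0∞) ≤ ENNReal.ofReal ((1 + |t|) ^ k) :=
    ENNReal.one_le_ofReal.2 (Real.one_le_rpow (by simp) hk)
  have hpow : ENNReal.ofReal (|t| ^ k) ≤ ENNReal.ofReal ((1 + |t|) ^ k) := by
    gcongr
    linarith
  calc _ ≤ ENNReal.ofReal ((1 + |t|) ^ k) * SigkNorm n k v +
        ENNReal.ofReal ((1 + |t|) ^ k) * SigkNorm n k v := by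
        gcongr
        · exact le_mul_of_one_le_left bot_le hone
        · exact eLpNorm_omMul_le_SigkNorm hk v
    _ = _ := by ring

end FreeEvolution

theorem stmt_8_general (n : ℕ) (k : ℝ) (hk0 : 0 < k) (hk2 : k < 2) :
    ∃ C : ℝ, 0 < C ∧ ∀ (t : ℝ) (v : SchwartzMap (Vn n) ℂ),
      SigkNorm n k (Ufree n t (fun y => v y))
          ≤ ENNReal.ofReal C * (SigkNorm n k (fun y => v y)
              + ENNReal.ofReal (|t| ^ k) * eLpNorm (omMul n k (fun y => v y)) 2 volume)
      ∧ SigkNorm n k (Ufree n t (fun y => v y))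
          ≤ ENNReal.ofReal (C * (1 + |t|) ^ k) * SigkNorm n k (fun y => v y) := by
  obtain ⟨C, hC⟩ := exists_SigkNorm_Ufree_le n hk0 hk2
  have hconst : ENNReal.ofReal (2 * (1 + C)) = (1 + C) * 2 := by
    rw [mul_comm, ENNReal.ofReal_mul (by positivity), ENNReal.ofReal_add zero_le_one C.coe_nonneg,
      ENNReal.ofReal_one, ENNReal.ofReal_coe_nnreal, ENNReal.ofReal_ofNat]
  refine ⟨2 * (1 + C), by positivity, fun t v => ⟨(hC t v).trans ?_, (hC t v).trans ?_⟩⟩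
  · rw [hconst]
    gcongr
    exact le_mul_of_one_le_right bot_le one_le_two
  · rw [ENNReal.ofReal_mul (by positivity), hconst]
    calc _ ≤ (1 + C) * (2 * ENNReal.ofReal ((1 + |t|) ^ k) * SigkNorm n k v) := by
          gcongr
          exact SigkNorm_add_le hk0.le t v
      _ = _ := by ring

/-- Lemma A.2: for `n ≥ 1`, `1 < k < 2` there is `C` such that for all `t ∈ ℝ` and Schwartz
`v`: `‖U(t)v;Σ^k‖ ≤ C(‖v;Σ^k‖ + |t|^k ‖ω^k v‖₂) ≤ C(1+|t|)^k ‖v;Σ^k‖`. -/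
theorem stmt_8 (n : ℕ) (hn : 1 ≤ n) (k : ℝ) (hk1 : 1 < k) (hk2 : k < 2) :
    ∃ C : ℝ, 0 < C ∧ ∀ (t : ℝ) (v : SchwartzMap (Vn n) ℂ),
      SigkNorm n k (Ufree n t (fun y => v y))
          ≤ ENNReal.ofReal C * (SigkNorm n k (fun y => v y)
              + ENNReal.ofReal (|t| ^ k) * eLpNorm (omMul n k (fun y => v y)) 2 volume)
      ∧ SigkNorm n k (Ufree n t (fun y => v y))
          ≤ ENNReal.ofReal (C * (1 + |t|) ^ k) * SigkNorm n k (fun y => v y) :=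
  stmt_8_general n k (by linarith) hk2
end
end

section
/- In ℝ², let 1 < k < 2, t > 0, and define for ℂ²-valued v₁, v₂ the function B̌(v₁,v₂) = 2t^{−1} x_j Δ^{−1}∂_k Im(v̄_{1k} v_{2j} + v̄_{2k} v_{1j}). Then B̌(v₁,v₂) = 2t^{−1} Δ^{−1}∂_k Im(v̄_{1k} (x·v₂) + v̄_{2k} (x·v₁)), i.e. the multiplication by x_j may be commuted inside Δ^{−1}∂_k at the cost of replacing v_{ij} by x·v_i. -/
open MeasureTheory Complex
open scoped FourierTransform ENNReal

noncomputable section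

abbrev V2 := EuclideanSpace ℝ (Fin 2)

/-- `Δ^{−1}∂_k` on `ℝ²`, the Fourier multiplier `−iξ_k/|ξ|²` (here `−iξ_k/(2π|ξ|²)` with
Mathlib's Fourier normalization). -/
def invLapDeriv (k : Fin 2) (f : V2 → ℂ) : V2 → ℂ :=
  𝓕⁻ (fun ξ => (-Complex.I * (ξ k : ℂ)) / ((2 * Real.pi * ‖ξ‖ ^ 2 : ℝ) : ℂ) * 𝓕 f ξ)

/-!
The commutator `[x_a, Δ⁻¹∂_b]` is symmetric in `a` and `b`, hence it vanishes when contracted with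
`Im(v̄_{1k} v_{2j} + v̄_{2k} v_{1j})`, which is antisymmetric in `j` and `k`.

On the Fourier side the commutator is the `ξ_a`-derivative of the symbol `σ_b ∼ ξ_b |ξ|⁻²`, so its
symmetry says that the rotation field `ξ_b ∂_a - ξ_a ∂_b` annihilates the radial weight `|ξ|⁻²`.
In weak form this is the invariance of Lebesgue measure under rotations: the integral of a radial
weight times the derivative of `h` along the field is the integral of a derivative along the flow.
-/

section MeasurePreserving

variable {α β G : Type*} [MeasurableSpace α] [MeasurableSpace β] [NormedAddCommGroup G]
  [NormedSpace ℝ G] {μ : Measure α}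

theorem integral_comp_of_measurePreserving {ν : Measure β} {φ : α → β}
    (hφ : MeasurePreserving φ μ ν) {f : β → G} (hf : AEStronglyMeasurable f ν) :
    ∫ x, f (φ x) ∂μ = ∫ y, f y ∂ν := by
  rw [← integral_map hφ.aemeasurable (hφ.map_eq.symm ▸ hf), hφ.map_eq]

theorem integral_integral_comp_of_measurePreserving [CompleteSpace G] [SFinite μ]
    {ν : Measure β} [IsProbabilityMeasure ν] {φ : β → α → α}
    (hφ : Measurable (Function.uncurry φ)) (hφμ : ∀ s, MeasurePreserving (φ s) μ μ)
    {f : α → G} (hf : Integrable f μ) :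
    ∫ x, ∫ s, f (φ s x) ∂ν ∂μ = ∫ x, f x ∂μ := by
  have hskew : MeasurePreserving (fun p : β × α => (p.1, φ p.1 p.2)) (ν.prod μ) (ν.prod μ) :=
    (MeasurePreserving.id ν).skew_product hφ (.of_forall fun s => (hφμ s).map_eq)
  have hint : Integrable (fun p : β × α => f (φ p.1 p.2)) (ν.prod μ) :=
    hskew.integrable_comp_of_integrable (hf.comp_snd ν)
  rw [← integral_integral_swap hint]
  simp [fun s => integral_comp_of_measurePreserving (hφμ s) hf.1]

end MeasurePreserving

section RadialWeight

variable {E G : Type*} [NormedAddCommGroup E] [MeasurableSpace E] [BorelSpace E]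
  [NormedAddCommGroup G] [NormedSpace ℝ G]

theorem integrable_radial_smul_of_abs_le [ProperSpace E] {μ : Measure E}
    [IsFiniteMeasureOnCompacts μ] {w : ℝ → ℝ} (hw : Measurable w) {C R : ℝ}
    (hwC : ∀ r, |w r| ≤ C) (hwR : ∀ r, R < r → w r = 0) {h : E → G} (hh : Continuous h) :
    Integrable (fun ξ => w ‖ξ‖ • h ξ) μ := by
  have hball : IntegrableOn (fun ξ => w ‖ξ‖ • h ξ) (Metric.closedBall 0 R) μ :=
    (hh.continuousOn.integrableOn_compact (isCompact_closedBall 0 R)).bdd_smul C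
      (hw.comp measurable_norm).aestronglyMeasurable (.of_forall fun ξ => hwC ‖ξ‖)
  refine hball.integrable_of_forall_notMem_eq_zero fun ξ hξ => ?_
  rw [hwR ‖ξ‖ (by simpa using hξ), zero_smul]

theorem integrable_inv_norm_smul [NormedSpace ℝ E] [FiniteDimensional ℝ E]
    {μ : Measure E} [μ.IsAddHaarMeasure] (hdim : 1 < Module.finrank ℝ E) {g : E → G}
    (hg : Integrable g μ) {C : ℝ} (hgC : ∀ ξ, ‖g ξ‖ ≤ C) : Integrable (fun ξ => ‖ξ‖⁻¹ • g ξ) μ := by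
  have hmeas : AEStronglyMeasurable (fun ξ => ‖ξ‖⁻¹ • g ξ) μ :=
    measurable_norm.inv.aestronglyMeasurable.smul hg.1
  have hball : IntegrableOn (fun ξ => ‖ξ‖⁻¹ • g ξ) (Metric.ball 0 1) μ := by
    refine integrableOn_ball_of_norm_le_rpow (C := C) (α := 1) hdim.le (by exact_mod_cast hdim)
      (.of_forall fun ξ => ?_) hmeas
    rw [norm_smul, norm_inv, norm_norm, Real.rpow_neg_one, mul_comm]
    gcongr
    exact hgC ξ
  have hcompl : IntegrableOn (fun ξ => ‖ξ‖⁻¹ • g ξ) (Metric.ball 0 1)ᶜ μ := by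
    refine hg.integrableOn.integrable.mono hmeas.restrict
      (ae_restrict_of_forall_mem Metric.isOpen_ball.measurableSet.compl fun ξ hξ => ?_)
    rw [norm_smul, norm_inv, norm_norm]
    exact mul_le_of_le_one_left (norm_nonneg _) (inv_le_one_of_one_le₀ (by simpa using hξ))
  rw [← integrableOn_univ, ← Set.union_compl_self (Metric.ball (0 : E) 1)]
  exact hball.union hcompl

end RadialWeight

section LinearFlow

open NormedSpace (exp)

variable {E G : Type*} [NormedAddCommGroup E] [NormedSpace ℝ E] [CompleteSpace E]
  [NormedAddCommGroup G] [NormedSpace ℝ G] [CompleteSpace G]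

theorem hasDerivAt_exp_smul_apply (A : E →L[ℝ] E) (ξ : E) (s : ℝ) :
    HasDerivAt (fun s : ℝ => exp (s • A) ξ) (A (exp (s • A) ξ)) s := by
  simpa using (hasDerivAt_exp_smul_const' A s).clm_apply (hasDerivAt_const s ξ)

theorem integral_fderiv_exp_smul_apply (A : E →L[ℝ] E) {h : E → G} (hh : ContDiff ℝ 1 h)
    (ξ : E) (a b : ℝ) :
    ∫ s in a..b, fderiv ℝ h (exp (s • A) ξ) (A (exp (s • A) ξ)) =
      h (exp (b • A) ξ) - h (exp (a • A) ξ) := by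
  have hflow : Continuous fun s : ℝ => exp (s • A) ξ :=
    continuous_iff_continuousAt.2 fun s => (hasDerivAt_exp_smul_apply A ξ s).continuousAt
  refine intervalIntegral.integral_eq_sub_of_hasDerivAt (f := fun s => h (exp (s • A) ξ))
    (fun s _ => ?_) (Continuous.intervalIntegrable ?_ a b)
  · exact (hh.differentiable one_ne_zero _).hasFDerivAt.comp_hasDerivAt s
      (hasDerivAt_exp_smul_apply A ξ s)
  · exact ((hh.continuous_fderiv one_ne_zero).comp hflow).clm_apply (A.continuous.comp hflow)

end LinearFlow

section SkewFlow

open NormedSpace (exp)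

variable {E G : Type*} [NormedAddCommGroup E] [InnerProductSpace ℝ E]
  [NormedAddCommGroup G] [NormedSpace ℝ G] [CompleteSpace G] {A : E →L[ℝ] E}

theorem norm_exp_smul_apply_of_inner_eq_zero [CompleteSpace E]
    (hA : ∀ ξ, inner ℝ ξ (A ξ) = 0) (s : ℝ) (ξ : E) :
    ‖exp (s • A) ξ‖ = ‖ξ‖ := by
  have hderiv (s : ℝ) : HasDerivAt (fun s : ℝ => ‖exp (s • A) ξ‖ ^ 2) 0 s := by
    simpa only [hA, mul_zero] using (hasDerivAt_exp_smul_apply A ξ s).norm_sq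
  have hconst := is_const_of_deriv_eq_zero (fun s => (hderiv s).differentiableAt)
    (fun s => (hderiv s).deriv) s 0
  simpa using hconst

variable [FiniteDimensional ℝ E] [MeasurableSpace E] [BorelSpace E]

theorem measurePreserving_exp_smul_of_inner_eq_zero (hA : ∀ ξ, inner ℝ ξ (A ξ) = 0) (s : ℝ) :
    MeasurePreserving fun ξ : E => exp (s • A) ξ := by
  have := FiniteDimensional.complete ℝ E
  let rotation : E →ₗᵢ[ℝ] E :=
    ⟨(exp (s • A)).toLinearMap, norm_exp_smul_apply_of_inner_eq_zero hA s⟩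
  exact (rotation.toLinearIsometryEquiv rfl).measurePreserving

theorem integral_radial_smul_fderiv_eq_zero_of_integrable (hA : ∀ ξ, inner ℝ ξ (A ξ) = 0)
    {w : ℝ → ℝ} {h : E → G} (hh : ContDiff ℝ 1 h) (hwh : Integrable fun ξ => w ‖ξ‖ • h ξ)
    (hwd : Integrable fun ξ => w ‖ξ‖ • fderiv ℝ h ξ (A ξ)) :
    ∫ ξ, w ‖ξ‖ • fderiv ℝ h ξ (A ξ) = 0 := by
  have := FiniteDimensional.complete ℝ E
  let R (s : ℝ) (ξ : E) : E := exp (s • A) ξ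
  have hR : Continuous (Function.uncurry R) := by
    have hexp : Continuous fun s : ℝ => exp (s • A) :=
      continuous_iff_continuousAt.2 fun s => (hasDerivAt_exp_smul_const A s).continuousAt
    exact (hexp.comp continuous_fst).clm_apply continuous_snd
  have hRμ (s : ℝ) : MeasurePreserving (R s) := measurePreserving_exp_smul_of_inner_eq_zero hA s
  have norm_R (s : ℝ) (ξ : E) : ‖R s ξ‖ = ‖ξ‖ := norm_exp_smul_apply_of_inner_eq_zero hA s ξ
  have flow (ξ : E) : ∫ s in (0 : ℝ)..1, fderiv ℝ h (R s ξ) (A (R s ξ)) = h (R 1 ξ) - h ξ := by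
    simpa [R] using integral_fderiv_exp_smul_apply A hh ξ 0 1
  have hwhR : Integrable fun ξ => w ‖R 1 ξ‖ • h (R 1 ξ) :=
    (hRμ 1).integrable_comp_of_integrable hwh
  have : IsProbabilityMeasure (volume.restrict (Set.Ioc (0 : ℝ) 1)) := ⟨by simp⟩
  calc ∫ ξ, w ‖ξ‖ • fderiv ℝ h ξ (A ξ)
      = ∫ ξ, ∫ s in (0 : ℝ)..1, w ‖R s ξ‖ • fderiv ℝ h (R s ξ) (A (R s ξ)) := by
        simp only [intervalIntegral.integral_of_le zero_le_one]
        exact (integral_integral_comp_of_measurePreserving hR.measurable hRμ hwd).symm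
    _ = ∫ ξ, (w ‖R 1 ξ‖ • h (R 1 ξ) - w ‖ξ‖ • h ξ) := by
        simp only [norm_R, intervalIntegral.integral_smul, flow, smul_sub]
    _ = 0 := by
        rw [integral_sub hwhR hwh, integral_comp_of_measurePreserving (hRμ 1) hwh.1, sub_self]

theorem integral_radial_smul_fderiv_eq_zero (hA : ∀ ξ, inner ℝ ξ (A ξ) = 0)
    {w : ℝ → ℝ} (hw : Measurable w) {h : E → G} (hh : ContDiff ℝ 1 h)
    (hwd : Integrable fun ξ => w ‖ξ‖ • fderiv ℝ h ξ (A ξ)) :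
    ∫ ξ, w ‖ξ‖ • fderiv ℝ h ξ (A ξ) = 0 := by
  -- In dimension two `‖ξ‖⁻² • h ξ` is not integrable at the origin, so `w` is first truncated.
  let radii (n : ℕ) : Set ℝ := {r | r ≤ n ∧ |w r| ≤ n}
  let shell (n : ℕ) : Set E := norm ⁻¹' radii n
  have hradii (n : ℕ) : MeasurableSet (radii n) :=
    measurableSet_Iic.inter (measurableSet_le hw.abs measurable_const)
  have hshell (n : ℕ) : MeasurableSet (shell n) := measurable_norm (hradii n)
  have hmono : Monotone shell := fun m n hmn ξ hξ =>
    have hmn : (m : ℝ) ≤ n := by exact_mod_cast hmn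
    ⟨hξ.1.trans hmn, hξ.2.trans hmn⟩
  have hunion : ⋃ n, shell n = Set.univ := Set.iUnion_eq_univ_iff.2 fun ξ => by
    obtain ⟨n, hn⟩ := exists_nat_ge (max ‖ξ‖ |w ‖ξ‖|)
    exact ⟨n, max_le_iff.1 hn⟩
  have hzero (n : ℕ) : ∫ ξ in shell n, w ‖ξ‖ • fderiv ℝ h ξ (A ξ) = 0 := by
    have truncate (f : E → G) : (fun ξ => (radii n).indicator w ‖ξ‖ • f ξ) =
        (shell n).indicator fun ξ => w ‖ξ‖ • f ξ := by
      ext ξ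
      by_cases hξ : ‖ξ‖ ∈ radii n <;> simp [shell, hξ]
    rw [← integral_indicator (hshell n), ← truncate]
    refine integral_radial_smul_fderiv_eq_zero_of_integrable hA hh ?_ ?_
    · refine integrable_radial_smul_of_abs_le (C := n) (R := n) (hw.indicator (hradii n)) ?_ ?_
        hh.continuous
      · intro r
        by_cases hr : r ∈ radii n
        · simpa [hr] using hr.2
        · simp [hr]
      · exact fun r hr => Set.indicator_of_notMem (fun hmem => hr.not_ge hmem.1) w
    · rw [truncate]
      exact hwd.indicator (hshell n)
  have hlim := tendsto_setIntegral_of_monotone hshell hmono (by simpa [hunion] using hwd)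
  simp only [hzero, hunion, setIntegral_univ] at hlim
  exact tendsto_nhds_unique hlim tendsto_const_nhds

end SkewFlow

section InverseLaplacian

open scoped SchwartzMap LineDeriv

variable {E F : Type*} [NormedAddCommGroup E] [InnerProductSpace ℝ E] [NormedAddCommGroup F]

/-- The symbol of `Δ⁻¹∂_e` in Mathlib's Fourier normalization, for an arbitrary direction `e`;
its value at the singularity `ξ = 0` is the junk value `0`. -/
def invLapSymbol (e ξ : E) : ℂ :=
  -I * (inner ℝ ξ e : ℂ) / ((2 * Real.pi * ‖ξ‖ ^ 2 : ℝ) : ℂ)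

theorem norm_invLapSymbol_le (e ξ : E) : ‖invLapSymbol e ξ‖ ≤ ‖e‖ * ‖ξ‖⁻¹ := by
  rcases eq_or_ne ξ 0 with rfl | hξ
  · simp [invLapSymbol]
  have : 0 < ‖ξ‖ := norm_pos_iff.2 hξ
  calc ‖invLapSymbol e ξ‖ = |inner ℝ ξ e| / (2 * Real.pi * ‖ξ‖ ^ 2) := by
        rw [invLapSymbol, norm_div, norm_mul, norm_neg, norm_I, one_mul, norm_real, norm_real,
          Real.norm_eq_abs, Real.norm_of_nonneg (by positivity)]
    _ ≤ ‖ξ‖ * ‖e‖ / (1 * ‖ξ‖ ^ 2) := by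
        gcongr
        · exact abs_real_inner_le_norm ξ e
        · linarith [Real.pi_gt_three]
    _ = ‖e‖ * ‖ξ‖⁻¹ := by field_simp

variable [NormedSpace ℂ F]

theorem two_pi_I_smul_invLapSymbol_smul (e ξ : E) (y : F) :
    (2 * Real.pi * I) • invLapSymbol e ξ • y = (‖ξ‖ ^ 2)⁻¹ • inner ℝ ξ e • y := by
  have hcoeff : 2 * Real.pi * I * invLapSymbol e ξ = (((‖ξ‖ ^ 2)⁻¹ * inner ℝ ξ e : ℝ) : ℂ) := by
    rw [invLapSymbol]
    rcases eq_or_ne ξ 0 with rfl | hξ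
    · simp
    have hξ : (‖ξ‖ : ℂ) ≠ 0 := by simpa using hξ
    have hpi : (Real.pi : ℂ) ≠ 0 := by simp
    push_cast
    field_simp
    simp
  rw [smul_smul, hcoeff, coe_smul, mul_smul]

/-- Multiplication of a Schwartz function by the linear coordinate `x_a = ⟪x, a⟫`. -/
def coordSMul (a : E) : 𝓢(E, F) →L[ℝ] 𝓢(E, F) :=
  SchwartzMap.smulLeftCLM F (inner ℝ · a)

theorem coordSMul_apply (a : E) (g : 𝓢(E, F)) (x : E) : coordSMul a g x = inner ℝ x a • g x :=
  SchwartzMap.smulLeftCLM_apply_apply (by fun_prop) g x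

variable [FiniteDimensional ℝ E] [MeasurableSpace E] [BorelSpace E]

theorem integrable_invLapSymbol_smul (hdim : 1 < Module.finrank ℝ E) (e : E) (g : 𝓢(E, F)) :
    Integrable fun ξ => invLapSymbol e ξ • g ξ := by
  have hbound : Integrable fun ξ => ‖e‖ • ‖ξ‖⁻¹ • g ξ :=
    (integrable_inv_norm_smul hdim g.integrable (g.norm_le_seminorm ℝ)).smul ‖e‖
  have hmeas : Measurable (invLapSymbol e) := by
    unfold invLapSymbol
    fun_prop
  refine hbound.mono (hmeas.aestronglyMeasurable.smul g.continuous.aestronglyMeasurable)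
    (.of_forall fun ξ => ?_)
  simp only [norm_smul, norm_norm, norm_inv, ← mul_assoc]
  gcongr
  exact norm_invLapSymbol_le e ξ

/-- Distributionally, `∂_a` of the symbol in direction `b` is symmetric in `a` and `b`. -/
theorem integral_invLapSymbol_smul_lineDeriv_comm [CompleteSpace F]
    (hdim : 1 < Module.finrank ℝ E) (a b : E) (g : 𝓢(E, F)) :
    ∫ ξ, invLapSymbol b ξ • ∂_{a} g ξ = ∫ ξ, invLapSymbol a ξ • ∂_{b} g ξ := by
  let A : E →L[ℝ] E := (innerSL ℝ b).smulRight a - (innerSL ℝ a).smulRight b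
  have hA (ξ : E) : inner ℝ ξ (A ξ) = 0 := by
    simp [A, inner_sub_right, inner_smul_right, real_inner_comm, mul_comm]
  have hrot (ξ : E) : (‖ξ‖ ^ 2)⁻¹ • fderiv ℝ g ξ (A ξ) =
      (2 * Real.pi * I) • (invLapSymbol b ξ • ∂_{a} g ξ - invLapSymbol a ξ • ∂_{b} g ξ) := by
    simp only [smul_sub, two_pi_I_smul_invLapSymbol_smul, SchwartzMap.lineDerivOp_apply_eq_fderiv]
    simp [A, smul_sub, real_inner_comm]
  have hb := integrable_invLapSymbol_smul hdim b (∂_{a} g)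
  have ha := integrable_invLapSymbol_smul hdim a (∂_{b} g)
  have hzero := integral_radial_smul_fderiv_eq_zero (w := fun r => (r ^ 2)⁻¹) hA (by fun_prop)
    (g.smooth 1) (by simpa only [hrot] using! (hb.sub ha).smul (2 * Real.pi * I))
  simp only [hrot, integral_smul, integral_sub hb ha] at hzero
  simpa [sub_eq_zero, I_ne_zero] using hzero

/-- The operator `Δ⁻¹∂_e` on a Euclidean space of any dimension, as a Fourier multiplier. -/
def invLapLineDeriv (e : E) (f : E → F) : E → F :=
  𝓕⁻ fun ξ => invLapSymbol e ξ • 𝓕 f ξ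

theorem invLapLineDeriv_apply_zero (e : E) (f : E → F) :
    invLapLineDeriv e f 0 = ∫ ξ, invLapSymbol e ξ • 𝓕 f ξ := by
  simp [invLapLineDeriv, Real.fourierInv_eq]

theorem invLapLineDeriv_comp_add_right (e : E) (f : E → F) (x y : E) :
    invLapLineDeriv e (fun z => f (z + x)) y = invLapLineDeriv e f (y + x) := by
  have hshift (ξ : E) : 𝓕 (fun z => f (z + x)) ξ = Real.fourierChar (inner ℝ ξ x) • 𝓕 f ξ := by
    rw [real_inner_comm]
    exact congrFun
      (VectorFourier.fourierIntegral_comp_add_right Real.fourierChar volume (innerₗ E) f x) ξ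
  simp only [invLapLineDeriv, Real.fourierInv_eq, hshift, inner_add_right, AddChar.map_add_eq_mul,
    mul_smul]
  congr! 3 with ξ
  exact smul_comm _ _ _

theorem isLinearMap_invLapLineDeriv (hdim : 1 < Module.finrank ℝ E) (e x : E) :
    IsLinearMap ℂ fun g : 𝓢(E, F) => invLapLineDeriv e g x where
  map_add f g := by
    have hint (g : 𝓢(E, F)) :
        Integrable fun ξ => Real.fourierChar (inner ℝ ξ x) • invLapSymbol e ξ • 𝓕 g ξ := by
      simpa using (Real.fourierIntegral_convergent_iff (-x)).2
        (integrable_invLapSymbol_smul hdim e (𝓕 g))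
    simp only [invLapLineDeriv, Real.fourierInv_eq, ← SchwartzMap.fourier_coe,
      FourierTransform.fourier_add, add_apply, smul_add, integral_add (hint f) (hint g)]
  map_smul c g := by
    simp only [invLapLineDeriv, Real.fourierInv_eq, ← SchwartzMap.fourier_coe,
      FourierTransform.fourier_smul, smul_apply, smul_comm _ c, integral_smul]

theorem two_pi_I_smul_fourier_coordSMul (a : E) (g : 𝓢(E, F)) (ξ : E) :
    (2 * Real.pi * I) • 𝓕 (coordSMul a g) ξ = -∂_{a} (𝓕 g) ξ := by
  rw [SchwartzMap.lineDerivOp_fourier_eq, neg_smul, ← coordSMul]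
  simp [FourierTransform.fourier_smul, FourierTransform.fourier_neg]

theorem invLapLineDeriv_coordSMul_zero_comm [CompleteSpace F] (hdim : 1 < Module.finrank ℝ E)
    (a b : E) (g : 𝓢(E, F)) :
    invLapLineDeriv b (coordSMul a g) 0 = invLapLineDeriv a (coordSMul b g) 0 := by
  have hderiv (a b : E) : (2 * Real.pi * I) • invLapLineDeriv b (coordSMul a g) 0 =
      -∫ ξ, invLapSymbol b ξ • ∂_{a} (𝓕 g) ξ := by
    simp only [invLapLineDeriv_apply_zero, ← SchwartzMap.fourier_coe, ← integral_smul,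
      ← integral_neg, smul_comm (2 * Real.pi * I), two_pi_I_smul_fourier_coordSMul, smul_neg]
  refine smul_right_injective F two_pi_I_ne_zero ?_
  simp only [hderiv, integral_invLapSymbol_smul_lineDeriv_comm hdim a b (𝓕 g)]

/-- The commutator `[x_a, Δ⁻¹∂_b]` at `x` reduces by translation to the point `0`, where the
multiplication by `x_a` outside of `Δ⁻¹∂_b` vanishes. -/
theorem invLapLineDeriv_coordSMul_sub (hdim : 1 < Module.finrank ℝ E) (a b x : E) (g : 𝓢(E, F)) :
    invLapLineDeriv b (coordSMul a g) x - inner ℝ x a • invLapLineDeriv b g x =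
      invLapLineDeriv b (coordSMul a (g.compSubConstCLM ℂ (-x))) 0 := by
  let shifted := g.compSubConstCLM ℂ (-x)
  let T := (isLinearMap_invLapLineDeriv (F := F) hdim b 0).mk'
  have hshift (f : 𝓢(E, F)) : invLapLineDeriv b f x = T (f.compSubConstCLM ℂ (-x)) := by
    have hcoe : ⇑(f.compSubConstCLM ℂ (-x)) = fun z => f (z + x) := by ext; simp
    rw [IsLinearMap.mk'_apply, hcoe, invLapLineDeriv_comp_add_right, zero_add]
  have hcoord : (coordSMul a g).compSubConstCLM ℂ (-x) =
      coordSMul a shifted + (inner ℝ x a : ℂ) • shifted := by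
    ext z
    simp [coordSMul_apply, shifted, inner_add_left, add_smul]
  rw [hshift, hshift, hcoord, map_add, map_smul, coe_smul]
  exact add_sub_cancel_right _ _

theorem invLapLineDeriv_coordSMul_sub_comm [CompleteSpace F] (hdim : 1 < Module.finrank ℝ E)
    (a b x : E) (g : 𝓢(E, F)) :
    invLapLineDeriv b (coordSMul a g) x - inner ℝ x a • invLapLineDeriv b g x =
      invLapLineDeriv a (coordSMul b g) x - inner ℝ x b • invLapLineDeriv a g x := by
  simp only [invLapLineDeriv_coordSMul_sub hdim, invLapLineDeriv_coordSMul_zero_comm hdim a b]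

theorem sum_inner_smul_invLapLineDeriv_of_antisymm [CompleteSpace F]
    (hdim : 1 < Module.finrank ℝ E) {ι : Type*} [Fintype ι] (e : ι → E) {M : ι → ι → 𝓢(E, F)}
    (hM : ∀ j k, M j k = -M k j) (x : E) :
    ∑ j, inner ℝ x (e j) • ∑ k, invLapLineDeriv (e k) (M k j) x =
      ∑ k, invLapLineDeriv (e k) (fun y => ∑ j, inner ℝ y (e j) • M k j y) x := by
  let T (k : ι) := (isLinearMap_invLapLineDeriv (F := F) hdim (e k) x).mk'
  let commutator (j k : ι) (g : 𝓢(E, F)) : F :=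
    T k (coordSMul (e j) g) - inner ℝ x (e j) • T k g
  have hsymm (j k : ι) (g : 𝓢(E, F)) : commutator j k g = commutator k j g :=
    invLapLineDeriv_coordSMul_sub_comm hdim (e j) (e k) x g
  have hneg (j k : ι) : commutator j k (M k j) = -commutator k j (M j k) := by
    simp only [hsymm j k, hM k j, commutator, map_neg]
    module
  have hzero : ∑ k, ∑ j, commutator j k (M k j) = 0 := by
    have : IsAddTorsionFree F := .of_isTorsionFree ℂ F
    rw [← self_eq_neg]
    conv_lhs => rw [Finset.sum_comm]
    simp only [← Finset.sum_neg_distrib, ← hneg]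
  have hsum (k : ι) : invLapLineDeriv (e k) (fun y => ∑ j, inner ℝ y (e j) • M k j y) x =
      ∑ j, T k (coordSMul (e j) (M k j)) := by
    rw [← map_sum]
    simp only [T, IsLinearMap.mk'_apply]
    congr 1
    ext y
    simp [coordSMul_apply]
  simp only [hsum, Finset.smul_sum]
  rw [Finset.sum_comm, eq_comm, ← sub_eq_zero]
  simpa only [commutator, Finset.sum_sub_distrib] using! hzero

end InverseLaplacian


section ImPairing

open scoped SchwartzMap

variable {E : Type*} [NormedAddCommGroup E] [NormedSpace ℝ E]

/-- The argument `Im(ū₁ w₂ + ū₂ w₁)` of `Δ⁻¹∂_k` in the bilinear form, bundled as a complex-valued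
Schwartz function. -/
def imPairing (u₁ u₂ w₁ w₂ : 𝓢(E, ℂ)) : 𝓢(E, ℂ) :=
  let conjMul : ℂ →L[ℝ] ℂ →L[ℝ] ℂ :=
    (ContinuousLinearMap.mul ℝ ℂ).comp conjCLE.toContinuousLinearMap
  SchwartzMap.postcompCLM (𝕜 := ℝ) (ofRealCLM.comp imCLM)
    (SchwartzMap.pairing conjMul u₁ w₂ + SchwartzMap.pairing conjMul u₂ w₁)

theorem imPairing_apply (u₁ u₂ w₁ w₂ : 𝓢(E, ℂ)) (y : E) :
    imPairing u₁ u₂ w₁ w₂ y =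
      (((starRingEnd ℂ) (u₁ y) * w₂ y + (starRingEnd ℂ) (u₂ y) * w₁ y).im : ℂ) :=
  rfl

theorem imPairing_antisymm (u₁ u₂ w₁ w₂ : 𝓢(E, ℂ)) :
    imPairing u₁ u₂ w₁ w₂ = -imPairing w₁ w₂ u₁ u₂ := by
  ext y
  rw [neg_apply, imPairing_apply, imPairing_apply, ← ofReal_neg]
  congr 1
  simp only [add_im, mul_im, conj_re, conj_im]
  ring

end ImPairing

theorem stmt_12_general {E ι : Type*} [NormedAddCommGroup E] [InnerProductSpace ℝ E]
    [FiniteDimensional ℝ E] [MeasurableSpace E] [BorelSpace E] (hdim : 1 < Module.finrank ℝ E)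
    [Fintype ι] (e : ι → E) (v₁ v₂ : ι → SchwartzMap E ℂ) (x : E) :
    ∑ j, (inner ℝ x (e j) : ℂ) * ∑ k, invLapLineDeriv (e k)
        (fun y => (((starRingEnd ℂ) (v₁ k y) * v₂ j y
          + (starRingEnd ℂ) (v₂ k y) * v₁ j y).im : ℂ)) x
      = ∑ k, invLapLineDeriv (e k)
        (fun y => (((starRingEnd ℂ) (v₁ k y) * (∑ j, (inner ℝ y (e j) : ℂ) * v₂ j y)
          + (starRingEnd ℂ) (v₂ k y) * (∑ j, (inner ℝ y (e j) : ℂ) * v₁ j y)).im : ℂ)) x := by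
  have hpull (k : ι) (y : E) :
      (((starRingEnd ℂ) (v₁ k y) * (∑ j, (inner ℝ y (e j) : ℂ) * v₂ j y)
          + (starRingEnd ℂ) (v₂ k y) * (∑ j, (inner ℝ y (e j) : ℂ) * v₁ j y)).im : ℂ)
        = ∑ j, inner ℝ y (e j) • imPairing (v₁ k) (v₂ k) (v₁ j) (v₂ j) y := by
    simp only [imPairing_apply, real_smul, ← ofReal_mul, ← ofReal_sum, ← im_ofReal_mul,
      Finset.mul_sum, ← Finset.sum_add_distrib, im_sum]
    congr! 3
    ring
  simp only [hpull]
  simp only [← real_smul]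
  exact sum_inner_smul_invLapLineDeriv_of_antisymm hdim e
    (fun j k => imPairing_antisymm (v₁ j) (v₂ j) (v₁ k) (v₂ k)) x

theorem invLapDeriv_eq_invLapLineDeriv (k : Fin 2) (f : V2 → ℂ) :
    invLapDeriv k f = invLapLineDeriv (EuclideanSpace.single k 1) f := by
  simp [invLapDeriv, invLapLineDeriv, invLapSymbol, EuclideanSpace.inner_single_right]

/-- Identity (3.26): for `t > 0` and `ℂ²`-valued Schwartz `v₁, v₂`,
`2t⁻¹ x_j Δ^{−1}∂_k Im(v̄_{1k}v_{2j} + v̄_{2k}v_{1j}) =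
 2t⁻¹ Δ^{−1}∂_k Im(v̄_{1k}(x·v₂) + v̄_{2k}(x·v₁))` (summation over `j, k`). -/
theorem stmt_12 (k : ℝ) (hk1 : 1 < k) (hk2 : k < 2) (t : ℝ) (ht : 0 < t)
    (v₁ v₂ : Fin 2 → SchwartzMap V2 ℂ) :
    (fun x : V2 => (2 / (t : ℂ)) * ∑ j : Fin 2, (x j : ℂ) *
        ∑ k' : Fin 2, invLapDeriv k'
          (fun y => (((starRingEnd ℂ) (v₁ k' y) * v₂ j y
              + (starRingEnd ℂ) (v₂ k' y) * v₁ j y).im : ℂ)) x)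
      = (fun x : V2 => (2 / (t : ℂ)) * ∑ k' : Fin 2, invLapDeriv k'
          (fun y => (((starRingEnd ℂ) (v₁ k' y) * (∑ j : Fin 2, (y j : ℂ) * v₂ j y)
              + (starRingEnd ℂ) (v₂ k' y) * (∑ j : Fin 2, (y j : ℂ) * v₁ j y)).im : ℂ)) x) := by
  funext x
  have h := stmt_12_general (by simp) (fun j : Fin 2 => EuclideanSpace.single j (1 : ℝ)) v₁ v₂ x
  simp only [EuclideanSpace.inner_single_right, one_mul, conj_trivial] at h
  simp only [invLapDeriv_eq_invLapLineDeriv, h]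
end
end
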